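/- arXiv:2501.01354 — 12 statements merged into one kernel-verified Lean document; each statement's English description precedes it below -/
import Mathlib

section
/- Let x_n : [0,∞) → ℝ and y_n : [0,∞) → [0,∞) be functions, let x, u, v : [0,∞) → ℝ and y : [0,∞) → [0,∞) be continuous functions such that y is strictly increasing and x is continuously differentiable, and let c_n be a sequence of real numbers with c_n → ∞. If c_n(x_n(t) − x(t)) → u(t) and c_n(y_n(t) − y(t)) → v(t) locally uniformly in t ∈ [0,∞), then c_n(x_n(y_n(t)) − x(y(t))) → u(y(t)) + x'(y(t))·v(t) locally uniformly in t ∈ [0,∞). -/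
open Filter Topology Set

/-- Lemma 3.1 (variant of Whitt, Theorem 13.3.3): locally uniform convergence of
rescaled compositions.  All functions live on `[0,∞)`, and locally uniform
convergence means uniform convergence on every compact interval `[0,K]`. -/
theorem stmt_0
    (xn : ℕ → ℝ → ℝ) (yn : ℕ → ℝ → ℝ)
    (x y u v x' : ℝ → ℝ) (c : ℕ → ℝ)
    (hyn_nonneg : ∀ n, ∀ t ∈ Ici (0:ℝ), yn n t ∈ Ici (0:ℝ))
    (hy_nonneg : ∀ t ∈ Ici (0:ℝ), y t ∈ Ici (0:ℝ))
    (hx_cont : ContinuousOn x (Ici 0))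
    (hy_cont : ContinuousOn y (Ici 0))
    (hu_cont : ContinuousOn u (Ici 0))
    (hv_cont : ContinuousOn v (Ici 0))
    (hy_mono : StrictMonoOn y (Ici 0))
    (hx_deriv : ∀ t ∈ Ici (0:ℝ), HasDerivWithinAt x (x' t) (Ici 0) t)
    (hx'_cont : ContinuousOn x' (Ici 0))
    (hc : Tendsto c atTop atTop)
    (hxu : ∀ K > (0:ℝ),
      TendstoUniformlyOn (fun n t => c n * (xn n t - x t)) u atTop (Icc 0 K))
    (hyv : ∀ K > (0:ℝ),
      TendstoUniformlyOn (fun n t => c n * (yn n t - y t)) v atTop (Icc 0 K)) :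
    ∀ K > (0:ℝ),
      TendstoUniformlyOn (fun n t => c n * (xn n (yn n t) - x (y t)))
        (fun t => u (y t) + x' (y t) * v t) atTop (Icc 0 K) := by
  intro K hK
  rw [Metric.tendstoUniformlyOn_iff]
  intro ε hε
  have hsubK : Icc (0:ℝ) K ⊆ Ici 0 := fun t ht => ht.1
  have hyK : 0 ≤ y K := hy_nonneg K hK.le
  obtain ⟨L, hL⟩ : ∃ L, L = y K + 1 := ⟨_, rfl⟩
  have hLpos : 0 < L := by linarith
  have hsubL : Icc (0:ℝ) L ⊆ Ici 0 := fun t ht => ht.1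
  obtain ⟨V, hV⟩ := isCompact_Icc.exists_bound_of_continuousOn (hv_cont.mono hsubK)
  obtain ⟨D, hD⟩ := isCompact_Icc.exists_bound_of_continuousOn (hx'_cont.mono hsubL)
  have hV0 : 0 ≤ V := (norm_nonneg _).trans (hV 0 ⟨le_rfl, hK.le⟩)
  have hD0 : 0 ≤ D := (norm_nonneg _).trans (hD 0 ⟨le_rfl, hLpos.le⟩)
  have huu := Metric.uniformContinuousOn_iff.1
    (isCompact_Icc.uniformContinuousOn_of_continuous (hu_cont.mono hsubL)) (ε/4) (by positivity)
  have hxx := Metric.uniformContinuousOn_iff.1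
    (isCompact_Icc.uniformContinuousOn_of_continuous (hx'_cont.mono hsubL))
    (ε/(4*(V+1))) (by positivity)
  obtain ⟨δ₁, hδ₁, hu1⟩ := huu
  obtain ⟨δ₂, hδ₂, hx1⟩ := hxx
  obtain ⟨δ, hδ⟩ : ∃ δ, δ = min (min δ₁ δ₂) 1 := ⟨_, rfl⟩
  have hδ0 : 0 < δ := by rw [hδ]; positivity
  have hδa : δ ≤ δ₁ := by rw [hδ]; exact (min_le_left _ _).trans (min_le_left _ _)
  have hδb : δ ≤ δ₂ := by rw [hδ]; exact (min_le_left _ _).trans (min_le_right _ _)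
  have hδc : δ ≤ 1 := by rw [hδ]; exact min_le_right _ _
  have e1 := Metric.tendstoUniformlyOn_iff.1 (hxu L hLpos) (ε/4) (by positivity)
  have e2 := Metric.tendstoUniformlyOn_iff.1 (hyv K hK) (min 1 (ε/(4*(D+1)))) (by positivity)
  filter_upwards [e1, e2, hc.eventually_gt_atTop 0, hc.eventually_gt_atTop ((V+1)/δ)]
    with n h1 h2 hc0 hc1 t ht
  have h2t := h2 t ht
  rw [Real.dist_eq, abs_sub_comm] at h2t
  have h2a := h2t.trans_le (min_le_left _ _)
  have h2b := h2t.trans_le (min_le_right _ _)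
  have hVt := hV t ht
  rw [Real.norm_eq_abs] at hVt
  have hcy : c n * |yn n t - y t| ≤ V + 1 := by
    rw [← abs_of_pos hc0, ← abs_mul]
    have := abs_sub_abs_le_abs_sub (c n * (yn n t - y t)) (v t)
    linarith
  have hd : |yn n t - y t| < δ := by
    rw [div_lt_iff₀ hδ0] at hc1
    exact lt_of_mul_lt_mul_left (hcy.trans_lt hc1) hc0.le
  have hyt0 : 0 ≤ y t := hy_nonneg t ht.1
  have hytK : y t ≤ y K := hy_mono.monotoneOn ht.1 hK.le ht.2
  have hy_mem : y t ∈ Icc 0 L := ⟨hyt0, by linarith⟩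
  have hyn_mem : yn n t ∈ Icc 0 L :=
    ⟨hyn_nonneg n t ht.1, by have := (abs_lt.1 hd).2; linarith⟩
  have A := h1 _ hyn_mem
  rw [Real.dist_eq, abs_sub_comm] at A
  have B := hu1 _ hyn_mem _ hy_mem (by rw [Real.dist_eq]; linarith)
  rw [Real.dist_eq] at B
  have hsub : uIcc (y t) (yn n t) ⊆ Icc 0 L := uIcc_subset_Icc hy_mem hyn_mem
  have mv := (convex_uIcc (y t) (yn n t)).norm_image_sub_le_of_norm_hasDerivWithin_le
    (f := fun z => x z - x' (y t) * z) (f' := fun z => x' z - x' (y t) * 1)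
    (C := ε/(4*(V+1)))
    (fun z hz => ((hx_deriv z (hsub hz).1).mono (hsub.trans hsubL)).sub
      ((hasDerivWithinAt_id z _).const_mul _))
    (fun z hz => by
      have hz' := abs_sub_left_of_mem_uIcc hz
      have := hx1 z (hsub hz) _ hy_mem (by rw [Real.dist_eq]; linarith)
      rw [Real.dist_eq] at this
      simpa using this.le)
    left_mem_uIcc right_mem_uIcc
  simp only [Real.norm_eq_abs] at mv
  have C1 : |c n * (x (yn n t) - x' (y t) * yn n t - (x (y t) - x' (y t) * y t))| ≤ ε/4 := by
    rw [abs_mul, abs_of_pos hc0]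
    calc _ ≤ c n * (ε/(4*(V+1)) * |yn n t - y t|) := by gcongr
      _ = ε/(4*(V+1)) * (c n * |yn n t - y t|) := by ring
      _ ≤ ε/(4*(V+1)) * (V+1) := by gcongr
      _ = ε/4 := by field_simp
  have D1 : |x' (y t) * (c n * (yn n t - y t) - v t)| ≤ ε/4 := by
    rw [abs_mul]
    have := hD _ hy_mem
    rw [Real.norm_eq_abs] at this
    calc _ ≤ (D+1) * (ε/(4*(D+1))) := by gcongr; linarith
      _ = ε/4 := by field_simp
  rw [Real.dist_eq, abs_sub_comm]
  rw [abs_lt] at A B ⊢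
  rw [abs_le] at C1 D1
  constructor <;> linarith [A.1, A.2, B.1, B.2, C1.1, C1.2, D1.1, D1.2]
end

section
/- For every λ_0, λ_1 with λ_crit < λ_0 ≤ λ_1 and every ε > 0 there exists N such that for all n ≥ N, for every λ ∈ [λ_0, λ_1] and every s with ε·n^{−1/2} ≤ s ≤ θ^{(n)}(λ) + (ψ(λ θ^{(n)}(λ)) − ε)/(β^{(n)}(λ)·n^{1/2}), one has H_n(s, λ) > 0. -/
open MeasureTheory Filter Topology Set

section helpers

/-- pointwise integrability of `W² e^{-Wu}` -/
lemma aux_int_g {Ω : Type*} [MeasurableSpace Ω] (P : Measure Ω)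
    (W : Ω → ℝ) (hm : Measurable W) (hpos : ∀ᵐ ω ∂P, 0 < W ω)
    (h2 : Integrable (fun ω => (W ω) ^ 2) P) (u : ℝ) (hu : 0 ≤ u) :
    Integrable (fun ω => (W ω) ^ 2 * Real.exp (-(W ω) * u)) P := by
  refine h2.mono' (by fun_prop) ?_
  filter_upwards [hpos] with ω hω
  rw [Real.norm_of_nonneg (by positivity)]
  have : Real.exp (-(W ω) * u) ≤ 1 := Real.exp_le_one_iff.2 (by nlinarith)
  nlinarith [sq_nonneg (W ω)]

lemma aux_int_phi {Ω : Type*} [MeasurableSpace Ω] (P : Measure Ω) [IsProbabilityMeasure P]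
    (W : Ω → ℝ) (hm : Measurable W) (hpos : ∀ᵐ ω ∂P, 0 < W ω)
    (h2 : Integrable (fun ω => (W ω) ^ 2) P) (u : ℝ) (hu : 0 ≤ u) :
    Integrable (fun ω => W ω * (1 - Real.exp (-(W ω) * u))) P := by
  refine ((integrable_const (1:ℝ)).add h2).mono' (by fun_prop) ?_
  filter_upwards [hpos] with ω hω
  have h1 : Real.exp (-(W ω) * u) ≤ 1 := Real.exp_le_one_iff.2 (by nlinarith)
  have h0 := Real.exp_pos (-(W ω) * u)
  rw [Real.norm_of_nonneg (mul_nonneg hω.le (by linarith))]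
  simp only [Pi.add_apply]
  nlinarith [sq_nonneg (W ω - 1), mul_pos hω h0]

lemma aux_A {Ω : Type*} [MeasurableSpace Ω] (P : Measure Ω) [IsProbabilityMeasure P]
    (W : Ω → ℝ) (hm : Measurable W) (hpos : ∀ᵐ ω ∂P, 0 < W ω)
    (h2 : Integrable (fun ω => (W ω) ^ 2) P) (u v : ℝ) (hu : 0 ≤ u) (hv : 0 ≤ v) :
    (∫ ω, (W ω) ^ 2 * Real.exp (-(W ω) * u) ∂P) * (u - v) ≤
      (∫ ω, W ω * (1 - Real.exp (-(W ω) * u)) ∂P)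
        - ∫ ω, W ω * (1 - Real.exp (-(W ω) * v)) ∂P := by
  rw [← integral_mul_const, ← integral_sub (aux_int_phi P W hm hpos h2 u hu)
    (aux_int_phi P W hm hpos h2 v hv)]
  refine integral_mono_ae ((aux_int_g P W hm hpos h2 u hu).mul_const _)
    ((aux_int_phi P W hm hpos h2 u hu).sub (aux_int_phi P W hm hpos h2 v hv)) ?_
  filter_upwards [hpos] with ω hω
  have e : Real.exp (-(W ω) * v) = Real.exp (-(W ω) * u) * Real.exp (W ω * (u - v)) := by
    rw [← Real.exp_add]; congr 1; ring
  have h0 := Real.exp_pos (-(W ω) * u)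
  have h3 := Real.add_one_le_exp (W ω * (u - v))
  have h4 : 0 ≤ (W ω * Real.exp (-(W ω) * u)) * (Real.exp (W ω * (u - v)) - (W ω * (u - v) + 1)) :=
    mul_nonneg (by positivity) (by linarith)
  simp only [e]
  nlinarith

lemma aux_anti {Ω : Type*} [MeasurableSpace Ω] (P : Measure Ω)
    (W : Ω → ℝ) (hm : Measurable W) (hpos : ∀ᵐ ω ∂P, 0 < W ω)
    (h2 : Integrable (fun ω => (W ω) ^ 2) P) (u v : ℝ) (hu : 0 ≤ u) (huv : u ≤ v) :
    (∫ ω, (W ω) ^ 2 * Real.exp (-(W ω) * v) ∂P) ≤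
    (∫ ω, (W ω) ^ 2 * Real.exp (-(W ω) * u) ∂P) := by
  refine integral_mono_ae (aux_int_g P W hm hpos h2 v (hu.trans huv))
    (aux_int_g P W hm hpos h2 u hu) ?_
  filter_upwards [hpos] with ω hω
  have : Real.exp (-(W ω) * v) ≤ Real.exp (-(W ω) * u) := Real.exp_le_exp.2 (by nlinarith)
  exact mul_le_mul_of_nonneg_left this (sq_nonneg _)

lemma aux_B {Ω : Type*} [MeasurableSpace Ω] (P : Measure Ω)
    (W : Ω → ℝ) (hm : Measurable W) (hpos : ∀ᵐ ω ∂P, 0 < W ω)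
    (h2 : Integrable (fun ω => (W ω) ^ 2) P) (u v d : ℝ) (hu : 0 ≤ u) (huv : u ≤ v)
    (hd : v ≤ u + d) :
    (∫ ω, (W ω) ^ 2 * Real.exp (-(W ω) * u) ∂P) - (∫ ω, (W ω) ^ 2 * Real.exp (-(W ω) * v) ∂P) ≤
    (∫ ω, (W ω) ^ 2 ∂P) - (∫ ω, (W ω) ^ 2 * Real.exp (-(W ω) * d) ∂P) := by
  have iu := aux_int_g P W hm hpos h2 u hu
  have iv := aux_int_g P W hm hpos h2 v (hu.trans huv)
  have id := aux_int_g P W hm hpos h2 d (by linarith)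
  rw [← integral_sub iu iv, ← integral_sub h2 id]
  refine integral_mono_ae (iu.sub iv) (h2.sub id) ?_
  filter_upwards [hpos] with ω hω
  have e : Real.exp (-(W ω) * v) = Real.exp (-(W ω) * u) * Real.exp (-(W ω) * (v - u)) := by
    rw [← Real.exp_add]; congr 1; ring
  have h0 := Real.exp_pos (-(W ω) * u)
  have h1 : Real.exp (-(W ω) * u) ≤ 1 := Real.exp_le_one_iff.2 (by nlinarith)
  have h3 : Real.exp (-(W ω) * d) ≤ Real.exp (-(W ω) * (v - u)) :=
    Real.exp_le_exp.2 (by nlinarith)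
  have h4 : Real.exp (-(W ω) * (v - u)) ≤ 1 := Real.exp_le_one_iff.2 (by nlinarith)
  have h5 : Real.exp (-(W ω) * u) - Real.exp (-(W ω) * u) * Real.exp (-(W ω) * (v - u))
      ≤ 1 - Real.exp (-(W ω) * d) := by nlinarith
  have := mul_le_mul_of_nonneg_left h5 (sq_nonneg (W ω))
  simp only [e]
  linarith

lemma aux_bdd {Ω : Type*} [MeasurableSpace Ω] (P : Measure Ω) [IsProbabilityMeasure P]
    (W : Ω → ℝ) (hm : Measurable W) (hpos : ∀ᵐ ω ∂P, 0 < W ω)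
    (h2 : Integrable (fun ω => (W ω) ^ 2) P) (u : ℝ) (hu : 0 ≤ u) :
    (∫ ω, W ω * (1 - Real.exp (-(W ω) * u)) ∂P) ≤ 1 + ∫ ω, (W ω) ^ 2 ∂P := by
  have : (1:ℝ) + ∫ ω, (W ω) ^ 2 ∂P = ∫ ω, (1 + (W ω) ^ 2) ∂P := by
    rw [integral_add (integrable_const _) h2]; simp
  rw [this]
  refine integral_mono_ae (aux_int_phi P W hm hpos h2 u hu) ((integrable_const _).add h2) ?_
  filter_upwards [hpos] with ω hω
  have h0 := Real.exp_pos (-(W ω) * u)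
  nlinarith [sq_nonneg (W ω - 1), mul_pos hω h0]

/-- convergence of `g_n(d)` for `d > 0` -/
lemma aux_conv {Ω : Type*} [MeasurableSpace Ω] (P : Measure Ω)
    (W : Ω → ℝ) (Wn : ℕ → Ω → ℝ)
    (hWpos : ∀ᵐ ω ∂P, 0 < W ω) (hWnpos : ∀ n, ∀ᵐ ω ∂P, 0 < Wn n ω)
    (hdist : ∀ f : BoundedContinuousFunction ℝ ℝ,
      Tendsto (fun n => ∫ ω, f (Wn n ω) ∂P) atTop (𝓝 (∫ ω, f (W ω) ∂P)))
    (d : ℝ) (hd : 0 < d) :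
    Tendsto (fun n => ∫ ω, (Wn n ω) ^ 2 * Real.exp (-(Wn n ω) * d) ∂P) atTop
      (𝓝 (∫ ω, (W ω) ^ 2 * Real.exp (-(W ω) * d) ∂P)) := by
  let f : BoundedContinuousFunction ℝ ℝ := BoundedContinuousFunction.ofNormedAddCommGroup
    (fun x => |x| ^ 2 * Real.exp (-|x| * d)) (by fun_prop) (2 / d ^ 2) (by
      intro x
      rw [Real.norm_of_nonneg (by positivity)]
      have h := Real.quadratic_le_exp_of_nonneg (x := |x| * d) (by positivity)
      have h1 : Real.exp (-|x| * d) * Real.exp (|x| * d) = 1 := by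
        rw [← Real.exp_add]; simp
      have h0 := Real.exp_pos (-|x| * d)
      rw [le_div_iff₀ (by positivity)]
      have h2 : 0 ≤ |x| * d := by positivity
      have h3 : (|x| * d) ^ 2 ≤ 2 * Real.exp (|x| * d) := by nlinarith
      calc |x| ^ 2 * Real.exp (-|x| * d) * d ^ 2 = Real.exp (-|x| * d) * (|x| * d) ^ 2 := by ring
        _ ≤ Real.exp (-|x| * d) * (2 * Real.exp (|x| * d)) :=
          mul_le_mul_of_nonneg_left h3 h0.le
        _ = 2 * (Real.exp (-|x| * d) * Real.exp (|x| * d)) := by ring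
        _ = 2 := by rw [h1]; ring)
  have key : ∀ V : Ω → ℝ, (∀ᵐ ω ∂P, 0 < V ω) →
      ∫ ω, f (V ω) ∂P = ∫ ω, (V ω) ^ 2 * Real.exp (-(V ω) * d) ∂P := by
    intro V hV
    refine integral_congr_ae ?_
    filter_upwards [hV] with ω hω
    simp [f, abs_of_pos hω]
  have := hdist f
  rw [key W hWpos] at this
  exact this.congr (fun n => key _ (hWnpos n))

/-- `g(d) → g(0)` as `d ↓ 0` -/
lemma aux_lim {Ω : Type*} [MeasurableSpace Ω] (P : Measure Ω)
    (W : Ω → ℝ) (hm : Measurable W) (hpos : ∀ᵐ ω ∂P, 0 < W ω)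
    (h2 : Integrable (fun ω => (W ω) ^ 2) P) :
    Tendsto (fun k : ℕ => ∫ ω, (W ω) ^ 2 * Real.exp (-(W ω) * (1 / ((k:ℝ) + 1))) ∂P) atTop
      (𝓝 (∫ ω, (W ω) ^ 2 ∂P)) := by
  refine tendsto_integral_of_dominated_convergence (fun ω => (W ω) ^ 2)
    (fun k => by fun_prop) h2 ?_ ?_
  · intro k
    filter_upwards [hpos] with ω hω
    rw [Real.norm_of_nonneg (by positivity)]
    have hk : (0:ℝ) ≤ 1 / ((k:ℝ) + 1) := by positivity
    have : Real.exp (-(W ω) * (1 / ((k:ℝ) + 1))) ≤ 1 := Real.exp_le_one_iff.2 (by nlinarith)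
    nlinarith [sq_nonneg (W ω)]
  · refine Eventually.of_forall fun ω => ?_
    have h := tendsto_one_div_add_atTop_nhds_zero_nat (𝕜 := ℝ)
    have h' : Tendsto (fun k : ℕ => (W ω) ^ 2 * Real.exp (-(W ω) * (1 / ((k:ℝ) + 1)))) atTop
        (𝓝 ((W ω) ^ 2 * Real.exp (-(W ω) * 0))) :=
      ((Real.continuous_exp.tendsto _).comp (h.const_mul _)).const_mul _
    simpa using h'

/-- uniform equicontinuity scale -/
lemma aux_equi {Ω : Type*} [MeasurableSpace Ω] (P : Measure Ω)
    (W : Ω → ℝ) (Wn : ℕ → Ω → ℝ) (hm : Measurable W)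
    (hWpos : ∀ᵐ ω ∂P, 0 < W ω) (hWnpos : ∀ n, ∀ᵐ ω ∂P, 0 < Wn n ω)
    (hdist : ∀ f : BoundedContinuousFunction ℝ ℝ,
      Tendsto (fun n => ∫ ω, f (Wn n ω) ∂P) atTop (𝓝 (∫ ω, f (W ω) ∂P)))
    (hW2 : Integrable (fun ω => (W ω) ^ 2) P)
    (hmom : Tendsto (fun n => ∫ ω, (Wn n ω) ^ 2 ∂P) atTop (𝓝 (∫ ω, (W ω) ^ 2 ∂P)))
    (η : ℝ) (hη : 0 < η) : ∃ d > 0, ∀ᶠ n in atTop,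
      (∫ ω, (Wn n ω) ^ 2 ∂P) - (∫ ω, (Wn n ω) ^ 2 * Real.exp (-(Wn n ω) * d) ∂P) < η := by
  have h1 := aux_lim P W hm hWpos hW2
  obtain ⟨k, hk⟩ := (h1.eventually (lt_mem_nhds (sub_lt_self _ hη))).exists
  refine ⟨1 / ((k:ℝ) + 1), by positivity, ?_⟩
  have h2 := hmom.sub (aux_conv P W Wn hWpos hWnpos hdist (1 / ((k:ℝ) + 1)) (by positivity))
  exact h2.eventually (gt_mem_nhds (by linarith))

/-- facts on the root `θ` of a concave function -/
lemma aux_theta (f f' : ℝ → ℝ) (c δ T θ : ℝ) (hδ : 0 < δ) (hc : 0 < c)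
    (hA : ∀ u v, 0 ≤ u → 0 ≤ v → f' u * (u - v) ≤ f u - f v)
    (hf' : ∀ u, 0 ≤ u → -1 ≤ f' u)
    (hlow : ∀ s, 0 ≤ s → s ≤ δ → c * s ≤ f s)
    (hup : ∀ s, 0 ≤ s → f s ≤ T - s)
    (hθ : θ = sInf {t : ℝ | 0 < t ∧ f t < 0}) :
    δ ≤ θ ∧ θ ≤ T ∧ f θ = 0 ∧ f' θ ≤ -(c * δ / T) := by
  set S := {t : ℝ | 0 < t ∧ f t < 0} with hS
  have hbdd : BddBelow S := ⟨0, fun t ht => ht.1.le⟩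
  have hT : 0 < T := by
    have := hup δ hδ.le
    have := hlow δ hδ.le le_rfl
    nlinarith [mul_pos hc hδ]
  have hTS : ∀ t, T < t → t ∈ S := fun t ht => by
    have := hup t (by linarith)
    exact ⟨by linarith, by linarith⟩
  have hne : S.Nonempty := ⟨T + 1, hTS _ (by linarith)⟩
  have h1 : δ ≤ θ := by
    rw [hθ]
    refine le_csInf hne fun t ht => ?_
    by_contra! hlt
    have := hlow t ht.1.le hlt.le
    have := ht.2
    nlinarith [mul_pos hc ht.1]
  have h2 : θ ≤ T := by
    refine le_of_forall_gt_imp_ge_of_dense fun t ht => ?_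
    rw [hθ]
    exact csInf_le hbdd (hTS t ht)
  have hθ0 : 0 < θ := hδ.trans_le h1
  have h3 : 0 ≤ f θ := by
    refine le_of_forall_pos_lt_add fun e he => ?_
    set t := max (θ / 2) (θ - e / 2) with ht
    have t1 : θ / 2 ≤ t := le_max_left _ _
    have t2 : θ - e / 2 ≤ t := le_max_right _ _
    have t3 : t < θ := max_lt (by linarith) (by linarith)
    have t4 : 0 ≤ f t := by
      by_contra! h
      have : θ ≤ t := by
        rw [hθ]; exact csInf_le hbdd ⟨by linarith, h⟩
      linarith
    have := hA θ t hθ0.le (by linarith)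
    have := hf' θ hθ0.le
    nlinarith
  have h4 : f θ ≤ 0 := by
    refine le_of_forall_pos_lt_add fun e he => ?_
    obtain ⟨t, htS, ht⟩ := exists_lt_of_csInf_lt hne (show sInf S < θ + e by rw [← hθ]; linarith)
    have t1 : θ ≤ t := by rw [hθ]; exact csInf_le hbdd htS
    have := hA t θ htS.1.le hθ0.le
    have := hf' t htS.1.le
    have := htS.2
    nlinarith
  have h5 : f θ = 0 := le_antisymm h4 h3
  refine ⟨h1, h2, h5, ?_⟩
  have h6 := hA θ δ hθ0.le hδ.le
  have h7 := hlow δ hδ.le le_rfl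
  rw [h5] at h6
  have h8 : c * δ ≤ (- f' θ) * (θ - δ) := by nlinarith
  have h9 : 0 < c * δ := by positivity
  have h10 : 0 < - f' θ := by
    by_contra! h
    nlinarith
  have : c * δ / T ≤ - f' θ := by
    rw [div_le_iff₀ hT]
    nlinarith
  linarith

/-- deterministic core: `r = √n`, `p s = ψ(λ s)`, `D s = Δₙ(λ s)`. -/
lemma aux_core (f f' p D : ℝ → ℝ) (c δ δ1 T θ b B M η r ε d s : ℝ)
    (hδ1 : 0 < δ1) (hδ1' : δ1 ≤ δ) (hc : 0 < c) (hε : 0 < ε) (hr : 0 < r) (hb : 0 < b)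
    (hM : 0 < M) (hB : 0 ≤ B)
    (hA : ∀ u v, 0 ≤ u → 0 ≤ v → f' u * (u - v) ≤ f u - f v)
    (hEq : ∀ u v, 0 ≤ u → 0 ≤ v → |u - v| ≤ d → |f' u - f' v| ≤ η)
    (hlow : ∀ s, 0 ≤ s → s ≤ δ → c * s ≤ f s)
    (hθδ : δ ≤ θ) (hθT : θ ≤ T) (hfθ : f θ = 0) (hbθ : f' θ ≤ -b)
    (hηb : η ≤ b / 2) (hηM : η * M ≤ ε / 4)
    (hMB : 2 * (B + 1) ≤ b * M)
    (hMd : M / r ≤ d) (hM1 : M / r ≤ 1) (hrδ : B + 1 ≤ r * (c * δ1))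
    (hpB : ∀ s, 0 ≤ s → s ≤ T + 1 → |p s| ≤ B)
    (hp0 : ∀ s, 0 ≤ s → s ≤ δ1 → |p s| ≤ c * ε / 4)
    (hpc : ∀ s t, 0 ≤ s → s ≤ T + 1 → 0 ≤ t → t ≤ T + 1 → |s - t| ≤ M / r → |p s - p t| ≤ ε / 4)
    (hD1 : ∀ s, 0 ≤ s → s ≤ T + 1 → r * |D s| ≤ 1 / 2)
    (hD2 : ∀ s, 0 ≤ s → s ≤ T + 1 → r * |D s| ≤ c * ε / 4)
    (hD3 : ∀ s, 0 ≤ s → s ≤ T + 1 → r * |D s| ≤ ε / 4)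
    (hs1 : ε / r ≤ s) (hs2 : s ≤ θ + (p θ - ε) / (-f' θ * r)) :
    0 < f s + r⁻¹ * p s + D s := by
  have hs0 : 0 < s := lt_of_lt_of_le (by positivity) hs1
  have hθ0 : 0 < θ := by linarith
  have hβ : 0 < - f' θ := by linarith
  have hpθ := abs_le.1 (hpB θ hθ0.le (by linarith))
  have hMr : M / r * r = M := by field_simp
  have hMr0 : 0 < M / r := by positivity
  have hs2' : (s - θ) * (-f' θ) * r ≤ p θ - ε := by
    have h : s - θ ≤ (p θ - ε) / (-f' θ * r) := by linarith
    rw [le_div_iff₀ (by positivity)] at h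
    linarith
  have hsM : s - θ ≤ M / r := by
    by_contra! h
    have h1 : M < (s - θ) * r := by rw [← hMr]; exact mul_lt_mul_of_pos_right h hr
    have h2 : b * M < (-f' θ) * ((s - θ) * r) := by
      have : b * M ≤ (-f' θ) * M := mul_le_mul_of_nonneg_right (by linarith) hM.le
      have := mul_lt_mul_of_pos_left h1 hβ
      linarith
    nlinarith
  have hsT : s ≤ T + 1 := by linarith
  have hps := abs_le.1 (hpB s hs0.le hsT)
  have hDs : -(r * |D s|) ≤ r * D s := by
    have := mul_le_mul_of_nonneg_left (neg_abs_le (D s)) hr.le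
    linarith
  suffices h : 0 < r * f s + p s + r * D s by
    have e : f s + r⁻¹ * p s + D s = r⁻¹ * (r * f s + p s + r * D s) := by
      field_simp
    rw [e]; positivity
  have hceps : 0 < c * ε := by positivity
  rcases le_total s δ1 with hsδ | hsδ
  · have h1 := hlow s hs0.le (by linarith)
    have h2 : ε ≤ s * r := by rwa [div_le_iff₀ hr] at hs1
    have h3 : c * ε ≤ r * f s := by
      calc c * ε ≤ c * (s * r) := mul_le_mul_of_nonneg_left h2 hc.le
        _ = r * (c * s) := by ring
        _ ≤ _ := mul_le_mul_of_nonneg_left h1 hr.le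
    have := (abs_le.1 (hp0 s hs0.le hsδ)).1
    have := hD2 s hs0.le hsT
    linarith
  rcases le_total s (θ - M / r) with hsθ | hsθ
  · have h3 : B + 1 ≤ r * f s := by
      rcases le_total 0 (f' s) with hf | hf
      · have h1 := hA s δ1 hs0.le hδ1.le
        have h2 := hlow δ1 hδ1.le hδ1'
        have h4 : 0 ≤ f' s * (s - δ1) := mul_nonneg hf (by linarith)
        exact hrδ.trans (mul_le_mul_of_nonneg_left (by linarith) hr.le)
      · set w := θ - M / r with hw
        have hw0 : 0 ≤ w := by linarith
        have h1 := hA s w hs0.le hw0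
        have h4 : 0 ≤ f' s * (s - w) := mul_nonneg_of_nonpos_of_nonpos hf (by linarith)
        have h5 := hA w θ hw0 hθ0.le
        have h6 := (abs_le.1 (hEq w θ hw0 hθ0.le (by
          rw [hw]; simp only [sub_sub_cancel_left, abs_neg]; rwa [abs_of_pos hMr0]))).2
        have h7 : f' w ≤ -(b / 2) := by linarith
        have h8 : w - θ = -(M / r) := by rw [hw]; ring
        rw [h8, hfθ] at h5
        have h9 : b / 2 * (M / r) ≤ f s := by
          have := mul_le_mul_of_nonneg_right h7 hMr0.le
          linarith
        calc B + 1 ≤ b / 2 * M := by linarith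
          _ = r * (b / 2 * (M / r)) := by field_simp
          _ ≤ _ := mul_le_mul_of_nonneg_left h9 hr.le
    have := hD1 s hs0.le hsT
    linarith
  · have habs : |s - θ| ≤ M / r := abs_le.2 ⟨by linarith, hsM⟩
    have h1 := hA s θ hs0.le hθ0.le
    have h2 := hEq s θ hs0.le hθ0.le (habs.trans hMd)
    have h3 : -(η * (M / r)) ≤ (f' s - f' θ) * (s - θ) := by
      have : |(f' s - f' θ) * (s - θ)| ≤ η * (M / r) := by
        rw [abs_mul]
        exact mul_le_mul h2 habs (abs_nonneg _) ((abs_nonneg _).trans h2)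
      exact (abs_le.1 this).1
    have h4 : f' θ * (s - θ) - η * (M / r) ≤ f s := by rw [hfθ] at h1; linarith
    have h5 := mul_le_mul_of_nonneg_left h4 hr.le
    have h6 : r * (f' θ * (s - θ) - η * (M / r)) = -((s - θ) * (-f' θ) * r) - η * M := by
      field_simp
    have := (abs_le.1 (hpc s θ hs0.le hsT hθ0.le (by linarith) habs)).1
    have := hD3 s hs0.le hsT
    linarith

end helpers

set_option maxHeartbeats 2000000 in
/-- Proposition 3.1 (deterministic content): the walk `H_n` is strictly positive on
the stated interval, uniformly over `λ ∈ [λ₀, λ₁]`, for all large `n`. -/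
theorem stmt_1
    {Ω : Type*} [MeasurableSpace Ω] (P : Measure Ω) [IsProbabilityMeasure P]
    (W : Ω → ℝ) (Wn : ℕ → Ω → ℝ)
    (hWmeas : Measurable W) (hWnmeas : ∀ n, Measurable (Wn n))
    (hWpos : ∀ᵐ ω ∂P, 0 < W ω) (hWnpos : ∀ n, ∀ᵐ ω ∂P, 0 < Wn n ω)
    -- convergence in distribution of `Wₙ` to `W`
    (hdist : ∀ f : BoundedContinuousFunction ℝ ℝ,
      Tendsto (fun n => ∫ ω, f (Wn n ω) ∂P) atTop (𝓝 (∫ ω, f (W ω) ∂P)))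
    -- second moments are finite and converge
    (hW2 : Integrable (fun ω => (W ω) ^ 2) P)
    (hWn2 : ∀ n, Integrable (fun ω => (Wn n ω) ^ 2) P)
    (hmom : Tendsto (fun n => ∫ ω, (Wn n ω) ^ 2 ∂P) atTop (𝓝 (∫ ω, (W ω) ^ 2 ∂P)))
    -- `λ_crit = 1 / E[W²]`
    (lamCrit : ℝ) (hlamCrit : lamCrit = (∫ ω, (W ω) ^ 2 ∂P)⁻¹)
    -- `φ₁⁽ⁿ⁾(t) = E[Wₙ (1 - e^{-Wₙ t})]`
    (φ1n : ℕ → ℝ → ℝ)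
    (hφ1n : ∀ n t, φ1n n t = ∫ ω, Wn n ω * (1 - Real.exp (-(Wn n ω) * t)) ∂P)
    -- `θ⁽ⁿ⁾(λ) = inf {t > 0 : φ₁⁽ⁿ⁾(λ t) - t < 0}`
    (θn : ℕ → ℝ → ℝ)
    (hθn : ∀ n lam, θn n lam = sInf {t : ℝ | 0 < t ∧ φ1n n (lam * t) - t < 0})
    -- `β⁽ⁿ⁾(λ) = 1 - λ E[Wₙ² e^{-Wₙ λ θ⁽ⁿ⁾(λ)}]`
    (βn : ℕ → ℝ → ℝ)
    (hβn : ∀ n lam, βn n lam =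
      1 - lam * ∫ ω, (Wn n ω) ^ 2 * Real.exp (-(Wn n ω) * (lam * θn n lam)) ∂P)
    -- `ψ` continuous with `ψ(0) = 0`
    (ψ : ℝ → ℝ) (hψcont : Continuous ψ) (hψ0 : ψ 0 = 0)
    -- `√n · sup_{0 ≤ s ≤ K} |Δₙ(s)| → 0` for every `K > 0`
    (Δ : ℕ → ℝ → ℝ)
    (hΔ : ∀ K > (0:ℝ),
      TendstoUniformlyOn (fun (n : ℕ) s => Real.sqrt n * Δ n s) (fun _ => 0) atTop (Icc 0 K))
    -- `Hₙ(t, λ) = (φ₁⁽ⁿ⁾(λ t) - t) + n^{-1/2} ψ(λ t) + Δₙ(λ t)`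
    (H : ℕ → ℝ → ℝ → ℝ)
    (hH : ∀ n t lam, H n t lam =
      (φ1n n (lam * t) - t) + (Real.sqrt n)⁻¹ * ψ (lam * t) + Δ n (lam * t)) :
    ∀ lam0 lam1 : ℝ, lamCrit < lam0 → lam0 ≤ lam1 → ∀ ε > (0:ℝ),
      ∃ N : ℕ, ∀ n ≥ N, ∀ lam ∈ Icc lam0 lam1, ∀ s : ℝ,
        ε / Real.sqrt n ≤ s →
        s ≤ θn n lam + (ψ (lam * θn n lam) - ε) / (βn n lam * Real.sqrt n) →
        0 < H n s lam := by
  intro lam0 lam1 hl0 hl01 ε hε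
  set m2 := ∫ ω, (W ω) ^ 2 ∂P with hm2
  have hm2pos : 0 < m2 := by
    rw [hm2, integral_pos_iff_support_of_nonneg (fun ω => sq_nonneg _) hW2]
    have : Function.support (fun ω => (W ω) ^ 2) =ᵐ[P] univ := by
      rw [eventuallyEq_univ]
      filter_upwards [hWpos] with ω hω
      simp [hω.ne']
    rw [measure_congr this]
    simp
  have hcrit : 0 < lamCrit := by rw [hlamCrit]; positivity
  have hlam0 : 0 < lam0 := hcrit.trans hl0
  have hlam1 : 0 < lam1 := hlam0.trans_le hl01
  have hsup : 1 < lam0 * m2 := by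
    rw [hlamCrit, inv_lt_iff_one_lt_mul₀ hm2pos] at hl0
    linarith
  obtain ⟨c, hcdef⟩ : ∃ c, c = (lam0 * m2 - 1) / 2 := ⟨_, rfl⟩
  have hc : 0 < c := by rw [hcdef]; linarith
  obtain ⟨u0, hu0, hE0⟩ := aux_equi P W Wn hWmeas hWpos hWnpos hdist hW2 hmom
    (c / lam0 / 2) (by positivity)
  have hE1 := hmom.eventually (lt_mem_nhds (sub_lt_self m2 (show 0 < c / lam0 / 2 by positivity)))
  have hE2 := hmom.eventually (gt_mem_nhds (lt_add_one m2))
  obtain ⟨δ, hδdef⟩ : ∃ δ, δ = u0 / lam1 := ⟨_, rfl⟩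
  have hδ : 0 < δ := by rw [hδdef]; positivity
  obtain ⟨T, hTdef⟩ : ∃ T, T = m2 + 2 := ⟨_, rfl⟩
  have hT : 0 < T := by rw [hTdef]; positivity
  obtain ⟨b, hbdef⟩ : ∃ b, b = c * δ / T := ⟨_, rfl⟩
  have hb : 0 < b := by rw [hbdef]; positivity
  obtain ⟨K, hKdef⟩ : ∃ K, K = lam1 * (T + 1) := ⟨_, rfl⟩
  have hK : 0 < K := by rw [hKdef]; positivity
  obtain ⟨B, hB0⟩ := (isCompact_Icc (a := (0:ℝ)) (b := K)).exists_bound_of_continuousOn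
    hψcont.continuousOn
  have hB : 0 ≤ B := (norm_nonneg _).trans (hB0 0 ⟨le_rfl, hK.le⟩)
  obtain ⟨M, hMdef⟩ : ∃ M, M = max (2 * (B + 1) / b) ((B + ε) / b) := ⟨_, rfl⟩
  have hM1 : 2 * (B + 1) ≤ b * M := by
    have : 2 * (B + 1) / b ≤ M := hMdef ▸ le_max_left _ _
    rw [div_le_iff₀ hb] at this; linarith
  have hM : 0 < M := by
    by_contra! h
    nlinarith
  obtain ⟨η, hηdef⟩ : ∃ η, η = min (b / 2) (ε / 4 / M) := ⟨_, rfl⟩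
  have hη : 0 < η := by rw [hηdef]; positivity
  have hη1 : η ≤ b / 2 := hηdef ▸ min_le_left _ _
  have hη2 : η * M ≤ ε / 4 := by
    have : η ≤ ε / 4 / M := hηdef ▸ min_le_right _ _
    rwa [le_div_iff₀ hM] at this
  obtain ⟨d, hd, hE3⟩ := aux_equi P W Wn hWmeas hWpos hWnpos hdist hW2 hmom
    (η / lam1) (by positivity)
  obtain ⟨δ', hδ', hψδ⟩ := Metric.continuousAt_iff.1 (hψcont.continuousAt (x := 0)) (c * ε / 4)
    (show 0 < c * ε / 4 by positivity)
  obtain ⟨δ1, hδ1def⟩ : ∃ δ1, δ1 = min δ (δ' / 2 / lam1) := ⟨_, rfl⟩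
  have hδ1 : 0 < δ1 := by rw [hδ1def]; positivity
  have hδ1a : δ1 ≤ δ := hδ1def ▸ min_le_left _ _
  have hδ1b : lam1 * δ1 ≤ δ' / 2 := by
    have : δ1 ≤ δ' / 2 / lam1 := hδ1def ▸ min_le_right _ _
    rw [le_div_iff₀ hlam1] at this; linarith
  have huc := (isCompact_Icc (a := (0:ℝ)) (b := K)).uniformContinuousOn_of_continuous
    hψcont.continuousOn
  obtain ⟨e, he, hψe⟩ := Metric.uniformContinuousOn_iff.1 huc (ε / 4) (by positivity)
  have hr : Tendsto (fun n : ℕ => Real.sqrt n) atTop atTop :=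
    Real.tendsto_sqrt_atTop.comp tendsto_natCast_atTop_atTop
  have hMr : Tendsto (fun n : ℕ => M / Real.sqrt n) atTop (𝓝 0) := hr.const_div_atTop M
  have hR0 := hr.eventually (eventually_gt_atTop 0)
  have hR1 := hMr.eventually (gt_mem_nhds (show 0 < d / lam1 by positivity))
  have hR2 := hMr.eventually (gt_mem_nhds (show (0:ℝ) < 1 by positivity))
  have hR3 := hMr.eventually (gt_mem_nhds (show 0 < e / lam1 by positivity))
  have hR4 := hr.eventually (eventually_ge_atTop ((B + 1) / (c * δ1)))
  have hDel := Metric.tendstoUniformlyOn_iff.1 (hΔ K hK)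
  have hD1 := hDel (1 / 2) (by positivity)
  have hD2 := hDel (c * ε / 4) (by positivity)
  have hD3 := hDel (ε / 4) (by positivity)
  rw [← eventually_atTop]
  filter_upwards [hE0, hE1, hE2, hE3, hR0, hR1, hR2, hR3, hR4, hD1, hD2, hD3] with
    n hE0 hE1 hE2 hE3 hR0 hR1 hR2 hR3 hR4 hD1 hD2 hD3
  intro lam hlam s hs1 hs2
  have hl : 0 < lam := hlam0.trans_le hlam.1
  -- the function `g_n`
  obtain ⟨g, hg⟩ : ∃ g : ℝ → ℝ,
    g = fun u => ∫ ω, (Wn n ω) ^ 2 * Real.exp (-(Wn n ω) * u) ∂P := ⟨_, rfl⟩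
  have hg' : ∀ u, ∫ ω, (Wn n ω) ^ 2 * Real.exp (-(Wn n ω) * u) ∂P = g u := fun u => by rw [hg]
  have gA : ∀ u v, 0 ≤ u → 0 ≤ v → g u * (u - v) ≤ φ1n n u - φ1n n v := fun u v hu hv => by
    have := aux_A P (Wn n) (hWnmeas n) (hWnpos n) (hWn2 n) u v hu hv
    rwa [hg', ← hφ1n, ← hφ1n] at this
  have gB : ∀ u v, 0 ≤ u → 0 ≤ v → |u - v| ≤ d → |g u - g v| ≤ η / lam1 := by
    have key : ∀ u v, 0 ≤ u → u ≤ v → v ≤ u + d → |g u - g v| ≤ η / lam1 := fun u v hu huv hv => by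
      have h1 := aux_B P (Wn n) (hWnmeas n) (hWnpos n) (hWn2 n) u v d hu huv hv
      have h2 := aux_anti P (Wn n) (hWnmeas n) (hWnpos n) (hWn2 n) u v hu huv
      simp only [hg'] at h1 h2 hE3
      rw [abs_of_nonneg (by linarith)]
      linarith
    intro u v hu hv huv
    have := abs_le.1 huv
    rcases le_total u v with h | h
    · exact key u v hu h (by linarith)
    · rw [abs_sub_comm]; exact key v u hv h (by linarith)
  have g0 : ∀ u, 0 ≤ g u := fun u => by
    rw [hg]; exact integral_nonneg fun ω => by positivity
  have glow : ∀ u, 0 ≤ u → u ≤ u0 → 1 + c ≤ lam * g u := fun u hu huu => by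
    have h2 := aux_anti P (Wn n) (hWnmeas n) (hWnpos n) (hWn2 n) u u0 hu huu
    simp only [hg'] at h2 hE0
    have h3 : m2 - c / lam0 ≤ g u := by linarith
    have h4 : lam0 * (m2 - c / lam0) = lam0 * m2 - c := by field_simp
    have h5 := mul_le_mul_of_nonneg_left h3 hlam0.le
    have h6 := mul_le_mul_of_nonneg_right hlam.1 (g0 u)
    linarith
  have hφ0 : φ1n n 0 = 0 := by rw [hφ1n]; simp
  have hφb : ∀ u, 0 ≤ u → φ1n n u ≤ T := fun u hu => by
    have := aux_bdd P (Wn n) (hWnmeas n) (hWnpos n) (hWn2 n) u hu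
    rw [← hφ1n] at this
    linarith
  have lamle : ∀ x, 0 ≤ x → lam * x ≤ lam1 * x := fun x hx =>
    mul_le_mul_of_nonneg_right hlam.2 hx
  have inK : ∀ x, 0 ≤ x → x ≤ T + 1 → lam * x ∈ Icc 0 K := fun x hx hxT => by
    refine ⟨by positivity, (lamle x hx).trans ?_⟩
    rw [hKdef]
    exact mul_le_mul_of_nonneg_left hxT hlam1.le
  have fA : ∀ u v, 0 ≤ u → 0 ≤ v → (lam * g (lam * u) - 1) * (u - v) ≤
      (φ1n n (lam * u) - u) - (φ1n n (lam * v) - v) := fun u v hu hv => by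
    have := gA (lam * u) (lam * v) (by positivity) (by positivity)
    nlinarith
  have flow : ∀ s, 0 ≤ s → s ≤ δ → c * s ≤ φ1n n (lam * s) - s := fun s hs hsδ => by
    have h1 := fA s 0 hs le_rfl
    have h2 : lam * s ≤ u0 := by
      refine (lamle s hs).trans ?_
      rw [hδdef, le_div_iff₀ hlam1] at hsδ
      linarith
    have h3 := glow (lam * s) (by positivity) h2
    have h4 := mul_le_mul_of_nonneg_right h3 hs
    simp only [mul_zero, hφ0, sub_zero] at h1
    linarith
  have hβeq : βn n lam = -(lam * g (lam * θn n lam) - 1) := by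
    rw [hβn, hg']; ring
  obtain ⟨t1, t2, t3, t4⟩ := aux_theta (fun s => φ1n n (lam * s) - s)
    (fun s => lam * g (lam * s) - 1) c δ T (θn n lam) hδ hc fA
    (fun u hu => by have := mul_nonneg hl.le (g0 (lam * u)); linarith) flow
    (fun s hs => by have := hφb (lam * s) (by positivity); linarith) (hθn n lam)
  rw [hH]
  have hDconv : ∀ a : ℝ, (∀ x ∈ Icc (0:ℝ) K, dist (0:ℝ) (Real.sqrt n * Δ n x) < a) →
      ∀ s, 0 ≤ s → s ≤ T + 1 → Real.sqrt n * |Δ n (lam * s)| ≤ a := fun a ha s hs hsT => by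
    have := ha _ (inK s hs hsT)
    rw [dist_zero_left, Real.norm_eq_abs, abs_mul, abs_of_pos hR0] at this
    exact this.le
  refine aux_core (fun s => φ1n n (lam * s) - s) (fun s => lam * g (lam * s) - 1)
    (fun s => ψ (lam * s)) (fun s => Δ n (lam * s)) c δ δ1 T (θn n lam) b B M η (Real.sqrt n) ε
    (d / lam1) s hδ1 hδ1a hc hε hR0 hb hM hB fA ?_ flow t1 t2 t3 (hbdef ▸ t4) hη1 hη2 hM1
    hR1.le hR2.le ?_ ?_ ?_ ?_ (hDconv _ hD1) (hDconv _ hD2) (hDconv _ hD3) hs1 ?_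
  · intro u v hu hv huv
    have h1 : |lam * u - lam * v| ≤ d := by
      rw [← mul_sub, abs_mul, abs_of_pos hl]
      rw [le_div_iff₀ hlam1] at huv
      have := lamle _ (abs_nonneg (u - v))
      linarith
    have h2 := gB _ _ (by positivity) (by positivity) h1
    have h3 : (lam * g (lam * u) - 1) - (lam * g (lam * v) - 1)
      = lam * (g (lam * u) - g (lam * v)) := by ring
    simp only [h3]
    rw [abs_mul, abs_of_pos hl]
    rw [le_div_iff₀ hlam1] at h2
    have := lamle _ (abs_nonneg (g (lam * u) - g (lam * v)))
    linarith
  · rwa [div_le_iff₀ (by positivity)] at hR4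
  · intro x hx hxT
    exact hB0 _ (inK x hx hxT)
  · intro x hx hxδ
    have h1 : lam * x < δ' := by
      have := lamle x hx
      have := mul_le_mul_of_nonneg_left hxδ hlam1.le
      linarith
    have := hψδ (x := lam * x) (by
      rw [dist_zero_right, Real.norm_of_nonneg (by positivity)]; exact h1)
    rw [hψ0, dist_zero_right, Real.norm_eq_abs] at this
    exact this.le
  · intro x y hx hxT hy hyT hxy
    have := hψe _ (inK x hx hxT) _ (inK y hy hyT) (by
      rw [Real.dist_eq, ← mul_sub, abs_mul, abs_of_pos hl]
      have h1 := hxy.trans_lt hR3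
      rw [lt_div_iff₀ hlam1] at h1
      have := lamle _ (abs_nonneg (x - y))
      linarith)
    rw [Real.dist_eq] at this
    exact this.le
  · rw [← hβeq]; exact hs2
end

section
/- For every λ_0, λ_1 with λ_crit < λ_0 ≤ λ_1 and every ε > 0 there exists N such that for all n ≥ N and every λ ∈ [λ_0, λ_1], H_n(θ^{(n)}(λ) + n^{−1/2}(ψ(λ θ^{(n)}(λ)) + ε)/β^{(n)}(λ), λ) ≤ −ε/(2 n^{1/2}). -/
open MeasureTheory Filter Topology Set

section helpers
variable {Ω : Type*} [MeasurableSpace Ω] {P : Measure Ω} [IsProbabilityMeasure P]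
  {X : Ω → ℝ}

lemma aux_intX (hm : Measurable X) (h2 : Integrable (fun ω => (X ω) ^ 2) P) :
    Integrable X P := by
  refine Integrable.mono' ((integrable_const (1:ℝ)).add h2) hm.aestronglyMeasurable ?_
  refine Eventually.of_forall fun ω => ?_
  simp only [Pi.add_apply, Real.norm_eq_abs]
  rw [abs_le]
  constructor <;> nlinarith [sq_nonneg (X ω - 1), sq_nonneg (X ω + 1)]

lemma aux_intPhi (hm : Measurable X) (hp : ∀ᵐ ω ∂P, 0 < X ω)
    (h2 : Integrable (fun ω => (X ω) ^ 2) P) {s : ℝ} (hs : 0 ≤ s) :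
    Integrable (fun ω => X ω * (1 - Real.exp (-(X ω) * s))) P := by
  refine Integrable.mono' (aux_intX hm h2) (by fun_prop) ?_
  filter_upwards [hp] with ω hω
  have h1 : Real.exp (-(X ω) * s) ≤ 1 := Real.exp_le_one_iff.2 (by nlinarith)
  have h3 := Real.exp_pos (-(X ω) * s)
  rw [Real.norm_eq_abs, abs_of_nonneg (mul_nonneg hω.le (by linarith))]
  nlinarith

lemma aux_intD (hm : Measurable X) (hp : ∀ᵐ ω ∂P, 0 < X ω)
    (h2 : Integrable (fun ω => (X ω) ^ 2) P) {s : ℝ} (hs : 0 ≤ s) :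
    Integrable (fun ω => (X ω) ^ 2 * Real.exp (-(X ω) * s)) P := by
  refine Integrable.mono' h2 (by fun_prop) ?_
  filter_upwards [hp] with ω hω
  have h1 : Real.exp (-(X ω) * s) ≤ 1 := Real.exp_le_one_iff.2 (by nlinarith)
  have h3 := Real.exp_pos (-(X ω) * s)
  rw [Real.norm_eq_abs, abs_of_nonneg (by positivity)]
  nlinarith [sq_nonneg (X ω)]

lemma aux_tangent (hm : Measurable X) (hp : ∀ᵐ ω ∂P, 0 < X ω)
    (h2 : Integrable (fun ω => (X ω) ^ 2) P) {s s' : ℝ} (hs : 0 ≤ s) (hs' : 0 ≤ s') :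
    ∫ ω, X ω * (1 - Real.exp (-(X ω) * s')) ∂P ≤
      ∫ ω, X ω * (1 - Real.exp (-(X ω) * s)) ∂P +
        (s' - s) * ∫ ω, (X ω) ^ 2 * Real.exp (-(X ω) * s) ∂P := by
  rw [← integral_const_mul, ← integral_add (aux_intPhi hm hp h2 hs)
    ((aux_intD hm hp h2 hs).const_mul _)]
  refine integral_mono_ae (aux_intPhi hm hp h2 hs')
    ((aux_intPhi hm hp h2 hs).add ((aux_intD hm hp h2 hs).const_mul _)) ?_
  filter_upwards [hp] with ω hω
  have e : Real.exp (-(X ω) * s') = Real.exp (-(X ω) * s) * Real.exp (-(X ω) * (s' - s)) := by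
    rw [← Real.exp_add]; ring_nf
  have h1 := Real.add_one_le_exp (-(X ω) * (s' - s))
  have h3 := Real.exp_pos (-(X ω) * s)
  rw [e]
  have := mul_le_mul_of_nonneg_left h1 (mul_nonneg hω.le h3.le)
  nlinarith

lemma aux_D_nonneg (s : ℝ) : 0 ≤ ∫ ω, (X ω) ^ 2 * Real.exp (-(X ω) * s) ∂P :=
  integral_nonneg fun ω => by positivity

lemma aux_D_anti (hm : Measurable X) (hp : ∀ᵐ ω ∂P, 0 < X ω)
    (h2 : Integrable (fun ω => (X ω) ^ 2) P) {s s' : ℝ} (hs : 0 ≤ s) (h : s ≤ s') :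
    ∫ ω, (X ω) ^ 2 * Real.exp (-(X ω) * s') ∂P ≤ ∫ ω, (X ω) ^ 2 * Real.exp (-(X ω) * s) ∂P := by
  refine integral_mono_ae (aux_intD hm hp h2 (hs.trans h)) (aux_intD hm hp h2 hs) ?_
  filter_upwards [hp] with ω hω
  refine mul_le_mul_of_nonneg_left (Real.exp_le_exp.2 ?_) (sq_nonneg _)
  nlinarith

lemma aux_g_mono {x y : ℝ} (hx : 0 ≤ x) (hxy : x ≤ y) :
    1 - (1 + x) * Real.exp (-x) ≤ 1 - (1 + y) * Real.exp (-y) := by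
  have e : Real.exp (-x) = Real.exp (-y) * Real.exp (y - x) := by
    rw [← Real.exp_add]; ring_nf
  have h1 := Real.add_one_le_exp (y - x)
  have h3 := Real.exp_pos (-y)
  rw [e]
  have h4 : 1 + y ≤ (1 + x) * Real.exp (y - x) := by
    have := mul_le_mul_of_nonneg_left h1 (by linarith : 0 ≤ 1 + x)
    nlinarith
  nlinarith

lemma aux_g_pos {y : ℝ} (hy : 0 < y) : 0 < 1 - (1 + y) * Real.exp (-y) := by
  have h1 := Real.add_one_lt_exp hy.ne'
  have h3 := Real.exp_pos (-y)
  have : Real.exp y * Real.exp (-y) = 1 := by rw [← Real.exp_add]; simp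
  nlinarith

lemma aux_beta (hm : Measurable X) (hp : ∀ᵐ ω ∂P, 0 < X ω)
    (h2 : Integrable (fun ω => (X ω) ^ 2) P) {u0 u : ℝ} (hu0 : 0 < u0) (hu : u0 ≤ u) :
    ∫ ω, min |X ω| 1 * (1 - (1 + |X ω| * u0) * Real.exp (-(|X ω| * u0))) ∂P ≤
      ∫ ω, X ω * (1 - Real.exp (-(X ω) * u)) ∂P -
        u * ∫ ω, (X ω) ^ 2 * Real.exp (-(X ω) * u) ∂P := by
  have hu' : 0 ≤ u := hu0.le.trans hu
  rw [← integral_const_mul, ← integral_sub (aux_intPhi hm hp h2 hu')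
    ((aux_intD hm hp h2 hu').const_mul _)]
  refine integral_mono_of_nonneg (Eventually.of_forall fun ω => ?_)
    ((aux_intPhi hm hp h2 hu').sub ((aux_intD hm hp h2 hu').const_mul _)) ?_
  · have := aux_g_mono (le_refl (0:ℝ)) (mul_nonneg (abs_nonneg (X ω)) hu0.le)
    simp only [add_zero, neg_zero, Real.exp_zero, mul_one, sub_self] at this
    exact mul_nonneg (le_min (abs_nonneg _) zero_le_one) this
  · filter_upwards [hp] with ω hω
    rw [abs_of_pos hω]
    have h1 : X ω * u0 ≤ X ω * u := mul_le_mul_of_nonneg_left hu hω.le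
    have h0 : 0 < X ω * u0 := mul_pos hω hu0
    have h3 := aux_g_mono h0.le h1
    have h4 := aux_g_pos h0
    calc min (X ω) 1 * (1 - (1 + X ω * u0) * Real.exp (-(X ω * u0)))
        ≤ X ω * (1 - (1 + X ω * u) * Real.exp (-(X ω * u))) :=
          mul_le_mul (min_le_left _ _) h3 h4.le hω.le
      _ = _ := by rw [neg_mul]; ring

/-- limit of `E[X² e^{-X s}]` as `s → 0`. -/
lemma aux_small (hm : Measurable X) (hp : ∀ᵐ ω ∂P, 0 < X ω)
    (h2 : Integrable (fun ω => (X ω) ^ 2) P) {l : ℝ} (hl : 1 < l * ∫ ω, (X ω) ^ 2 ∂P) :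
    ∃ s > (0:ℝ), 1 < l * ∫ ω, (X ω) ^ 2 * Real.exp (-(|X ω| * s)) ∂P := by
  have ht : Tendsto (fun s : ℝ => ∫ ω, (X ω) ^ 2 * Real.exp (-(|X ω| * s)) ∂P) (𝓝[>] 0)
      (𝓝 (∫ ω, (X ω) ^ 2 ∂P)) := by
    refine tendsto_integral_filter_of_dominated_convergence (fun ω => (X ω) ^ 2) ?_ ?_ h2 ?_
    · exact Eventually.of_forall fun s => by fun_prop
    · filter_upwards [self_mem_nhdsWithin] with s hs
      refine Eventually.of_forall fun ω => ?_
      have hs : 0 < s := hs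
      have h1 : Real.exp (-(|X ω| * s)) ≤ 1 := Real.exp_le_one_iff.2 (by
        have := mul_nonneg (abs_nonneg (X ω)) hs.le
        linarith)
      rw [Real.norm_eq_abs, abs_of_nonneg (by positivity)]
      nlinarith [sq_nonneg (X ω)]
    · refine Eventually.of_forall fun ω => ?_
      have : Continuous fun s : ℝ => (X ω) ^ 2 * Real.exp (-(|X ω| * s)) := by fun_prop
      have := (this.tendsto 0).mono_left (nhdsWithin_le_nhds (s := Ioi 0))
      simpa using this
  have h := ((ht.const_mul l).eventually (lt_mem_nhds hl)).and self_mem_nhdsWithin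
  obtain ⟨s, h1, h2⟩ := h.exists
  exact ⟨s, h2, h1⟩

lemma aux_bdd1 {s : ℝ} (hs : 0 < s) (w : ℝ) :
    |w ^ 2 * Real.exp (-(|w| * s))| ≤ 2 / s ^ 2 := by
  rw [abs_of_nonneg (by positivity), le_div_iff₀ (by positivity)]
  have h := Real.quadratic_le_exp_of_nonneg (mul_nonneg (abs_nonneg w) hs.le)
  have h3 := Real.exp_pos (-(|w| * s))
  have e : Real.exp (|w| * s) * Real.exp (-(|w| * s)) = 1 := by rw [← Real.exp_add]; simp
  have h5 : (|w| * s) ^ 2 / 2 ≤ Real.exp (|w| * s) := by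
    have := mul_nonneg (abs_nonneg w) hs.le
    linarith
  have h6 := mul_le_mul_of_nonneg_right h5 h3.le
  rw [e, mul_pow, sq_abs] at h6
  nlinarith

lemma aux_bdd2 {s : ℝ} (hs : 0 < s) (w : ℝ) :
    |min |w| 1 * (1 - (1 + |w| * s) * Real.exp (-(|w| * s)))| ≤ 1 := by
  have h0 := mul_nonneg (abs_nonneg w) hs.le
  have := aux_g_mono (le_refl (0:ℝ)) h0
  simp only [add_zero, neg_zero, Real.exp_zero, mul_one, sub_self] at this
  have h1 : 0 ≤ min |w| 1 := le_min (abs_nonneg _) zero_le_one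
  rw [abs_of_nonneg (mul_nonneg h1 this)]
  have h2 : 0 ≤ (1 + |w| * s) * Real.exp (-(|w| * s)) := by positivity
  exact mul_le_one₀ (min_le_right _ _) this (by linarith)

end helpers

/-- Lemma 3.3, first display (deterministic content): just past the right edge of the
giant's excursion, `H_n` is at most `-ε/(2√n)`, uniformly over `λ ∈ [λ₀, λ₁]`. -/
theorem stmt_2
    {Ω : Type*} [MeasurableSpace Ω] (P : Measure Ω) [IsProbabilityMeasure P]
    (W : Ω → ℝ) (Wn : ℕ → Ω → ℝ)
    (hWmeas : Measurable W) (hWnmeas : ∀ n, Measurable (Wn n))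
    (hWpos : ∀ᵐ ω ∂P, 0 < W ω) (hWnpos : ∀ n, ∀ᵐ ω ∂P, 0 < Wn n ω)
    -- convergence in distribution of `Wₙ` to `W`
    (hdist : ∀ f : BoundedContinuousFunction ℝ ℝ,
      Tendsto (fun n => ∫ ω, f (Wn n ω) ∂P) atTop (𝓝 (∫ ω, f (W ω) ∂P)))
    -- second moments are finite and converge
    (hW2 : Integrable (fun ω => (W ω) ^ 2) P)
    (hWn2 : ∀ n, Integrable (fun ω => (Wn n ω) ^ 2) P)
    (hmom : Tendsto (fun n => ∫ ω, (Wn n ω) ^ 2 ∂P) atTop (𝓝 (∫ ω, (W ω) ^ 2 ∂P)))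
    -- `λ_crit = 1 / E[W²]`
    (lamCrit : ℝ) (hlamCrit : lamCrit = (∫ ω, (W ω) ^ 2 ∂P)⁻¹)
    -- `φ₁⁽ⁿ⁾(t) = E[Wₙ (1 - e^{-Wₙ t})]`
    (φ1n : ℕ → ℝ → ℝ)
    (hφ1n : ∀ n t, φ1n n t = ∫ ω, Wn n ω * (1 - Real.exp (-(Wn n ω) * t)) ∂P)
    -- `θ⁽ⁿ⁾(λ) = inf {t > 0 : φ₁⁽ⁿ⁾(λ t) - t < 0}`
    (θn : ℕ → ℝ → ℝ)
    (hθn : ∀ n lam, θn n lam = sInf {t : ℝ | 0 < t ∧ φ1n n (lam * t) - t < 0})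
    -- `β⁽ⁿ⁾(λ) = 1 - λ E[Wₙ² e^{-Wₙ λ θ⁽ⁿ⁾(λ)}]`
    (βn : ℕ → ℝ → ℝ)
    (hβn : ∀ n lam, βn n lam =
      1 - lam * ∫ ω, (Wn n ω) ^ 2 * Real.exp (-(Wn n ω) * (lam * θn n lam)) ∂P)
    -- `ψ` continuous with `ψ(0) = 0`
    (ψ : ℝ → ℝ) (hψcont : Continuous ψ) (hψ0 : ψ 0 = 0)
    -- `√n · sup_{0 ≤ s ≤ K} |Δₙ(s)| → 0` for every `K > 0`
    (Δ : ℕ → ℝ → ℝ)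
    (hΔ : ∀ K > (0:ℝ),
      TendstoUniformlyOn (fun (n : ℕ) s => Real.sqrt n * Δ n s) (fun _ => 0) atTop (Icc 0 K))
    -- `Hₙ(t, λ) = (φ₁⁽ⁿ⁾(λ t) - t) + n^{-1/2} ψ(λ t) + Δₙ(λ t)`
    (H : ℕ → ℝ → ℝ → ℝ)
    (hH : ∀ n t lam, H n t lam =
      (φ1n n (lam * t) - t) + (Real.sqrt n)⁻¹ * ψ (lam * t) + Δ n (lam * t)) :
    ∀ lam0 lam1 : ℝ, lamCrit < lam0 → lam0 ≤ lam1 → ∀ ε > (0:ℝ),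
      ∃ N : ℕ, ∀ n ≥ N, ∀ lam ∈ Icc lam0 lam1,
        H n (θn n lam + (ψ (lam * θn n lam) + ε) / (βn n lam * Real.sqrt n)) lam ≤
          -ε / (2 * Real.sqrt n) := by
  intro lam0 lam1 hlam0 hlam01 ε hε
  have hWint : 0 < ∫ ω, (W ω) ^ 2 ∂P := by
    rw [integral_pos_iff_support_of_nonneg (fun ω => sq_nonneg _) hW2]
    have : (Function.support fun ω => (W ω) ^ 2) =ᵐ[P] (univ : Set Ω) := by
      rw [eventuallyEq_univ]
      filter_upwards [hWpos] with ω hω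
      exact (pow_pos hω 2).ne'
    rw [measure_congr this]; simp
  have hl0pos : 0 < lam0 := by
    rw [hlamCrit] at hlam0
    exact (inv_pos.2 hWint).trans hlam0
  have hl : 1 < lam0 * ∫ ω, (W ω) ^ 2 ∂P := by
    rw [hlamCrit] at hlam0
    have := mul_lt_mul_of_pos_right hlam0 hWint
    rwa [inv_mul_cancel₀ hWint.ne'] at this
  have hl1pos : 0 < lam1 := hl0pos.trans_le hlam01
  obtain ⟨s, hs, hsl⟩ := aux_small hWmeas hWpos hW2 hl
  -- event 1
  have ev1 : ∀ᶠ n in atTop, 1 < lam0 * ∫ ω, (Wn n ω) ^ 2 * Real.exp (-(|Wn n ω| * s)) ∂P := by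
    have := hdist (BoundedContinuousFunction.ofNormedAddCommGroup
      (fun w : ℝ => w ^ 2 * Real.exp (-(|w| * s))) (by fun_prop) (2 / s ^ 2) (aux_bdd1 hs))
    exact (this.const_mul lam0).eventually (lt_mem_nhds hsl)
  -- event 2
  obtain ⟨b, hb, ev2⟩ : ∃ b > (0:ℝ), ∀ᶠ n in atTop, b <
      ∫ ω, min |Wn n ω| 1 * (1 - (1 + |Wn n ω| * s) * Real.exp (-(|Wn n ω| * s))) ∂P := by
    have hc : Continuous (fun w : ℝ => min |w| 1 * (1 - (1 + |w| * s) * Real.exp (-(|w| * s)))) := by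
      fun_prop
    have := hdist (BoundedContinuousFunction.ofNormedAddCommGroup
      (fun w : ℝ => min |w| 1 * (1 - (1 + |w| * s) * Real.exp (-(|w| * s)))) hc 1 (aux_bdd2 hs))
    have hpos : 0 < ∫ ω, min |W ω| 1 * (1 - (1 + |W ω| * s) * Real.exp (-(|W ω| * s))) ∂P := by
      have hae : ∀ᵐ ω ∂P, 0 < min |W ω| 1 * (1 - (1 + |W ω| * s) * Real.exp (-(|W ω| * s))) := by
        filter_upwards [hWpos] with ω hω
        have h1 : 0 < |W ω| := abs_pos.2 hω.ne'
        exact mul_pos (lt_min h1 one_pos) (aux_g_pos (mul_pos h1 hs))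
      rw [integral_pos_iff_support_of_nonneg_ae (hae.mono fun ω h => h.le)]
      · have : (Function.support fun ω => min |W ω| 1 *
            (1 - (1 + |W ω| * s) * Real.exp (-(|W ω| * s)))) =ᵐ[P] (univ : Set Ω) := by
          rw [eventuallyEq_univ]
          filter_upwards [hae] with ω hω
          exact hω.ne'
        rw [measure_congr this]; simp
      · refine Integrable.mono' (integrable_const (1:ℝ))
          (hc.measurable.comp hWmeas).aestronglyMeasurable
          (Eventually.of_forall fun ω => aux_bdd2 hs (W ω))
    exact ⟨_, half_pos hpos, this.eventually (lt_mem_nhds (half_lt_self hpos))⟩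
  -- event 3
  set C : ℝ := ∫ ω, (W ω) ^ 2 ∂P + 2 with hC
  have hCpos : 0 < C := by positivity
  have ev3 : ∀ᶠ n in atTop, ∫ ω, (Wn n ω) ^ 2 ∂P < C - 1 :=
    hmom.eventually (gt_mem_nhds (by rw [hC]; linarith))
  -- basic facts about θ
  have key : ∀ᶠ n in atTop, ∀ lam ∈ Icc lam0 lam1,
      s ≤ lam * θn n lam ∧ θn n lam ≤ C ∧ b / C ≤ βn n lam ∧
      ∀ t, 0 ≤ t → φ1n n (lam * t) - t ≤ -(βn n lam * (t - θn n lam)) := by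
    filter_upwards [ev1, ev2, ev3] with n h1 h2 h3 lam hlam
    have hlpos : 0 < lam := hl0pos.trans_le hlam.1
    have hm := hWnmeas n
    have hp := hWnpos n
    have h2' := hWn2 n
    have h1' : 1 < lam0 * ∫ ω, (Wn n ω) ^ 2 * Real.exp (-(Wn n ω) * s) ∂P := by
      have : ∫ ω, (Wn n ω) ^ 2 * Real.exp (-(Wn n ω) * s) ∂P =
          ∫ ω, (Wn n ω) ^ 2 * Real.exp (-(|Wn n ω| * s)) ∂P := by
        refine integral_congr_ae ?_
        filter_upwards [hp] with ω hω
        rw [abs_of_pos hω, neg_mul]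
      rwa [this]
    have tang : ∀ u u', 0 ≤ u → 0 ≤ u' → φ1n n u' ≤ φ1n n u +
        (u' - u) * ∫ ω, (Wn n ω) ^ 2 * Real.exp (-(Wn n ω) * u) ∂P := by
      intro u u' hu hu'
      rw [hφ1n, hφ1n]
      exact aux_tangent hm hp h2' hu hu'
    have mono : ∀ u u', 0 ≤ u → u ≤ u' → φ1n n u ≤ φ1n n u' := by
      intro u u' hu hu'
      have := tang u' u (hu.trans hu') hu
      nlinarith [aux_D_nonneg (P := P) (X := Wn n) u']
    have φ0 : φ1n n 0 = 0 := by rw [hφ1n]; simp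
    have φle : ∀ u, 0 ≤ u → φ1n n u < C := by
      intro u hu
      have : φ1n n u ≤ ∫ ω, (1 + (Wn n ω) ^ 2) ∂P := by
        rw [hφ1n]
        refine integral_mono_ae (aux_intPhi hm hp h2' hu) ((integrable_const _).add h2') ?_
        filter_upwards [hp] with ω hω
        have := Real.exp_pos (-(Wn n ω) * u)
        have : Wn n ω * (1 - Real.exp (-(Wn n ω) * u)) ≤ Wn n ω := by nlinarith
        nlinarith [sq_nonneg (Wn n ω - 1)]
      rw [integral_add (integrable_const _) h2'] at this
      simp at this
      linarith
    set S := {t : ℝ | 0 < t ∧ φ1n n (lam * t) - t < 0} with hS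
    have hθ : θn n lam = sInf S := hθn n lam
    have hCS : C ∈ S := ⟨hCpos, by linarith [φle (lam * C) (by positivity)]⟩
    have hbdd : BddBelow S := ⟨0, fun t ht => ht.1.le⟩
    have hθC : θn n lam ≤ C := by rw [hθ]; exact csInf_le hbdd hCS
    have hSlow : ∀ t ∈ S, s / lam ≤ t := by
      intro t ht
      by_contra! hlt
      have hts : lam * t < s := by rw [lt_div_iff₀ hlpos] at hlt; linarith
      have ht0 := ht.1
      have hu : 0 ≤ lam * t := by positivity
      have a1 := tang (lam * t) 0 hu le_rfl
      rw [φ0] at a1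
      have a2 := aux_D_anti hm hp h2' hu hts.le
      have a3 := ht.2
      have a4 : 0 ≤ ∫ ω, (Wn n ω) ^ 2 * Real.exp (-(Wn n ω) * s) ∂P := aux_D_nonneg s
      have a5 := mul_le_mul_of_nonneg_left a2 hu
      have a6 := mul_le_mul_of_nonneg_right hlam.1 a4
      have a7 := mul_le_mul_of_nonneg_left a6 ht0.le
      nlinarith
    have hθlow : s / lam ≤ θn n lam := by rw [hθ]; exact le_csInf ⟨C, hCS⟩ hSlow
    have hsθ : s ≤ lam * θn n lam := by
      rw [div_le_iff₀ hlpos] at hθlow; linarith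
    have hθpos : 0 < θn n lam := (div_pos hs hlpos).trans_le hθlow
    have hu : 0 ≤ lam * θn n lam := by positivity
    have hφθ : φ1n n (lam * θn n lam) ≤ θn n lam := by
      refine le_of_forall_pos_lt_add fun η hη => ?_
      obtain ⟨t, ht, htl⟩ := exists_lt_of_csInf_lt (⟨C, hCS⟩ : S.Nonempty)
        (show sInf S < sInf S + η by linarith)
      have hθt : θn n lam ≤ t := by rw [hθ]; exact csInf_le hbdd ht
      have := mono _ _ hu (mul_le_mul_of_nonneg_left hθt hlpos.le)
      have := ht.2
      rw [← hθ] at htl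
      linarith
    refine ⟨hsθ, hθC, ?_, ?_⟩
    · have hb1 := aux_beta hm hp h2' hs hsθ
      rw [← hφ1n] at hb1
      have hb2 : b ≤ βn n lam * θn n lam := by
        rw [hβn]
        nlinarith
      have hβpos : 0 < βn n lam := by
        by_contra! hneg
        nlinarith
      rw [div_le_iff₀ hCpos]
      nlinarith
    · intro t ht
      have := tang (lam * θn n lam) (lam * t) hu (by positivity)
      rw [hβn]
      nlinarith
  -- ψ bounds
  obtain ⟨B, hB⟩ := (isCompact_Icc (a := (0:ℝ)) (b := lam1 * C)).exists_bound_of_continuousOn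
    (hψcont.continuousOn)
  have hB0 : 0 ≤ B := (norm_nonneg _).trans (hB 0 ⟨le_rfl, by positivity⟩)
  have huc : UniformContinuousOn ψ (Icc 0 (lam1 * C + 1)) :=
    isCompact_Icc.uniformContinuousOn_of_continuous hψcont.continuousOn
  rw [Metric.uniformContinuousOn_iff] at huc
  obtain ⟨η, hη, huc⟩ := huc (ε / 4) (by positivity)
  have hΔ' := hΔ (lam1 * C + 1) (by positivity)
  rw [Metric.tendstoUniformlyOn_iff] at hΔ'
  have evΔ := hΔ' (ε / 4) (by positivity)
  set r : ℝ := min η (min s 1) with hr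
  have hrpos : 0 < r := lt_min hη (lt_min hs one_pos)
  have hsq : Tendsto (fun n : ℕ => Real.sqrt n) atTop atTop :=
    Real.tendsto_sqrt_atTop.comp tendsto_natCast_atTop_atTop
  have ev4 := hsq.eventually (eventually_gt_atTop (lam1 * (B + ε) / (b / C) / r))
  have ev5 := hsq.eventually (eventually_gt_atTop 0)
  obtain ⟨N, hN⟩ := eventually_atTop.1 (key.and (evΔ.and (ev4.and ev5)))
  refine ⟨N, fun n hn lam hlam => ?_⟩
  obtain ⟨hkey, hd, h4, h5⟩ := hN n hn
  obtain ⟨k1, k2, k3, k4⟩ := hkey lam hlam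
  have hlpos : 0 < lam := hl0pos.trans_le hlam.1
  set q := Real.sqrt n with hq
  set θ := θn n lam with hθdef
  set β := βn n lam with hβdef
  have hbC : 0 < b / C := by positivity
  have hβ : 0 < β := hbC.trans_le k3
  set x := ψ (lam * θ) + ε with hx
  have hlθ : lam * θ ≤ lam1 * C := by
    have hθ0 : 0 < θ := by
      by_contra! h
      nlinarith
    exact mul_le_mul hlam.2 k2 hθ0.le hl1pos.le
  have hxB : |x| ≤ B + ε := by
    have := hB (lam * θ) ⟨hs.le.trans k1, hlθ⟩
    rw [Real.norm_eq_abs] at this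
    calc |x| ≤ |ψ (lam * θ)| + |ε| := abs_add_le _ _
      _ ≤ B + ε := by rw [abs_of_pos hε]; linarith
  have hδ : |lam * (x / (β * q))| < r := by
    rw [abs_mul, abs_div, abs_of_pos hlpos, abs_of_pos (mul_pos hβ h5)]
    rw [div_lt_iff₀ hrpos, div_lt_iff₀ hbC] at h4
    rw [← mul_div_assoc, div_lt_iff₀ (mul_pos hβ h5)]
    calc lam * |x| ≤ lam1 * (B + ε) := mul_le_mul hlam.2 hxB (abs_nonneg _) hl1pos.le
      _ < q * r * (b / C) := h4
      _ ≤ q * r * β := mul_le_mul_of_nonneg_left k3 (by positivity)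
      _ = r * (β * q) := by ring
  set δ := x / (β * q) with hδdef
  have r1 : r ≤ η := min_le_left _ _
  have r2 : r ≤ s := (min_le_right _ _).trans (min_le_left _ _)
  have r3 : r ≤ 1 := (min_le_right _ _).trans (min_le_right _ _)
  obtain ⟨d1, d2⟩ := abs_lt.1 hδ
  have e1 : lam * (θ + δ) = lam * θ + lam * δ := by ring
  have ht0 : 0 ≤ lam * (θ + δ) := by rw [e1]; linarith
  have ht1 : lam * (θ + δ) ≤ lam1 * C + 1 := by rw [e1]; linarith
  have ht : 0 ≤ θ + δ := nonneg_of_mul_nonneg_right ht0 hlpos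
  have m1 := k4 _ ht
  have m2 := huc (lam * (θ + δ)) ⟨ht0, ht1⟩ (lam * θ) ⟨hs.le.trans k1, by linarith⟩ (by
    rw [Real.dist_eq, e1, add_sub_cancel_left]; linarith)
  have m3 := hd (lam * (θ + δ)) ⟨ht0, ht1⟩
  rw [Real.dist_eq] at m2 m3
  have m2' := (abs_lt.1 m2).2
  have m3' := (abs_lt.1 m3).1
  have m4 : β * (θ + δ - θ) = x / q := by
    rw [hδdef]; field_simp; ring
  rw [m4] at m1
  rw [hH]
  have m5 : Δ n (lam * (θ + δ)) ≤ (ε / 4) / q := by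
    rw [le_div_iff₀ h5]; linarith
  have m6 : q⁻¹ * ψ (lam * (θ + δ)) ≤ q⁻¹ * (x - ε + ε / 4) :=
    mul_le_mul_of_nonneg_left (by linarith) (by positivity)
  have m7 : -(x / q) + q⁻¹ * (x - ε + ε / 4) + (ε / 4) / q = -ε / (2 * q) := by
    field_simp; ring
  linarith
end

section
/- For each p ∈ {0,1}, sup_{t ≥ 0} |φ_p^{(n)}(t) − φ_p(t)| → 0 as n → ∞. -/
open MeasureTheory Filter Topology Set

/-- Polya: pointwise convergence of monotone functions to a continuous one is uniform. -/
lemma polya_aux (F : ℝ → ℝ) (Fn : ℕ → ℝ → ℝ) (L : ℝ) (Ln : ℕ → ℝ)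
    (hF : Monotone F) (hFn : ∀ n, Monotone (Fn n)) (hc : Continuous F)
    (hpt : ∀ t, Tendsto (fun n => Fn n t) atTop (𝓝 (F t)))
    (hle : ∀ n t, Fn n t ≤ Ln n) (hL : Tendsto Ln atTop (𝓝 L))
    (hFL : Tendsto F atTop (𝓝 L)) :
    TendstoUniformlyOn Fn F atTop (Ici 0) := by
  have hFle : ∀ t, F t ≤ L := fun t => hF.ge_of_tendsto hFL t
  rw [Metric.tendstoUniformlyOn_iff]
  intro ε hε
  obtain ⟨T, hT⟩ := (hFL.eventually (lt_mem_nhds (show L - ε / 2 < L by linarith))).exists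
  have hcomp : TendstoUniformlyOn Fn F atTop (Icc 0 T) := by
    rw [← tendstoLocallyUniformlyOn_iff_tendstoUniformlyOn_of_compact isCompact_Icc,
      Metric.tendstoLocallyUniformlyOn_iff]
    intro e he x hx
    obtain ⟨d, hd, hd'⟩ := Metric.continuousAt_iff.1 (hc.continuousAt (x := x)) (e / 4) (by linarith)
    refine ⟨Icc (x - d / 2) (x + d / 2),
      mem_nhdsWithin_of_mem_nhds (Icc_mem_nhds (by linarith) (by linarith)), ?_⟩
    have h1 := hd' (x := x - d / 2) (by rw [Real.dist_eq, abs_lt]; constructor <;> linarith)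
    have h2 := hd' (x := x + d / 2) (by rw [Real.dist_eq, abs_lt]; constructor <;> linarith)
    rw [Real.dist_eq, abs_lt] at h1 h2
    filter_upwards [(hpt (x - d / 2)).eventually (Metric.ball_mem_nhds _ (show 0 < e / 4 by linarith)),
      (hpt (x + d / 2)).eventually (Metric.ball_mem_nhds _ (show 0 < e / 4 by linarith))] with n h3 h4 y hy
    rw [Real.dist_eq, abs_lt] at h3 h4
    rw [Real.dist_eq, abs_lt]
    have := hF hy.1
    have := hF hy.2
    have := hFn n hy.1
    have := hFn n hy.2
    constructor <;> linarith
  filter_upwards [Metric.tendstoUniformlyOn_iff.1 hcomp ε hε,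
    (hpt T).eventually (Metric.ball_mem_nhds _ (show 0 < ε / 2 by linarith)),
    hL.eventually (Metric.ball_mem_nhds _ (show 0 < ε / 2 by linarith))] with n h1 h2 h3 t ht
  rw [Real.dist_eq, abs_lt] at h2 h3
  rcases le_total t T with h | h
  · exact h1 t ⟨ht, h⟩
  · have := hF h
    have := hFn n h
    have := hle n t
    have := hFle t
    rw [Real.dist_eq, abs_lt]
    constructor <;> linarith

lemma int_aux {Ω : Type*} [MeasurableSpace Ω] (P : Measure Ω) [IsProbabilityMeasure P]
    (X : Ω → ℝ) (hX : Measurable X) (hX2 : Integrable (fun ω => (X ω) ^ 2) P)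
    (g : ℝ → ℝ) (hg : Continuous g) (hg0 : ∀ x, 0 ≤ g x) (hg1 : ∀ x, g x ≤ 1 + |x|) :
    Integrable (fun ω => g (X ω)) P := by
  refine Integrable.mono' ((integrable_const (2 : ℝ)).add hX2)
    (hg.measurable.comp hX).aestronglyMeasurable (ae_of_all _ fun ω => ?_)
  have := hg1 (X ω)
  rw [Real.norm_eq_abs, abs_of_nonneg (hg0 _)]
  simp only [Pi.add_apply]
  nlinarith [sq_nonneg (|X ω| - 1), sq_abs (X ω)]

lemma trunc_aux {Ω : Type*} [MeasurableSpace Ω] (P : Measure Ω) [IsProbabilityMeasure P]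
    (X : Ω → ℝ) (hX : Measurable X) (hX2 : Integrable (fun ω => (X ω) ^ 2) P)
    (g : ℝ → ℝ) (hg : Continuous g) (hg0 : ∀ x, 0 ≤ g x) (hg1 : ∀ x, g x ≤ 1 + |x|)
    (K : ℝ) (hK : 0 < K) :
    |∫ ω, g (X ω) ∂P - ∫ ω, min (g (X ω)) K ∂P| ≤ 2 * (1 + ∫ ω, (X ω) ^ 2 ∂P) / K := by
  have hi := int_aux P X hX hX2 g hg hg0 hg1
  have hi2 := int_aux P X hX hX2 (fun x => min (g x) K) (hg.min continuous_const)
    (fun x => le_min (hg0 x) hK.le) (fun x => (min_le_left _ _).trans (hg1 x))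
  rw [← integral_sub hi hi2, abs_of_nonneg
    (integral_nonneg fun ω => sub_nonneg.2 (min_le_left _ _))]
  have : 2 * (1 + ∫ ω, (X ω) ^ 2 ∂P) / K = ∫ ω, 2 * (1 + (X ω) ^ 2) / K ∂P := by
    rw [integral_div, integral_const_mul, integral_add (integrable_const _) hX2]
    simp
  rw [this]
  refine integral_mono (hi.sub hi2) ((((integrable_const _).add hX2).const_mul 2).div_const K)
    fun ω => ?_
  simp only [Pi.add_apply]
  rw [le_div_iff₀ hK]
  have h0 := hg0 (X ω)
  have h1 := hg1 (X ω)
  have h2 : g (X ω) ^ 2 ≤ 2 * (1 + X ω ^ 2) := by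
    nlinarith [sq_nonneg (|X ω| - 1), sq_abs (X ω), abs_nonneg (X ω)]
  rcases le_total (g (X ω)) K with h | h
  · rw [min_eq_left h]; nlinarith
  · rw [min_eq_right h]; nlinarith

lemma conv_aux {Ω : Type*} [MeasurableSpace Ω] (P : Measure Ω) [IsProbabilityMeasure P]
    (W : Ω → ℝ) (Wn : ℕ → Ω → ℝ)
    (hWmeas : Measurable W) (hWnmeas : ∀ n, Measurable (Wn n))
    (hdist : ∀ f : BoundedContinuousFunction ℝ ℝ,
      Tendsto (fun n => ∫ ω, f (Wn n ω) ∂P) atTop (𝓝 (∫ ω, f (W ω) ∂P)))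
    (hW2 : Integrable (fun ω => (W ω) ^ 2) P)
    (hWn2 : ∀ n, Integrable (fun ω => (Wn n ω) ^ 2) P)
    (hmom : Tendsto (fun n => ∫ ω, (Wn n ω) ^ 2 ∂P) atTop (𝓝 (∫ ω, (W ω) ^ 2 ∂P)))
    (g : ℝ → ℝ) (hg : Continuous g) (hg0 : ∀ x, 0 ≤ g x) (hg1 : ∀ x, g x ≤ 1 + |x|) :
    Tendsto (fun n => ∫ ω, g (Wn n ω) ∂P) atTop (𝓝 (∫ ω, g (W ω) ∂P)) := by
  rw [Metric.tendsto_nhds]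
  intro ε hε
  set B := ∫ ω, (W ω) ^ 2 ∂P with hB
  have hB0 : 0 ≤ B := integral_nonneg fun ω => sq_nonneg _
  set K := 2 * (2 + B) / (ε / 3) with hKdef
  have hK : 0 < K := by positivity
  have hKe : 2 * (2 + B) / K = ε / 3 := by rw [hKdef]; field_simp
  let f : BoundedContinuousFunction ℝ ℝ :=
    BoundedContinuousFunction.ofNormedAddCommGroup (fun x => min (g x) K)
      (hg.min continuous_const) K (fun x => by
        rw [Real.norm_eq_abs, abs_of_nonneg (le_min (hg0 x) hK.le)]; exact min_le_right _ _)
  have hf := hdist f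
  have t0 := trunc_aux P W hWmeas hW2 g hg hg0 hg1 K hK
  have t0' : 2 * (1 + B) / K ≤ ε / 3 := by rw [← hKe]; gcongr; norm_num
  filter_upwards [hf.eventually (Metric.ball_mem_nhds _ (show 0 < ε / 3 by linarith)),
    hmom.eventually (gt_mem_nhds (show B < 1 + B by linarith))] with n h1 h2
  have t1 := trunc_aux P (Wn n) (hWnmeas n) (hWn2 n) g hg hg0 hg1 K hK
  have t1' : 2 * (1 + ∫ ω, (Wn n ω) ^ 2 ∂P) / K ≤ ε / 3 := by
    rw [← hKe]; exact div_le_div_of_nonneg_right (by linarith) hK.le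
  rw [Real.dist_eq, abs_lt] at h1
  change -(ε/3) < (∫ ω, min (g (Wn n ω)) K ∂P) - (∫ ω, min (g (W ω)) K ∂P) ∧
    (∫ ω, min (g (Wn n ω)) K ∂P) - (∫ ω, min (g (W ω)) K ∂P) < ε/3 at h1
  rw [abs_le] at t0 t1
  rw [Real.dist_eq, abs_lt]
  constructor <;> linarith

/-- the extended integrand -/
noncomputable def gfun (p : ℕ) (t x : ℝ) : ℝ :=
  (max x 0) ^ p * (1 - Real.exp (-(max x 0) * max t 0))

lemma gfun_cont (p : ℕ) (t : ℝ) : Continuous (gfun p t) := by unfold gfun; fun_prop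
lemma gfun_cont' (p : ℕ) (x : ℝ) : Continuous (fun t => gfun p t x) := by unfold gfun; fun_prop

lemma exp_aux (t x : ℝ) : Real.exp (-(max x 0) * max t 0) ≤ 1 := by
  rw [Real.exp_le_one_iff]
  nlinarith [mul_nonneg (le_max_right x 0) (le_max_right t 0)]

lemma gfun_nonneg (p : ℕ) (t x : ℝ) : 0 ≤ gfun p t x :=
  mul_nonneg (pow_nonneg (le_max_right _ _) _) (sub_nonneg.2 (exp_aux t x))

lemma gfun_le (p : ℕ) (t x : ℝ) : gfun p t x ≤ (max x 0) ^ p := by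
  unfold gfun
  exact mul_le_of_le_one_right (pow_nonneg (le_max_right _ _) _)
    (by linarith [Real.exp_pos (-(max x 0) * max t 0)])

lemma gfun_mono (p : ℕ) (x : ℝ) : Monotone (fun t => gfun p t x) := by
  intro s t hst
  unfold gfun
  have h0 : 0 ≤ max x 0 := le_max_right _ _
  have h1 : max s 0 ≤ max t 0 := max_le_max_right _ hst
  have h2 : -(max x 0) * max t 0 ≤ -(max x 0) * max s 0 := by nlinarith
  have h3 := Real.exp_le_exp.2 h2
  exact mul_le_mul_of_nonneg_left (by linarith) (pow_nonneg h0 _)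

lemma pow_bd (p : ℕ) (hp : p = 0 ∨ p = 1) (x : ℝ) : (max x 0) ^ p ≤ 1 + |x| := by
  have h1 : max x 0 ≤ |x| := max_le (le_abs_self x) (abs_nonneg x)
  have := abs_nonneg x
  rcases hp with rfl | rfl
  · simp
  · rw [pow_one]; linarith


/-- Under Assumption 1, for `p ∈ {0,1}` the functions
`φ_p⁽ⁿ⁾(t) = E[Wₙ^p (1 - e^{-Wₙ t})]` converge to `φ_p(t) = E[W^p (1 - e^{-W t})]`
uniformly on `[0,∞)`, i.e. `sup_{t ≥ 0} |φ_p⁽ⁿ⁾(t) - φ_p(t)| → 0`. -/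
theorem stmt_3
    {Ω : Type*} [MeasurableSpace Ω] (P : Measure Ω) [IsProbabilityMeasure P]
    (W : Ω → ℝ) (Wn : ℕ → Ω → ℝ)
    (hWmeas : Measurable W) (hWnmeas : ∀ n, Measurable (Wn n))
    (hWpos : ∀ᵐ ω ∂P, 0 < W ω) (hWnpos : ∀ n, ∀ᵐ ω ∂P, 0 < Wn n ω)
    (hdist : ∀ f : BoundedContinuousFunction ℝ ℝ,
      Tendsto (fun n => ∫ ω, f (Wn n ω) ∂P) atTop (𝓝 (∫ ω, f (W ω) ∂P)))
    (hW2 : Integrable (fun ω => (W ω) ^ 2) P)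
    (hWn2 : ∀ n, Integrable (fun ω => (Wn n ω) ^ 2) P)
    (hmom : Tendsto (fun n => ∫ ω, (Wn n ω) ^ 2 ∂P) atTop (𝓝 (∫ ω, (W ω) ^ 2 ∂P))) :
    ∀ p ∈ ({0, 1} : Set ℕ),
      TendstoUniformlyOn
        (fun n t => ∫ ω, (Wn n ω) ^ p * (1 - Real.exp (-(Wn n ω) * t)) ∂P)
        (fun t => ∫ ω, (W ω) ^ p * (1 - Real.exp (-(W ω) * t)) ∂P)
        atTop (Ici 0) := by

  intro p hp
  have hp' : p = 0 ∨ p = 1 := by simpa using hp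
  have hbd : ∀ t x, gfun p t x ≤ 1 + |x| := fun t x => (gfun_le p t x).trans (pow_bd p hp' x)
  have hint : ∀ (X : Ω → ℝ), Measurable X → Integrable (fun ω => (X ω) ^ 2) P →
      ∀ t, Integrable (fun ω => gfun p t (X ω)) P := fun X h1 h2 t =>
    int_aux P X h1 h2 _ (gfun_cont p t) (gfun_nonneg p t) (hbd t)
  have hpc : Continuous (fun x : ℝ => (max x 0) ^ p) := by fun_prop
  have hp0 : ∀ x : ℝ, 0 ≤ (max x 0) ^ p := fun x => pow_nonneg (le_max_right _ _) _
  have hintp : ∀ (X : Ω → ℝ), Measurable X → Integrable (fun ω => (X ω) ^ 2) P →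
      Integrable (fun ω => (max (X ω) 0) ^ p) P := fun X h1 h2 =>
    int_aux P X h1 h2 _ hpc hp0 (pow_bd p hp')
  have hmono : ∀ (X : Ω → ℝ), Measurable X → Integrable (fun ω => (X ω) ^ 2) P →
      Monotone (fun t => ∫ ω, gfun p t (X ω) ∂P) := fun X h1 h2 s t hst =>
    integral_mono (hint X h1 h2 s) (hint X h1 h2 t) fun ω => gfun_mono p (X ω) hst
  have heq : ∀ (X : Ω → ℝ), (∀ᵐ ω ∂P, 0 < X ω) → ∀ t ∈ Ici (0 : ℝ),
      ∫ ω, gfun p t (X ω) ∂P = ∫ ω, (X ω) ^ p * (1 - Real.exp (-(X ω) * t)) ∂P := by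
    intro X hX t ht
    refine integral_congr_ae ?_
    filter_upwards [hX] with ω hω
    unfold gfun
    rw [max_eq_left hω.le, max_eq_left ht]
  have hnorm : ∀ t x, ‖gfun p t x‖ ≤ (max x 0) ^ p := fun t x => by
    rw [Real.norm_eq_abs, abs_of_nonneg (gfun_nonneg p t x)]; exact gfun_le p t x
  have key : TendstoUniformlyOn (fun n t => ∫ ω, gfun p t (Wn n ω) ∂P)
      (fun t => ∫ ω, gfun p t (W ω) ∂P) atTop (Ici 0) := by
    refine polya_aux _ _ (∫ ω, (max (W ω) 0) ^ p ∂P) (fun n => ∫ ω, (max (Wn n ω) 0) ^ p ∂P)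
      (hmono W hWmeas hW2) (fun n => hmono _ (hWnmeas n) (hWn2 n)) ?_ ?_ ?_ ?_ ?_
    · exact continuous_of_dominated (fun t => (hint W hWmeas hW2 t).aestronglyMeasurable)
        (fun t => ae_of_all _ fun ω => hnorm t (W ω)) (hintp W hWmeas hW2)
        (ae_of_all _ fun ω => gfun_cont' p (W ω))
    · intro t
      exact conv_aux P W Wn hWmeas hWnmeas hdist hW2 hWn2 hmom _ (gfun_cont p t)
        (gfun_nonneg p t) (hbd t)
    · intro n t
      exact integral_mono (hint _ (hWnmeas n) (hWn2 n) t) (hintp _ (hWnmeas n) (hWn2 n))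
        fun ω => gfun_le p t _
    · exact conv_aux P W Wn hWmeas hWnmeas hdist hW2 hWn2 hmom _ hpc hp0 (pow_bd p hp')
    · refine tendsto_integral_filter_of_dominated_convergence _
        (Eventually.of_forall fun t => (hint W hWmeas hW2 t).aestronglyMeasurable)
        (Eventually.of_forall fun t => ae_of_all _ fun ω => hnorm t (W ω))
        (hintp W hWmeas hW2) ?_
      filter_upwards [hWpos] with ω hω
      have h1 : Tendsto (fun t : ℝ => -(max (W ω) 0) * max t 0) atTop atBot := by
        rw [max_eq_left hω.le]
        exact (tendsto_atTop_mono (fun t => le_max_left t 0) tendsto_id).const_mul_atTop_of_neg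
          (by linarith)
      have h2 := ((Real.tendsto_exp_atBot.comp h1).const_sub 1).const_mul ((max (W ω) 0) ^ p)
      simpa [gfun, Function.comp_def] using h2
  refine (key.congr (Eventually.of_forall fun n t ht => ?_)).congr_right fun t ht => ?_
  · exact heq _ (hWnpos n) t ht
  · exact heq _ hWpos t ht
end

section
/- sup_{λ > λ_crit} |θ^{(n)}(λ) − θ(λ)| → 0 as n → ∞. -/
open MeasureTheory Filter Topology Set

lemma aux_conv_s4 {Ω : Type*} [MeasurableSpace Ω] (P : Measure Ω) [IsProbabilityMeasure P]
    (W : Ω → ℝ) (Wn : ℕ → Ω → ℝ)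
    (hWmeas : Measurable W) (hWnmeas : ∀ n, Measurable (Wn n))
    (hdist : ∀ f : BoundedContinuousFunction ℝ ℝ,
      Tendsto (fun n => ∫ ω, f (Wn n ω) ∂P) atTop (𝓝 (∫ ω, f (W ω) ∂P)))
    (hW2 : Integrable (fun ω => (W ω) ^ 2) P)
    (hWn2 : ∀ n, Integrable (fun ω => (Wn n ω) ^ 2) P)
    (hmom : Tendsto (fun n => ∫ ω, (Wn n ω) ^ 2 ∂P) atTop (𝓝 (∫ ω, (W ω) ^ 2 ∂P)))
    (g : ℝ → ℝ) (hg : Continuous g) (hg0 : ∀ x, 0 ≤ g x) (hg1 : ∀ x, g x ≤ |x|) :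
    Tendsto (fun n => ∫ ω, g (Wn n ω) ∂P) atTop (𝓝 (∫ ω, g (W ω) ∂P)) := by
  have key : ∀ (X : Ω → ℝ), Measurable X → Integrable (fun ω => (X ω) ^ 2) P → ∀ R : ℝ, 0 < R →
      |∫ ω, g (X ω) ∂P - ∫ ω, min R (g (X ω)) ∂P| ≤ (∫ ω, (X ω) ^ 2 ∂P) / R := by
    intro X hX hX2 R hR
    have i1 : Integrable (fun ω => g (X ω)) P := by
      refine (hX2.add (integrable_const (1:ℝ))).mono'
        (hg.measurable.comp hX).aestronglyMeasurable (ae_of_all _ fun ω => ?_)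
      rw [Real.norm_of_nonneg (hg0 _)]
      have h1 := hg1 (X ω)
      have h2 := sq_abs (X ω)
      simp only [Pi.add_apply]
      nlinarith [sq_nonneg (|X ω| - 1)]
    have i2 : Integrable (fun ω => min R (g (X ω))) P := by
      refine i1.mono' ((measurable_const.min (hg.measurable.comp hX)).aestronglyMeasurable)
        (ae_of_all _ fun ω => ?_)
      rw [Real.norm_of_nonneg (le_min hR.le (hg0 _))]
      exact min_le_right _ _
    rw [← integral_sub i1 i2, ← integral_div]
    refine (abs_integral_le_integral_abs).trans ?_
    refine integral_mono (i1.sub i2).abs (hX2.div_const R) fun ω => ?_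
    simp only
    rw [le_div_iff₀ hR]
    have h1 := hg1 (X ω)
    have h2 := sq_abs (X ω)
    rcases le_total R (g (X ω)) with h | h
    · rw [min_eq_left h, abs_of_nonneg (by linarith)]
      nlinarith
    · rw [min_eq_right h]
      simp; positivity
  rw [Metric.tendsto_atTop]
  intro ε hε
  set K := ∫ ω, (W ω) ^ 2 ∂P with hK
  have hK0 : 0 ≤ K := integral_nonneg fun ω => sq_nonneg _
  set R := 4 * (K + 1) / ε with hR
  have hRpos : 0 < R := by positivity
  have hKR : (K + 1) / R = ε / 4 := by rw [hR]; field_simp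
  let f : BoundedContinuousFunction ℝ ℝ :=
    BoundedContinuousFunction.ofNormedAddCommGroup (fun x => min R (g x)) (continuous_const.min hg) R
      (fun x => by rw [Real.norm_of_nonneg (le_min hRpos.le (hg0 _))]; exact min_le_left _ _)
  have hf := hdist f
  have h1 := (Metric.tendsto_atTop.1 hf) (ε/4) (by positivity)
  have h2 := (Metric.tendsto_atTop.1 hmom) 1 one_pos
  obtain ⟨N1, h1⟩ := h1
  obtain ⟨N2, h2⟩ := h2
  refine ⟨max N1 N2, fun n hn => ?_⟩
  have a1 := h1 n (le_trans (le_max_left _ _) hn)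
  have a2 := h2 n (le_trans (le_max_right _ _) hn)
  have a3 := key (Wn n) (hWnmeas n) (hWn2 n) R hRpos
  have a4 := key W hWmeas hW2 R hRpos
  have a5 : (∫ ω, (Wn n ω) ^ 2 ∂P) / R ≤ ε / 4 := by
    rw [← hKR]
    rw [Real.dist_eq, abs_lt] at a2
    gcongr
    linarith
  have a6 : K / R ≤ ε / 4 := by
    rw [← hKR]; gcongr; linarith
  have e : ∀ x, f x = min R (g x) := fun x => rfl
  simp only [e] at a1
  rw [Real.dist_eq, abs_lt] at a1 ⊢
  rw [abs_le] at a3 a4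
  constructor <;> linarith [a1.1, a1.2, a3.1, a3.2, a4.1, a4.2]

/-- Basic properties of `φ`. -/
structure GoodPhi (φ : ℝ → ℝ) (m : ℝ) : Prop where
  mono : ∀ s t, 0 ≤ s → s ≤ t → φ s ≤ φ t
  star : ∀ r s, 0 < r → r ≤ 1 → 0 < s → r * φ s ≤ φ (r * s)
  le : ∀ s, 0 ≤ s → φ s ≤ m
  m0 : 0 ≤ m

lemma GoodPhi.nonempty {φ : ℝ → ℝ} {m : ℝ} (h : GoodPhi φ m) {l : ℝ} (hl : 0 < l) {ε : ℝ}
    (hε : 0 < ε) : m + ε ∈ {t : ℝ | 0 < t ∧ φ (l * t) - t < 0} := by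
  have := h.m0
  have h2 := h.le (l * (m + ε)) (by positivity)
  exact ⟨by positivity, by linarith⟩

lemma GoodPhi.bdd {φ : ℝ → ℝ} {l : ℝ} : BddBelow {t : ℝ | 0 < t ∧ φ (l * t) - t < 0} :=
  ⟨0, fun _ ht => ht.1.le⟩

lemma GoodPhi.le_m {φ : ℝ → ℝ} {m : ℝ} (h : GoodPhi φ m) {l : ℝ} (hl : 0 < l) :
    sInf {t : ℝ | 0 < t ∧ φ (l * t) - t < 0} ≤ m :=
  le_of_forall_pos_le_add fun _ hε => csInf_le GoodPhi.bdd (h.nonempty hl hε)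

lemma GoodPhi.upper {φ : ℝ → ℝ} {m : ℝ} (h : GoodPhi φ m) {l l' t : ℝ} (hl : 0 < l) (hll : l ≤ l')
    (ht : 0 < t) (hφ : φ (l' * t) < t) : sInf {t : ℝ | 0 < t ∧ φ (l * t) - t < 0} ≤ t := by
  refine csInf_le GoodPhi.bdd ⟨ht, ?_⟩
  have := h.mono (l * t) (l' * t) (by positivity) (by gcongr)
  linarith

lemma GoodPhi.lower {φ : ℝ → ℝ} {m : ℝ} (h : GoodPhi φ m) {l l' t : ℝ} (hl : 0 < l') (hll : l' ≤ l)
    (ht : 0 < t) (hφ : t < φ (l' * t)) : t ≤ sInf {t : ℝ | 0 < t ∧ φ (l * t) - t < 0} := by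
  have hl0 : 0 < l := hl.trans_le hll
  refine le_csInf ⟨_, h.nonempty hl0 one_pos⟩ ?_
  rintro u ⟨hu, hu2⟩
  by_contra! hut
  have h1 := h.mono (l' * t) (l * t) (by positivity) (by gcongr)
  have h2 := h.star (u / t) (l * t) (by positivity) ((div_le_one ht).2 hut.le) (by positivity)
  have e : u / t * (l * t) = l * u := by field_simp
  rw [e] at h2
  have h3 : u / t * t ≤ u / t * φ (l * t) := by gcongr; linarith
  have e2 : u / t * t = u := by field_simp
  linarith

lemma GoodPhi.of_gt {φ : ℝ → ℝ} {m : ℝ} (h : GoodPhi φ m) {l t : ℝ} (hl : 0 < l)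
    (ht : sInf {t : ℝ | 0 < t ∧ φ (l * t) - t < 0} < t) : φ (l * t) < t := by
  obtain ⟨u, ⟨hu, hu2⟩, hut⟩ := exists_lt_of_csInf_lt ⟨_, h.nonempty hl one_pos⟩ ht
  have ht0 : 0 < t := hu.trans hut
  have h2 := h.star (u / t) (l * t) (by positivity) ((div_le_one ht0).2 hut.le) (by positivity)
  have e : u / t * (l * t) = l * u := by field_simp
  rw [e] at h2
  by_contra! hc
  have h3 : u / t * t ≤ u / t * φ (l * t) := by gcongr
  have e2 : u / t * t = u := by field_simp
  linarith

lemma GoodPhi.of_lt {φ : ℝ → ℝ}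
    (hs : ∀ r s, 0 < r → r < 1 → 0 < s → r * φ s < φ (r * s)) {l t : ℝ} (hl : 0 < l) (ht0 : 0 < t)
    (ht : t < sInf {t : ℝ | 0 < t ∧ φ (l * t) - t < 0}) : t < φ (l * t) := by
  obtain ⟨u, htu, hu⟩ := exists_between ht
  have hu0 := ht0.trans htu
  have h1 : u ≤ φ (l * u) := by
    by_contra! hc
    exact notMem_of_lt_csInf hu GoodPhi.bdd ⟨hu0, by linarith⟩
  have h2 := hs (t / u) (l * u) (by positivity) ((div_lt_one hu0).2 htu) (by positivity)
  have e : t / u * (l * u) = l * t := by field_simp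
  rw [e] at h2
  have h3 : t / u * u ≤ t / u * φ (l * u) := by gcongr
  have e2 : t / u * u = t := by field_simp
  linarith

lemma aux_abstract (φn : ℕ → ℝ → ℝ) (φ : ℝ → ℝ) (mn : ℕ → ℝ) (m : ℝ)
    (hn : ∀ n, GoodPhi (φn n) (mn n)) (h : GoodPhi φ m)
    (hs : ∀ r s, 0 < r → r < 1 → 0 < s → r * φ s < φ (r * s))
    (hc : ∀ s, 0 < s → ContinuousAt φ s) (hinf : Tendsto φ atTop (𝓝 m))
    (hφ : ∀ s, 0 < s → Tendsto (fun n => φn n s) atTop (𝓝 (φ s)))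
    (hm : Tendsto mn atTop (𝓝 m)) (a : ℝ) (ha : 0 < a) (θn : ℕ → ℝ → ℝ)
    (hθn : ∀ n lam, θn n lam = sInf {t : ℝ | 0 < t ∧ φn n (lam * t) - t < 0})
    (θ : ℝ → ℝ)
    (hθ : ∀ lam, θ lam = sInf {t : ℝ | 0 < t ∧ φ (lam * t) - t < 0}) :
    TendstoUniformlyOn (fun n lam => θn n lam) θ atTop (Ioi a) := by
  have θ0 : ∀ l, 0 ≤ θ l := fun l => by
    rw [hθ]; exact Real.sInf_nonneg fun t ht => ht.1.le
  have θn0 : ∀ n l, 0 ≤ θn n l := fun n l => by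
    rw [hθn]; exact Real.sInf_nonneg fun t ht => ht.1.le
  have U : ∀ l0, 0 < l0 → ∀ ε > 0, ∃ l' > l0, ∀ᶠ n in atTop, ∀ l, 0 < l → l ≤ l' →
      θn n l ≤ θ l0 + ε ∧ θ l ≤ θ l0 + ε := by
    intro l0 hl0 ε hε
    have ht : 0 < θ l0 + ε := by linarith [θ0 l0]
    set t := θ l0 + ε
    have h1 : φ (l0 * t) < t := h.of_gt hl0 (by rw [← hθ]; simp [t, hε])
    have c : ContinuousAt (fun l => φ (l * t)) l0 :=
      ContinuousAt.comp (f := fun l => l * t) (hc _ (by positivity)) (by fun_prop)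
    have c2 : ∀ᶠ l in 𝓝[>] l0, φ (l * t) < t :=
      (c.eventually (gt_mem_nhds h1)).filter_mono nhdsWithin_le_nhds
    obtain ⟨l', hl', hl0'⟩ := (c2.and self_mem_nhdsWithin).exists
    have hl0' : l0 < l' := hl0'
    refine ⟨l', hl0', ?_⟩
    have hl'0 := hl0.trans hl0'
    filter_upwards [(hφ (l' * t) (by positivity)).eventually (gt_mem_nhds hl')] with n hnn l hl hll
    rw [hθn, hθ l]
    exact ⟨(hn n).upper hl hll ht hnn, h.upper hl hll ht hl'⟩
  have L' : ∀ t, 0 < t → ∀ l', 0 < l' → t < φ (l' * t) → ∀ᶠ n in atTop, ∀ l, l' ≤ l →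
      t ≤ θn n l ∧ t ≤ θ l := by
    intro t ht l' hl' h1
    filter_upwards [(hφ (l' * t) (by positivity)).eventually (lt_mem_nhds h1)] with n hnn l hll
    rw [hθn, hθ l]
    exact ⟨(hn n).lower hl' hll ht hnn, h.lower hl' hll ht h1⟩
  have L : ∀ l0, 0 < l0 → ∀ ε > 0, ∃ l' < l0, ∀ᶠ n in atTop, ∀ l, l' ≤ l →
      θ l0 - ε ≤ θn n l ∧ θ l0 - ε ≤ θ l := by
    intro l0 hl0 ε hε
    rcases le_or_gt (θ l0 - ε) 0 with ht | ht
    · exact ⟨l0 - 1, by linarith, Eventually.of_forall fun n l _ =>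
        ⟨ht.trans (θn0 _ _), ht.trans (θ0 _)⟩⟩
    set t := θ l0 - ε
    have h1 : t < φ (l0 * t) := GoodPhi.of_lt hs hl0 ht (by rw [← hθ]; simp [t, hε])
    have c : ContinuousAt (fun l => φ (l * t)) l0 :=
      ContinuousAt.comp (f := fun l => l * t) (hc _ (by positivity)) (by fun_prop)
    have c2 : ∀ᶠ l in 𝓝[<] l0, t < φ (l * t) ∧ 0 < l :=
      ((c.eventually (lt_mem_nhds h1)).and (lt_mem_nhds hl0)).filter_mono nhdsWithin_le_nhds
    obtain ⟨l', ⟨hl', hl'0⟩, hl0'⟩ := (c2.and self_mem_nhdsWithin).exists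
    exact ⟨l', hl0', L' t ht l' hl'0 hl'⟩
  have I : ∀ ε > 0, ∃ M, a < M ∧ ∀ᶠ n in atTop, ∀ l, M ≤ l → m - ε ≤ θn n l ∧ m - ε ≤ θ l := by
    intro ε hε
    rcases le_or_gt (m - ε) 0 with ht | ht
    · exact ⟨a + 1, by linarith, Eventually.of_forall fun n l _ =>
        ⟨ht.trans (θn0 _ _), ht.trans (θ0 _)⟩⟩
    have c : Tendsto (fun l => φ (l * (m - ε))) atTop (𝓝 m) :=
      hinf.comp (tendsto_id.atTop_mul_const ht)
    obtain ⟨M, h1, h2⟩ := ((c.eventually (lt_mem_nhds (show m - ε < m by linarith))).and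
      (eventually_gt_atTop a)).exists
    exact ⟨M, h2, L' _ ht M (ha.trans h2) h1⟩
  rw [Metric.tendstoUniformlyOn_iff]
  intro ε hε
  obtain ⟨M, haM, hM⟩ := I (ε / 4) (by positivity)
  have loc : TendstoUniformlyOn (fun n lam => θn n lam) θ atTop (Icc a M) := by
    rw [← tendstoLocallyUniformlyOn_iff_tendstoUniformlyOn_of_compact isCompact_Icc,
      Metric.tendstoLocallyUniformlyOn_iff]
    intro ε hε l0 hl0
    have hl00 : 0 < l0 := ha.trans_le hl0.1
    obtain ⟨u, hu, hu2⟩ := U l0 hl00 (ε/4) (by positivity)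
    obtain ⟨v, hv, hv2⟩ := L l0 hl00 (ε/4) (by positivity)
    refine ⟨Ioo (max v 0) u, mem_nhdsWithin_of_mem_nhds (Ioo_mem_nhds (max_lt hv hl00) hu), ?_⟩
    filter_upwards [hu2, hv2] with n h1 h2 l hl
    have b1 := h1 l ((le_max_right _ _).trans_lt hl.1) hl.2.le
    have b2 := h2 l ((le_max_left _ _).trans hl.1.le)
    rw [Real.dist_eq, abs_lt]
    constructor <;> linarith [b1.1, b1.2, b2.1, b2.2]
  filter_upwards [Metric.tendstoUniformlyOn_iff.1 loc ε hε, hM,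
    hm.eventually (gt_mem_nhds (show m < m + ε / 4 by linarith))] with n h1 h2 h3 l hl
  have hl : a < l := hl
  rcases le_total l M with hlM | hlM
  · exact h1 l ⟨hl.le, hlM⟩
  · have b1 := h2 l hlM
    have b2 : θn n l ≤ mn n := by rw [hθn]; exact (hn n).le_m (ha.trans hl)
    have b3 : θ l ≤ m := by rw [hθ]; exact h.le_m (ha.trans hl)
    rw [Real.dist_eq, abs_lt]
    constructor <;> linarith [b1.1, b1.2]

lemma aux_exp_strict (r x : ℝ) (hr : 0 < r) (hr1 : r < 1) (hx : 0 < x) :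
    r * (1 - Real.exp (-x)) < 1 - Real.exp (-(r * x)) := by
  have := strictConvexOn_exp.2 (mem_univ (-x)) (mem_univ 0) (by linarith) hr
    (show 0 < 1 - r by linarith) (by ring)
  simp at this
  linarith

lemma aux_g_int {Ω : Type*} [MeasurableSpace Ω] (P : Measure Ω) [IsProbabilityMeasure P]
    (X : Ω → ℝ) (hX : Measurable X) (hXpos : ∀ᵐ ω ∂P, 0 < X ω)
    (hX2 : Integrable (fun ω => (X ω) ^ 2) P) :
    Integrable X P ∧ ∀ t, 0 ≤ t → Integrable (fun ω => X ω * (1 - Real.exp (-(X ω) * t))) P := by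
  have i1 : Integrable X P :=
    ((memLp_two_iff_integrable_sq hX.aestronglyMeasurable).2 hX2).integrable (by norm_num)
  refine ⟨i1, fun t ht => i1.mono' (by fun_prop) ?_⟩
  filter_upwards [hXpos] with ω hω
  have h1 : Real.exp (-(X ω) * t) ≤ 1 := Real.exp_le_one_iff.2 (by nlinarith)
  have h2 := Real.exp_pos (-(X ω) * t)
  rw [Real.norm_of_nonneg (mul_nonneg hω.le (by linarith))]
  nlinarith

lemma aux_good {Ω : Type*} [MeasurableSpace Ω] (P : Measure Ω) [IsProbabilityMeasure P]
    (X : Ω → ℝ) (hX : Measurable X) (hXpos : ∀ᵐ ω ∂P, 0 < X ω)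
    (hX2 : Integrable (fun ω => (X ω) ^ 2) P) (φ : ℝ → ℝ)
    (hφ : ∀ t, φ t = ∫ ω, X ω * (1 - Real.exp (-(X ω) * t)) ∂P) :
    GoodPhi φ (∫ ω, X ω ∂P) ∧ (∀ r s, 0 < r → r < 1 → 0 < s → r * φ s < φ (r * s)) ∧
    (∀ s, 0 < s → ContinuousAt φ s) ∧ Tendsto φ atTop (𝓝 (∫ ω, X ω ∂P)) := by
  obtain ⟨i1, i2⟩ := aux_g_int P X hX hXpos hX2
  have bd : ∀ t, 0 ≤ t → ∀ᵐ ω ∂P, ‖X ω * (1 - Real.exp (-(X ω) * t))‖ ≤ X ω := by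
    intro t ht
    filter_upwards [hXpos] with ω hω
    have h1 : Real.exp (-(X ω) * t) ≤ 1 := Real.exp_le_one_iff.2 (by nlinarith)
    have h2 := Real.exp_pos (-(X ω) * t)
    rw [Real.norm_of_nonneg (mul_nonneg hω.le (by linarith))]
    nlinarith
  have strict : ∀ r s, 0 < r → r < 1 → 0 < s → r * φ s < φ (r * s) := by
    intro r s hr hr1 hs
    rw [hφ, hφ, ← integral_const_mul]
    have lt : ∀ᵐ ω ∂P, r * (X ω * (1 - Real.exp (-(X ω) * s))) <
        X ω * (1 - Real.exp (-(X ω) * (r * s))) := by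
      filter_upwards [hXpos] with ω hω
      have := aux_exp_strict r (X ω * s) hr hr1 (by positivity)
      have e1 : -(X ω) * s = -(X ω * s) := by ring
      have e2 : -(X ω) * (r * s) = -(r * (X ω * s)) := by ring
      rw [e1, e2]
      nlinarith
    have j1 := (i2 s hs.le).const_mul r
    have j2 := i2 (r * s) (by positivity)
    refine lt_of_le_of_ne (integral_mono_ae j1 j2 (lt.mono fun _ h => h.le)) fun heq => ?_
    have := (integral_eq_iff_of_ae_le j1 j2 (lt.mono fun _ h => h.le)).1 heq
    obtain ⟨ω, h1, h2⟩ := (lt.and this).exists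
    exact h1.ne h2
  refine ⟨⟨?_, ?_, ?_, ?_⟩, strict, ?_, ?_⟩
  · intro s t hs hst
    rw [hφ, hφ]
    refine integral_mono_ae (i2 s hs) (i2 t (hs.trans hst)) ?_
    filter_upwards [hXpos] with ω hω
    have : Real.exp (-(X ω) * t) ≤ Real.exp (-(X ω) * s) := Real.exp_le_exp.2 (by nlinarith)
    nlinarith
  · intro r s hr hr1 hs
    rcases hr1.lt_or_eq with h | h
    · exact (strict r s hr h hs).le
    · subst h; simp
  · intro s hs
    rw [hφ]
    exact integral_mono_ae (i2 s hs) i1 ((bd s hs).mono fun ω h => (le_abs_self _).trans h)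
  · exact integral_nonneg_of_ae (hXpos.mono fun ω h => h.le)
  · intro s hs
    have : φ = fun t => ∫ ω, X ω * (1 - Real.exp (-(X ω) * t)) ∂P := funext hφ
    rw [this]
    refine continuousAt_of_dominated (bound := X) (Eventually.of_forall fun t => by fun_prop) ?_ i1
      (ae_of_all _ fun ω => by fun_prop)
    filter_upwards [lt_mem_nhds hs] with t ht using bd t ht.le
  · have : φ = fun t => ∫ ω, X ω * (1 - Real.exp (-(X ω) * t)) ∂P := funext hφ
    rw [this]
    refine tendsto_integral_filter_of_dominated_convergence (bound := X)
      (Eventually.of_forall fun t => by fun_prop) ?_ i1 ?_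
    · filter_upwards [eventually_ge_atTop 0] with t ht using bd t ht
    · filter_upwards [hXpos] with ω hω
      have h1 : Tendsto (fun t => -(X ω) * t) atTop atBot :=
        tendsto_id.const_mul_atTop_of_neg (by linarith)
      have h2 := (tendsto_const_nhds (x := (1:ℝ))).sub (Real.tendsto_exp_atBot.comp h1)
      simpa using h2.const_mul (X ω)

/-- Under Assumption 1, `sup_{λ > λ_crit} |θ⁽ⁿ⁾(λ) - θ(λ)| → 0` as `n → ∞`. -/
theorem stmt_4
    {Ω : Type*} [MeasurableSpace Ω] (P : Measure Ω) [IsProbabilityMeasure P]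
    (W : Ω → ℝ) (Wn : ℕ → Ω → ℝ)
    (hWmeas : Measurable W) (hWnmeas : ∀ n, Measurable (Wn n))
    (hWpos : ∀ᵐ ω ∂P, 0 < W ω) (hWnpos : ∀ n, ∀ᵐ ω ∂P, 0 < Wn n ω)
    (hdist : ∀ f : BoundedContinuousFunction ℝ ℝ,
      Tendsto (fun n => ∫ ω, f (Wn n ω) ∂P) atTop (𝓝 (∫ ω, f (W ω) ∂P)))
    (hW2 : Integrable (fun ω => (W ω) ^ 2) P)
    (hWn2 : ∀ n, Integrable (fun ω => (Wn n ω) ^ 2) P)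
    (hmom : Tendsto (fun n => ∫ ω, (Wn n ω) ^ 2 ∂P) atTop (𝓝 (∫ ω, (W ω) ^ 2 ∂P)))
    (lamCrit : ℝ) (hlamCrit : lamCrit = (∫ ω, (W ω) ^ 2 ∂P)⁻¹)
    (φ1n : ℕ → ℝ → ℝ)
    (hφ1n : ∀ n t, φ1n n t = ∫ ω, Wn n ω * (1 - Real.exp (-(Wn n ω) * t)) ∂P)
    (φ1 : ℝ → ℝ)
    (hφ1 : ∀ t, φ1 t = ∫ ω, W ω * (1 - Real.exp (-(W ω) * t)) ∂P)
    (θn : ℕ → ℝ → ℝ)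
    (hθn : ∀ n lam, θn n lam = sInf {t : ℝ | 0 < t ∧ φ1n n (lam * t) - t < 0})
    (θ : ℝ → ℝ)
    (hθ : ∀ lam, θ lam = sInf {t : ℝ | 0 < t ∧ φ1 (lam * t) - t < 0}) :
    TendstoUniformlyOn (fun n lam => θn n lam) θ atTop (Ioi lamCrit) := by
  have hpos : 0 < ∫ ω, (W ω) ^ 2 ∂P := by
    refine lt_of_le_of_ne (integral_nonneg fun ω => sq_nonneg _) fun heq => ?_
    have := (integral_eq_zero_iff_of_nonneg (fun ω => sq_nonneg (W ω)) hW2).1 heq.symm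
    obtain ⟨ω, h1, h2⟩ := (hWpos.and this).exists
    simp at h2
    linarith
  obtain ⟨g1, g2, g3, g4⟩ := aux_good P W hWmeas hWpos hW2 φ1 hφ1
  have gn := fun n => (aux_good P (Wn n) (hWnmeas n) (hWnpos n) (hWn2 n) (φ1n n) (hφ1n n)).1
  refine aux_abstract φ1n φ1 _ _ gn g1 g2 g3 g4 ?_ ?_ lamCrit
    (by rw [hlamCrit]; positivity) θn hθn θ hθ
  · intro s hs
    have key := aux_conv_s4 P W Wn hWmeas hWnmeas hdist hW2 hWn2 hmom
      (fun x => |x| * (1 - Real.exp (-|x| * s))) (by fun_prop)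
      (fun x => by
        have : Real.exp (-|x| * s) ≤ 1 := Real.exp_le_one_iff.2 (by nlinarith [abs_nonneg x])
        exact mul_nonneg (abs_nonneg x) (by linarith))
      (fun x => by nlinarith [abs_nonneg x, Real.exp_pos (-|x| * s)])
    have e : ∀ X : Ω → ℝ, (∀ᵐ ω ∂P, 0 < X ω) → ∫ ω, |X ω| * (1 - Real.exp (-|X ω| * s)) ∂P =
        ∫ ω, X ω * (1 - Real.exp (-(X ω) * s)) ∂P := fun X hX =>
      integral_congr_ae (hX.mono fun ω h => by simp only [abs_of_pos h])
    rw [hφ1, ← e W hWpos]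
    refine key.congr fun n => ?_
    rw [hφ1n, ← e _ (hWnpos n)]
  · have key := aux_conv_s4 P W Wn hWmeas hWnmeas hdist hW2 hWn2 hmom
      (fun x => |x|) (by fun_prop) (fun x => abs_nonneg x) (fun x => le_rfl)
    have e : ∀ X : Ω → ℝ, (∀ᵐ ω ∂P, 0 < X ω) → ∫ ω, |X ω| ∂P = ∫ ω, X ω ∂P := fun X hX =>
      integral_congr_ae (hX.mono fun ω h => abs_of_pos h)
    rw [← e W hWpos]
    exact key.congr fun n => e _ (hWnpos n)
end

section
/- sup_{λ > λ_crit} |ρ^{(n)}(λ) − ρ(λ)| → 0 and sup_{λ > λ_crit} |β^{(n)}(λ) − β(λ)| → 0 as n → ∞. -/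
open MeasureTheory Filter Topology Set

structure HypW {Ω : Type*} [MeasurableSpace Ω] (P : Measure Ω)
    (W : Ω → ℝ) (Wn : ℕ → Ω → ℝ) : Prop where
  m : Measurable W
  mn : ∀ n, Measurable (Wn n)
  pos : ∀ᵐ ω ∂P, 0 < W ω
  posn : ∀ n, ∀ᵐ ω ∂P, 0 < Wn n ω
  dist : ∀ f : BoundedContinuousFunction ℝ ℝ,
      Tendsto (fun n => ∫ ω, f (Wn n ω) ∂P) atTop (𝓝 (∫ ω, f (W ω) ∂P))
  i2 : Integrable (fun ω => (W ω) ^ 2) P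
  i2n : ∀ n, Integrable (fun ω => (Wn n ω) ^ 2) P
  mom : Tendsto (fun n => ∫ ω, (Wn n ω) ^ 2 ∂P) atTop (𝓝 (∫ ω, (W ω) ^ 2 ∂P))

section helpers
variable {Ω : Type*} [MeasurableSpace Ω] {P : Measure Ω} [IsProbabilityMeasure P]
  {W : Ω → ℝ} {Wn : ℕ → Ω → ℝ}

lemma HypW.const (h : HypW P W Wn) : HypW P W (fun _ => W) :=
  ⟨h.m, fun _ => h.m, h.pos, fun _ => h.pos, fun _ => tendsto_const_nhds, h.i2,
    fun _ => h.i2, tendsto_const_nhds⟩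

lemma HypW.const' (h : HypW P W Wn) (n : ℕ) : HypW P (Wn n) (fun _ => Wn n) :=
  ⟨h.mn n, fun _ => h.mn n, h.posn n, fun _ => h.posn n, fun _ => tendsto_const_nhds, h.i2n n,
    fun _ => h.i2n n, tendsto_const_nhds⟩

lemma integ_growth {X : Ω → ℝ} (hX : Measurable X) (h2 : Integrable (fun ω => (X ω) ^ 2) P)
    {f : ℝ → ℝ} (hf : Continuous f) {C : ℝ} (hb : ∀ w, |f w| ≤ C * (1 + w ^ 2)) :
    Integrable (fun ω => f (X ω)) P := by
  refine Integrable.mono' (g := fun ω => C * (1 + X ω ^ 2)) ?_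
    (hf.measurable.comp hX).aestronglyMeasurable (Eventually.of_forall fun ω => ?_)
  · exact ((integrable_const 1).add h2).const_mul C
  · simpa using hb (X ω)

lemma fatou_like (h : HypW P W Wn) {g : ℝ → ℝ} (hg : Continuous g) (hg0 : ∀ w, 0 ≤ g w)
    {C : ℝ} (hb : ∀ w, |g w| ≤ C * (1 + w ^ 2)) {ε : ℝ} (hε : 0 < ε) :
    ∀ᶠ n in atTop, ∫ ω, g (W ω) ∂P - ε < ∫ ω, g (Wn n ω) ∂P := by
  have hi := integ_growth h.m h.i2 hg hb
  have hin := fun n => integ_growth (h.mn n) (h.i2n n) hg hb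
  have hlim : Tendsto (fun K : ℕ => ∫ ω, min (g (W ω)) K ∂P) atTop
      (𝓝 (∫ ω, g (W ω) ∂P)) := by
    refine tendsto_integral_of_dominated_convergence (fun ω => g (W ω)) ?_ hi ?_ ?_
    · intro K
      exact ((hg.measurable.comp h.m).min measurable_const).aestronglyMeasurable
    · intro K
      refine Eventually.of_forall fun ω => ?_
      rw [Real.norm_eq_abs, abs_of_nonneg (le_min (hg0 _) (by positivity))]
      exact min_le_left _ _
    · refine Eventually.of_forall fun ω => ?_
      refine tendsto_const_nhds.congr' ?_
      filter_upwards [eventually_ge_atTop (Nat.ceil (g (W ω)))] with K hK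
      rw [min_eq_left]
      exact Nat.ceil_le.mp hK
  obtain ⟨K, hK⟩ := (hlim.eventually (lt_mem_nhds (sub_lt_self _ hε))).exists
  let f : BoundedContinuousFunction ℝ ℝ :=
    BoundedContinuousFunction.ofNormedAddCommGroup (fun w => min (g w) (K : ℝ))
      (hg.min continuous_const) K (by
        intro w
        rw [Real.norm_eq_abs, abs_of_nonneg (le_min (hg0 _) (by positivity))]
        exact min_le_right _ _)
  have := h.dist f
  filter_upwards [this.eventually (lt_mem_nhds (show _ < ∫ ω, f (W ω) ∂P from hK))] with n hn
  refine hn.trans_le (integral_mono ?_ (hin n) fun ω => min_le_left _ _)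
  exact Integrable.mono' (hin n)
    ((hg.measurable.comp (h.mn n)).min measurable_const).aestronglyMeasurable
    (Eventually.of_forall fun ω => by
      simp only [f]
      rw [Real.norm_eq_abs]
      show |min (g (Wn n ω)) (K:ℝ)| ≤ _
      rw [abs_of_nonneg (le_min (hg0 _) (by positivity))]
      exact min_le_left _ _)

lemma conv_growth (h : HypW P W Wn) {f : ℝ → ℝ} (hf : Continuous f)
    (hb : ∀ w, |f w| ≤ 1 + w ^ 2) :
    Tendsto (fun n => ∫ ω, f (Wn n ω) ∂P) atTop (𝓝 (∫ ω, f (W ω) ∂P)) := by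
  have hi := integ_growth h.m h.i2 hf (C := 1) (by simpa using hb)
  have hin := fun n => integ_growth (h.mn n) (h.i2n n) hf (C := 1) (by simpa using hb)
  have e1 : ∀ X : Ω → ℝ, Integrable (fun ω => (X ω) ^ 2) P → Integrable (fun ω => f (X ω)) P →
      ∫ ω, (1 + X ω ^ 2 + f (X ω)) ∂P = 1 + ∫ ω, X ω ^ 2 ∂P + ∫ ω, f (X ω) ∂P := by
    intro X h2 hf
    have h12 : Integrable (fun ω => 1 + X ω ^ 2) P := (integrable_const 1).add h2
    rw [integral_add h12 hf, integral_add (integrable_const 1) h2]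
    simp
  have e2 : ∀ X : Ω → ℝ, Integrable (fun ω => (X ω) ^ 2) P → Integrable (fun ω => f (X ω)) P →
      ∫ ω, (1 + X ω ^ 2 - f (X ω)) ∂P = 1 + ∫ ω, X ω ^ 2 ∂P - ∫ ω, f (X ω) ∂P := by
    intro X h2 hf
    have h12 : Integrable (fun ω => 1 + X ω ^ 2) P := (integrable_const 1).add h2
    rw [integral_sub h12 hf, integral_add (integrable_const 1) h2]
    simp
  rw [Metric.tendsto_atTop']
  intro ε hε
  have f1 := fatou_like h (g := fun w => 1 + w ^ 2 + f w) (by fun_prop)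
    (fun w => by have := abs_le.1 (hb w); linarith) (C := 2)
    (fun w => by
      have := abs_le.1 (hb w)
      rw [abs_le]; constructor <;> nlinarith [sq_nonneg w]) (half_pos hε)
  have f2 := fatou_like h (g := fun w => 1 + w ^ 2 - f w) (by fun_prop)
    (fun w => by have := abs_le.1 (hb w); linarith) (C := 2)
    (fun w => by
      have := abs_le.1 (hb w)
      rw [abs_le]; constructor <;> nlinarith [sq_nonneg w]) (half_pos hε)
  have f3 := (Metric.tendsto_nhds.1 h.mom) (ε / 2) (half_pos hε)
  obtain ⟨N, hN⟩ := eventually_atTop.1 (f1.and (f2.and f3))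
  refine ⟨N, fun n hn => ?_⟩
  obtain ⟨a, b, c⟩ := hN n hn.le
  rw [e1 _ h.i2 hi, e1 _ (h.i2n n) (hin n)] at a
  rw [e2 _ h.i2 hi, e2 _ (h.i2n n) (hin n)] at b
  rw [Real.dist_eq, abs_lt] at c ⊢
  constructor <;> linarith

lemma D_zero (h : HypW P W Wn) : Tendsto (fun j : ℕ =>
    ∫ ω, (1 + W ω ^ 2) * min (|W ω| * (1 / ((j : ℝ) + 1))) 1 ∂P) atTop (𝓝 0) := by
  have : (0 : ℝ) = ∫ ω, (0 : ℝ) ∂P := by simp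
  rw [this]
  have h12 : Integrable (fun ω => 1 + W ω ^ 2) P := (integrable_const 1).add h.i2
  refine tendsto_integral_of_dominated_convergence (fun ω => 1 + W ω ^ 2) ?_ h12 ?_ ?_
  · intro j
    have := h.m
    exact Measurable.aestronglyMeasurable (by fun_prop)
  · intro j
    refine Eventually.of_forall fun ω => ?_
    have h1 : 0 ≤ min (|W ω| * (1 / ((j : ℝ) + 1))) 1 := le_min (by positivity) zero_le_one
    have h2 : min (|W ω| * (1 / ((j : ℝ) + 1))) 1 ≤ 1 := min_le_right _ _
    rw [Real.norm_eq_abs, abs_of_nonneg (by positivity)]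
    exact mul_le_of_le_one_right (by positivity) h2
  · refine Eventually.of_forall fun ω => ?_
    have h1 : Tendsto (fun j : ℕ => |W ω| * (1 / ((j : ℝ) + 1))) atTop (𝓝 (|W ω| * 0)) :=
      tendsto_one_div_add_atTop_nhds_zero_nat.const_mul _
    have h2 := (h1.min (tendsto_const_nhds (x := (1:ℝ)))).const_mul (1 + W ω ^ 2)
    simpa using h2

noncomputable def KK (P : Measure Ω) (X : Ω → ℝ) (k : ℝ → ℝ) (s : ℝ) : ℝ :=
  ∫ ω, k (X ω) * Real.exp (-(X ω) * s) ∂P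

lemma KK_int {X : Ω → ℝ} (hX : Measurable X) (h0 : ∀ᵐ ω ∂P, 0 < X ω)
    (h2 : Integrable (fun ω => (X ω) ^ 2) P)
    {k : ℝ → ℝ} (hk : Continuous k) (hb : ∀ w, |k w| ≤ 1 + w ^ 2) {s : ℝ} (hs : 0 ≤ s) :
    Integrable (fun ω => k (X ω) * Real.exp (-(X ω) * s)) P := by
  have h12 : Integrable (fun ω => 1 + X ω ^ 2) P := (integrable_const 1).add h2
  refine Integrable.mono' h12 ?_ ?_
  · have := hk.measurable
    exact Measurable.aestronglyMeasurable (by fun_prop)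
  · filter_upwards [h0] with ω hω
    rw [Real.norm_eq_abs, abs_mul, Real.abs_exp]
    have : Real.exp (-(X ω) * s) ≤ 1 := Real.exp_le_one_iff.2 (by nlinarith [mul_nonneg hω.le hs])
    calc _ ≤ |k (X ω)| * 1 := by gcongr
      _ ≤ _ := by simpa using hb (X ω)

lemma exp_diff {w s y : ℝ} (hw : 0 ≤ w) (hs : 0 ≤ s) (hy : 0 ≤ y) :
    |Real.exp (-w * s) - Real.exp (-w * y)| ≤ min (w * |s - y|) 1 := by
  wlog hsy : s ≤ y generalizing s y
  · rw [abs_sub_comm, abs_sub_comm s y]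
    exact this hy hs (le_of_not_ge hsy)
  have hle : Real.exp (-w * y) ≤ Real.exp (-w * s) := by
    apply Real.exp_le_exp.2; nlinarith
  have h1 : Real.exp (-w * s) ≤ 1 := Real.exp_le_one_iff.2 (by nlinarith)
  have h2 := Real.exp_pos (-w * y)
  rw [abs_of_nonneg (by linarith), abs_of_nonpos (by linarith)]
  refine le_min ?_ (by linarith)
  have h3 : Real.exp (-w * y) = Real.exp (-w * s) * Real.exp (-(w * (y - s))) := by
    rw [← Real.exp_add]; ring_nf
  have h4 := Real.add_one_le_exp (-(w * (y - s)))
  have h5 : 0 ≤ w * (y - s) := mul_nonneg hw (by linarith)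
  have h6 := Real.exp_pos (-w * s)
  rw [h3]
  nlinarith

lemma KK_conv (h : HypW P W Wn) {k : ℝ → ℝ} (hk : Continuous k) (hb : ∀ w, |k w| ≤ 1 + w ^ 2)
    {ι : Type*} {l : Filter ι} {N : ι → ℕ} (hN : Tendsto N l atTop) {s : ι → ℝ} {y : ℝ}
    (hs0 : ∀ i, 0 ≤ s i) (hy : 0 ≤ y) (hs : Tendsto s l (𝓝 y)) :
    Tendsto (fun i => KK P (Wn (N i)) k (s i)) l (𝓝 (KK P W k y)) := by
  -- convergence at the fixed point
  have c1 : Tendsto (fun n => KK P (Wn n) k y) atTop (𝓝 (KK P W k y)) := by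
    have e : ∀ X : Ω → ℝ, (∀ᵐ ω ∂P, 0 < X ω) →
        ∫ ω, k (X ω) * Real.exp (-|X ω| * y) ∂P = KK P X k y := by
      intro X hX
      refine integral_congr_ae ?_
      filter_upwards [hX] with ω hω
      rw [abs_of_pos hω]
    have := conv_growth h (f := fun w => k w * Real.exp (-|w| * y)) (by fun_prop) (by
      intro w
      rw [abs_mul, Real.abs_exp]
      have : Real.exp (-|w| * y) ≤ 1 :=
        Real.exp_le_one_iff.2 (by nlinarith [mul_nonneg (abs_nonneg w) hy])
      calc _ ≤ |k w| * 1 := by gcongr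
        _ ≤ _ := by simpa using hb w)
    simp only [e _ h.pos, e _ (h.posn _)] at this
    exact this
  rw [Metric.tendsto_nhds]
  intro δ hδ
  obtain ⟨j, hj⟩ := ((D_zero h).eventually (gt_mem_nhds (half_pos hδ))).exists
  set ε : ℝ := 1 / ((j : ℝ) + 1) with hε
  have hεp : 0 < ε := by positivity
  have hbD : ∀ w : ℝ, |(1 + w ^ 2) * min (|w| * ε) 1| ≤ 1 + w ^ 2 := by
    intro w
    have h1 : 0 ≤ min (|w| * ε) 1 := le_min (by positivity) zero_le_one
    rw [abs_of_nonneg (by positivity)]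
    exact mul_le_of_le_one_right (by positivity) (min_le_right _ _)
  have c2 := conv_growth h (f := fun w => (1 + w ^ 2) * min (|w| * ε) 1) (by fun_prop) hbD
  filter_upwards [hN.eventually (c2.eventually (gt_mem_nhds hj)),
    hN.eventually (Metric.tendsto_nhds.1 c1 _ (half_pos hδ)), Metric.tendsto_nhds.1 hs ε hεp]
    with i a b c
  have key : |KK P (Wn (N i)) k (s i) - KK P (Wn (N i)) k y| ≤
      ∫ ω, (1 + Wn (N i) ω ^ 2) * min (|Wn (N i) ω| * ε) 1 ∂P := by
    unfold KK
    rw [← integral_sub (KK_int (h.mn _) (h.posn _) (h.i2n _) hk hb (hs0 i))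
      (KK_int (h.mn _) (h.posn _) (h.i2n _) hk hb hy), ← Real.norm_eq_abs]
    refine norm_integral_le_of_norm_le
      (integ_growth (h.mn _) (h.i2n _) (f := fun w => (1 + w ^ 2) * min (|w| * ε) 1)
        (by fun_prop) (C := 1) (by simpa using hbD)) ?_
    filter_upwards [h.posn (N i)] with ω hω
    rw [← mul_sub, Real.norm_eq_abs, abs_mul]
    refine mul_le_mul (hb _) ((exp_diff hω.le (hs0 i) hy).trans ?_) (abs_nonneg _) (by positivity)
    rw [abs_of_pos hω]
    refine min_le_min_right _ (mul_le_mul_of_nonneg_left ?_ hω.le)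
    rw [Real.dist_eq] at c
    exact c.le
  rw [Real.dist_eq] at b ⊢
  have := abs_sub_le (KK P (Wn (N i)) k (s i)) (KK P (Wn (N i)) k y) (KK P W k y)
  linarith

lemma KK_infty (h : HypW P W Wn) {k : ℝ → ℝ} (hk : Continuous k) (hb : ∀ w, |k w| ≤ 1 + w ^ 2)
    (hk0 : ∀ w, 0 ≤ k w)
    {ι : Type*} {l : Filter ι} {N : ι → ℕ} (hN : Tendsto N l atTop) {s : ι → ℝ}
    (hs : Tendsto s l atTop) :
    Tendsto (fun i => KK P (Wn (N i)) k (s i)) l (𝓝 0) := by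
  have c0 : Tendsto (fun j : ℕ => KK P W k j) atTop (𝓝 0) := by
    have : (0 : ℝ) = ∫ ω, (0 : ℝ) ∂P := by simp
    rw [this]
    unfold KK
    have h12 : Integrable (fun ω => 1 + W ω ^ 2) P := (integrable_const 1).add h.i2
    refine tendsto_integral_of_dominated_convergence (fun ω => 1 + W ω ^ 2) ?_ h12 ?_ ?_
    · intro j
      exact (KK_int h.m h.pos h.i2 hk hb (Nat.cast_nonneg j)).1
    · intro j
      filter_upwards [h.pos] with ω hω
      rw [Real.norm_eq_abs, abs_mul, Real.abs_exp]
      have : Real.exp (-(W ω) * j) ≤ 1 := Real.exp_le_one_iff.2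
        (by nlinarith [mul_nonneg hω.le (Nat.cast_nonneg (α := ℝ) j)])
      calc _ ≤ |k (W ω)| * 1 := by gcongr
        _ ≤ _ := by simpa using hb (W ω)
    · filter_upwards [h.pos] with ω hω
      have h1 : Tendsto (fun j : ℕ => -(W ω) * (j : ℝ)) atTop atBot :=
        tendsto_natCast_atTop_atTop.const_mul_atTop_of_neg (by linarith)
      simpa using (Real.tendsto_exp_atBot.comp h1).const_mul (k (W ω))
  rw [Metric.tendsto_nhds]
  intro δ hδ
  obtain ⟨j, hj⟩ := (c0.eventually (gt_mem_nhds hδ)).exists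
  have c1 := KK_conv h hk hb hN (s := fun _ => (j : ℝ)) (fun _ => Nat.cast_nonneg j)
    (Nat.cast_nonneg j) tendsto_const_nhds
  filter_upwards [c1.eventually (gt_mem_nhds hj), hs.eventually_ge_atTop (j : ℝ)] with i a b
  have hj0 : (0 : ℝ) ≤ j := Nat.cast_nonneg j
  rw [Real.dist_eq, sub_zero, abs_of_nonneg]
  · refine lt_of_le_of_lt ?_ a
    refine integral_mono_ae (KK_int (h.mn _) (h.posn _) (h.i2n _) hk hb (hj0.trans b))
      (KK_int (h.mn _) (h.posn _) (h.i2n _) hk hb hj0) ?_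
    filter_upwards [h.posn (N i)] with ω hω
    refine mul_le_mul_of_nonneg_left (Real.exp_le_exp.2 ?_) (hk0 _)
    nlinarith
  · exact integral_nonneg fun ω => mul_nonneg (hk0 _) (Real.exp_pos _).le

noncomputable def Phi (P : Measure Ω) (X : Ω → ℝ) (s : ℝ) : ℝ :=
  ∫ ω, X ω * (1 - Real.exp (-(X ω) * s)) ∂P

lemma absb (w : ℝ) : |(|w|)| ≤ 1 + w ^ 2 := by
  rw [abs_abs, ← sq_abs w]; nlinarith [sq_nonneg (|w| - 1), abs_nonneg w]

lemma sqb (w : ℝ) : |w ^ 2| ≤ 1 + w ^ 2 := by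
  rw [abs_of_nonneg (sq_nonneg w)]; linarith

lemma oneb (w : ℝ) : |(1 : ℝ)| ≤ 1 + w ^ 2 := by
  rw [abs_one]; nlinarith [sq_nonneg w]

lemma KK_nonneg (X : Ω → ℝ) {k : ℝ → ℝ} (hk0 : ∀ w, 0 ≤ k w) (s : ℝ) : 0 ≤ KK P X k s :=
  integral_nonneg fun ω => mul_nonneg (hk0 _) (Real.exp_pos _).le

section single
variable {X : Ω → ℝ} (hX : Measurable X) (h0 : ∀ᵐ ω ∂P, 0 < X ω)
    (h2 : Integrable (fun ω => (X ω) ^ 2) P)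

lemma Phi_int (hX : Measurable X) (h0 : ∀ᵐ ω ∂P, 0 < X ω)
    (h2 : Integrable (fun ω => (X ω) ^ 2) P) {s : ℝ} (hs : 0 ≤ s) :
    Integrable (fun ω => X ω * (1 - Real.exp (-(X ω) * s))) P := by
  refine ((KK_int hX h0 h2 continuous_abs absb le_rfl).sub
    (KK_int hX h0 h2 continuous_abs absb hs)).congr ?_
  filter_upwards [h0] with ω hω
  simp [abs_of_pos hω]; ring

lemma Phi_eq (hX : Measurable X) (h0 : ∀ᵐ ω ∂P, 0 < X ω)
    (h2 : Integrable (fun ω => (X ω) ^ 2) P) {s : ℝ} (hs : 0 ≤ s) :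
    Phi P X s = KK P X abs 0 - KK P X abs s := by
  unfold KK Phi
  rw [← integral_sub (KK_int hX h0 h2 continuous_abs absb le_rfl)
    (KK_int hX h0 h2 continuous_abs absb hs)]
  refine integral_congr_ae ?_
  filter_upwards [h0] with ω hω
  simp [abs_of_pos hω]; ring

lemma integral_lt_of_ae {f g : Ω → ℝ} (hf : Integrable f P) (hg : Integrable g P)
    (h : ∀ᵐ ω ∂P, f ω < g ω) : ∫ ω, f ω ∂P < ∫ ω, g ω ∂P := by
  have h1 : 0 < ∫ ω, (g ω - f ω) ∂P := by
    rw [integral_pos_iff_support_of_nonneg_ae (h.mono fun ω hω => by simpa using hω.le)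
      (show Integrable (fun ω => g ω - f ω) P from hg.sub hf)]
    have : P (Function.support fun ω => g ω - f ω) = 1 := by
      rw [← measure_univ (μ := P)]
      refine measure_congr (eventuallyEq_univ.2 ?_)
      filter_upwards [h] with ω hω
      simp only [Function.mem_support]
      linarith
    rw [this]; exact one_pos
  rw [integral_sub hg hf] at h1
  linarith

lemma Phi_strict (hX : Measurable X) (h0 : ∀ᵐ ω ∂P, 0 < X ω)
    (h2 : Integrable (fun ω => (X ω) ^ 2) P) {a b : ℝ} (ha : 0 < a) (hab : a < b) :
    Phi P X b * a < Phi P X a * b := by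
  unfold Phi
  rw [← integral_mul_const, ← integral_mul_const]
  refine integral_lt_of_ae ((Phi_int hX h0 h2 (ha.trans hab).le).mul_const _)
    ((Phi_int hX h0 h2 ha.le).mul_const _) ?_
  filter_upwards [h0] with ω hω
  have hb := ha.trans hab
  have h := strictConvexOn_exp.2 (mem_univ (-(X ω) * b)) (mem_univ (0:ℝ))
    (by nlinarith [mul_pos hω hb]) (show 0 < a / b by positivity)
    (show 0 < 1 - a / b by rw [sub_pos, div_lt_one hb]; exact hab) (by ring)
  have e : (a / b) • (-(X ω) * b) + (1 - a / b) • (0:ℝ) = -(X ω) * a := by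
    simp only [smul_eq_mul]; field_simp; ring
  rw [e] at h
  simp only [smul_eq_mul, Real.exp_zero, mul_one] at h
  have h' : Real.exp (-(X ω) * a) * b < a * Real.exp (-(X ω) * b) + (b - a) := by
    calc _ < (a / b * Real.exp (-(X ω) * b) + (1 - a / b)) * b := by gcongr
      _ = _ := by field_simp
  nlinarith

lemma Phi_ge (hX : Measurable X) (h0 : ∀ᵐ ω ∂P, 0 < X ω)
    (h2 : Integrable (fun ω => (X ω) ^ 2) P) {s : ℝ} (hs : 0 ≤ s) :
    s * KK P X (fun w => w ^ 2) s ≤ Phi P X s := by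
  unfold KK Phi
  rw [← integral_const_mul]
  refine integral_mono_ae ((KK_int hX h0 h2 (by fun_prop) sqb hs).const_mul s)
    (Phi_int hX h0 h2 hs) ?_
  filter_upwards [h0] with ω hω
  have h1 := Real.add_one_le_exp (X ω * s)
  have h3 : Real.exp (X ω * s) * Real.exp (-(X ω) * s) = 1 := by
    rw [← Real.exp_add]; simp
  have h4 := Real.exp_pos (-(X ω) * s)
  have h5 : X ω * s * Real.exp (-(X ω) * s) ≤ 1 - Real.exp (-(X ω) * s) := by nlinarith
  show s * (X ω ^ 2 * _) ≤ _
  nlinarith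

lemma KK_sq_pos (hX : Measurable X) (h0 : ∀ᵐ ω ∂P, 0 < X ω)
    (h2 : Integrable (fun ω => (X ω) ^ 2) P) {s : ℝ} (hs : 0 ≤ s) :
    0 < KK P X (fun w => w ^ 2) s := by
  have := integral_lt_of_ae (integrable_zero Ω ℝ P) (KK_int hX h0 h2 (by fun_prop) sqb hs)
    (by filter_upwards [h0] with ω hω; positivity)
  simpa [KK] using this

lemma KK_abs_pos (hX : Measurable X) (h0 : ∀ᵐ ω ∂P, 0 < X ω)
    (h2 : Integrable (fun ω => (X ω) ^ 2) P) {s : ℝ} (hs : 0 ≤ s) :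
    0 < KK P X abs s := by
  have := integral_lt_of_ae (integrable_zero Ω ℝ P) (KK_int hX h0 h2 continuous_abs absb hs)
    (by filter_upwards [h0] with ω hω; positivity)
  simpa [KK] using this

noncomputable def XX (P : Measure Ω) (X : Ω → ℝ) (lam : ℝ) : ℝ :=
  lam * sInf {t : ℝ | 0 < t ∧ Phi P X (lam * t) - t < 0}

lemma XX_nonneg {lam : ℝ} (hl : 0 < lam) : 0 ≤ XX P X lam :=
  mul_nonneg hl.le (Real.sInf_nonneg fun _ ht => ht.1.le)

lemma XX_gt {lam s : ℝ} (hl : 0 < lam) (hs : 0 < s) (h : s < XX P X lam) :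
    s ≤ lam * Phi P X s := by
  by_contra! hc
  have : sInf {t : ℝ | 0 < t ∧ Phi P X (lam * t) - t < 0} ≤ s / lam := by
    refine csInf_le ⟨0, fun t ht => ht.1.le⟩ ⟨by positivity, ?_⟩
    rw [mul_div_cancel₀ _ hl.ne', sub_neg, lt_div_iff₀ hl]
    linarith
  rw [le_div_iff₀ hl] at this
  unfold XX at h
  linarith

lemma XX_lt (hX : Measurable X) (h0 : ∀ᵐ ω ∂P, 0 < X ω)
    (h2 : Integrable (fun ω => (X ω) ^ 2) P) {lam s : ℝ} (hl : 0 < lam) (hs : 0 < s)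
    (h : XX P X lam < s) : lam * Phi P X s < s := by
  by_contra! hc
  have : s / lam ≤ sInf {t : ℝ | 0 < t ∧ Phi P X (lam * t) - t < 0} := by
    refine le_csInf ⟨KK P X abs 0 + 1, ?_, ?_⟩ ?_
    · linarith [KK_nonneg (P := P) X (k := abs) abs_nonneg 0]
    · have := KK_nonneg (P := P) X (k := abs) abs_nonneg 0
      rw [Phi_eq hX h0 h2 (by positivity)]
      linarith [KK_nonneg (P := P) X (k := abs) abs_nonneg (lam * (KK P X abs 0 + 1))]
    · rintro t ⟨ht, ht'⟩
      by_contra! hts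
      rw [lt_div_iff₀ hl, mul_comm] at hts
      have := Phi_strict hX h0 h2 (mul_pos hl ht) hts
      have h3 : lam * (Phi P X (lam * t) * s) < lam * (t * s) := by
        apply mul_lt_mul_of_pos_left _ hl
        apply mul_lt_mul_of_pos_right _ hs
        linarith
      nlinarith [mul_pos hl ht, mul_lt_mul_of_pos_left this hl,
        mul_le_mul_of_nonneg_left hc (mul_pos hl ht).le]
  rw [div_le_iff₀ hl] at this
  unfold XX at h
  linarith
end single

lemma Phi_conv (h : HypW P W Wn) {s : ℝ} (hs : 0 ≤ s) :
    Tendsto (fun n => Phi P (Wn n) s) atTop (𝓝 (Phi P W s)) := by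
  rw [Phi_eq h.m h.pos h.i2 hs]
  simp_rw [Phi_eq (h.mn _) (h.posn _) (h.i2n _) hs]
  exact (KK_conv h continuous_abs absb tendsto_id (s := fun _ => 0) (fun _ => le_rfl) le_rfl
    tendsto_const_nhds).sub (KK_conv h continuous_abs absb tendsto_id (s := fun _ => s)
    (fun _ => hs) hs tendsto_const_nhds)

lemma sandwich (h : HypW P W Wn) {a b : ℝ} (ha : 0 < a) (hab : a < b) :
    ∀ᶠ n in atTop, ∀ lam : ℝ, 0 < lam →
      (b < XX P W lam → a ≤ XX P (Wn n) lam) ∧ (XX P W lam < a → XX P (Wn n) lam ≤ b) := by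
  have hb := ha.trans hab
  have hst := Phi_strict h.m h.pos h.i2 ha hab
  have c1 := ((Phi_conv h ha.le).mul_const b).eventually (lt_mem_nhds hst)
  have c2 := ((Phi_conv h hb.le).mul_const a).eventually (gt_mem_nhds hst)
  filter_upwards [c1, c2] with n d1 d2 lam hl
  constructor
  · intro hx
    by_contra! hc
    have e1 := XX_lt (h.mn n) (h.posn n) (h.i2n n) hl ha hc
    have e2 := XX_gt hl hb hx
    have := mul_lt_mul_of_pos_left d1 hl
    nlinarith
  · intro hx
    by_contra! hc
    have e1 := XX_lt h.m h.pos h.i2 hl ha hx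
    have e2 := XX_gt hl hb hc
    have := mul_lt_mul_of_pos_left d2 hl
    nlinarith

/-- limit of `λ E[W_n² exp(-W_n x_n)]` when `x_n → ∞` -/
lemma beta_infty (h : HypW P W Wn)
    {ι : Type*} {l : Filter ι} {N : ι → ℕ} (hN : Tendsto N l atTop) {lam : ι → ℝ}
    (hl : ∀ᶠ i in l, 0 < lam i)
    (hx : Tendsto (fun i => XX P (Wn (N i)) (lam i)) l atTop) :
    Tendsto (fun i => lam i * KK P (Wn (N i)) (fun w => w ^ 2) (XX P (Wn (N i)) (lam i))) l
      (𝓝 0) := by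
  set x := fun i => XX P (Wn (N i)) (lam i) with hxdef
  have t1 := KK_infty h continuous_abs absb abs_nonneg hN (hx.atTop_mul_const (half_pos one_pos))
  have t2 := KK_infty h continuous_abs absb abs_nonneg hN (hx.atTop_mul_const two_pos)
  have t3 := KK_conv h continuous_abs absb hN (s := fun _ => 0) (fun _ => le_rfl) le_rfl
    tendsto_const_nhds
  have hpos := KK_abs_pos h.m h.pos h.i2 (le_refl 0)
  have t4 := (t1.const_mul 2).div (t3.sub t2) (by simpa using hpos.ne')
  simp only [mul_zero, zero_div] at t4
  have t5 := (t3.sub t2).eventually (lt_mem_nhds (show 0 < _ by simpa using hpos))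
  refine squeeze_zero' ?_ ?_ t4
  · filter_upwards [hl] with i hi
    exact mul_nonneg hi.le (KK_nonneg _ (fun w => sq_nonneg w) _)
  · filter_upwards [hl, t5, hx.eventually_gt_atTop 0] with i hi h5 hxi
    have hlt : XX P (Wn (N i)) (lam i) < x i * 2 := by
      show x i < _
      linarith
    have e1 := XX_lt (h.mn _) (h.posn _) (h.i2n _) hi (by positivity) hlt
    rw [Phi_eq (h.mn _) (h.posn _) (h.i2n _) (by positivity)] at e1
    have e2 : x i * KK P (Wn (N i)) (fun w => w ^ 2) (x i) ≤
        KK P (Wn (N i)) abs (x i * (1 / 2)) := by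
      unfold KK
      rw [← integral_const_mul]
      refine integral_mono_ae
        ((KK_int (h.mn _) (h.posn _) (h.i2n _) (by fun_prop) sqb hxi.le).const_mul _)
        (KK_int (h.mn _) (h.posn _) (h.i2n _) continuous_abs absb (by positivity)) ?_
      filter_upwards [h.posn (N i)] with ω hω
      show x i * (Wn (N i) ω ^ 2 * _) ≤ _
      rw [abs_of_pos hω]
      generalize Wn (N i) ω = w at hω
      have hu : 0 < w * x i := mul_pos hω hxi
      have q := Real.quadratic_le_exp_of_nonneg (x := w * x i / 2) (by positivity)
      have q2 : w * x i ≤ Real.exp (w * x i / 2) := by nlinarith [sq_nonneg (w * x i - 2)]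
      have q3 : Real.exp (-w * (x i * (1 / 2))) =
          Real.exp (w * x i / 2) * Real.exp (-w * x i) := by
        rw [← Real.exp_add]; ring_nf
      rw [q3]
      have q4 := Real.exp_pos (-w * x i)
      calc x i * (w ^ 2 * Real.exp (-w * x i)) = w * ((w * x i) * Real.exp (-w * x i)) := by ring
        _ ≤ _ := by gcongr
    rw [Pi.div_apply, le_div_iff₀ h5]
    have e3 := KK_nonneg (P := P) (Wn (N i)) (k := fun w => w ^ 2) (fun w => sq_nonneg w) (x i)
    calc _ = (lam i * (KK P (Wn (N i)) abs 0 - KK P (Wn (N i)) abs (x i * 2))) *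
          KK P (Wn (N i)) (fun w => w ^ 2) (x i) := by ring
      _ ≤ x i * 2 * KK P (Wn (N i)) (fun w => w ^ 2) (x i) := by gcongr
      _ ≤ _ := by linarith

lemma ultra_dich {ι : Type*} (U : Ultrafilter ι) (x : ι → ℝ) (hx : ∀ᶠ i in (U : Filter ι), 0 ≤ x i) :
    Tendsto x U atTop ∨ ∃ y, 0 ≤ y ∧ Tendsto x U (𝓝 y) := by
  by_cases hc : Tendsto x U atTop
  · exact Or.inl hc
  right
  rw [tendsto_atTop] at hc
  push Not at hc
  obtain ⟨c, hc⟩ := hc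
  have hc' : ∀ᶠ i in (U : Filter ι), x i ∈ Icc 0 c := by
    filter_upwards [hx, (hc : ∀ᶠ i in (U : Filter ι), x i < c)] with i a b
    exact ⟨a, b.le⟩
  obtain ⟨y, hy, hy'⟩ := (isCompact_Icc (a := (0:ℝ)) (b := c)).ultrafilter_le_nhds' (U.map x) hc'
  exact ⟨y, hy.1, hy'⟩

lemma main_ultra (h : HypW P W Wn) (U : Ultrafilter (ℕ × ℝ))
    (hN : Tendsto Prod.fst (U : Filter (ℕ × ℝ)) atTop)
    (hl : ∀ᶠ q in (U : Filter (ℕ × ℝ)), 0 < q.2) :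
    Tendsto (fun q : ℕ × ℝ => KK P W (fun _ => 1) (XX P W q.2) -
      KK P (Wn q.1) (fun _ => 1) (XX P (Wn q.1) q.2)) U (𝓝 0) ∧
    Tendsto (fun q : ℕ × ℝ => q.2 * KK P W (fun w => w ^ 2) (XX P W q.2) -
      q.2 * KK P (Wn q.1) (fun w => w ^ 2) (XX P (Wn q.1) q.2)) U (𝓝 0) := by
  have hc1 : Continuous (fun _ : ℝ => (1:ℝ)) := continuous_const
  have hc2 : Continuous (fun w : ℝ => w ^ 2) := by fun_prop
  rcases ultra_dich U (fun q => XX P W q.2) (hl.mono fun q hq => XX_nonneg hq) with hx | ⟨y, hy, hx⟩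
  · have hxn : Tendsto (fun q : ℕ × ℝ => XX P (Wn q.1) q.2) U atTop := by
      rw [tendsto_atTop]
      intro c
      filter_upwards [hN.eventually (sandwich h (a := max c 1) (b := max c 1 + 1)
        (by positivity) (by linarith)), hl, hx.eventually_gt_atTop (max c 1 + 1)] with q s1 s2 s3
      exact (le_max_left _ _).trans ((s1 q.2 s2).1 s3)
    constructor
    · simpa using (KK_infty h.const hc1 oneb (fun _ => zero_le_one) hN hx).sub
        (KK_infty h hc1 oneb (fun _ => zero_le_one) hN hxn)
    · simpa using (beta_infty h.const hN hl hx).sub (beta_infty h hN hl hxn)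
  · have hxn : Tendsto (fun q : ℕ × ℝ => XX P (Wn q.1) q.2) U (𝓝 y) := by
      rw [tendsto_order]
      constructor
      · intro c hc
        by_cases hc0 : c < 0
        · filter_upwards [hl] with q hq
          exact hc0.trans_le (XX_nonneg hq)
        push Not at hc0
        filter_upwards [hN.eventually (sandwich h (a := c + (y - c) / 3) (b := c + (y - c) / 2)
          (by linarith) (by linarith)), hl,
          hx.eventually (lt_mem_nhds (show c + (y - c) / 2 < y by linarith))] with q s1 s2 s3
        have := (s1 q.2 s2).1 s3
        linarith
      · intro c hc
        filter_upwards [hN.eventually (sandwich h (a := y + (c - y) / 3) (b := y + (c - y) / 2)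
          (by linarith) (by linarith)), hl,
          hx.eventually (gt_mem_nhds (show y < y + (c - y) / 3 by linarith))] with q s1 s2 s3
        have := (s1 q.2 s2).2 s3
        linarith
    -- replace by globally nonnegative versions
    have key : ∀ {W' : ℕ → Ω → ℝ} (_ : HypW P W W') {k : ℝ → ℝ} (_ : Continuous k)
        (_ : ∀ w, |k w| ≤ 1 + w ^ 2)
        (_ : Tendsto (fun q : ℕ × ℝ => XX P (W' q.1) q.2) U (𝓝 y)),
        Tendsto (fun q : ℕ × ℝ => KK P (W' q.1) k (XX P (W' q.1) q.2)) U (𝓝 (KK P W k y)) := by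
      intro W' h' k hk hb ht
      have ht' : Tendsto (fun q : ℕ × ℝ => max (XX P (W' q.1) q.2) 0) U (𝓝 y) := by
        simpa [max_eq_left hy] using ht.max (tendsto_const_nhds (x := (0:ℝ)))
      refine (KK_conv h' hk hb hN (fun _ => le_max_right _ _) hy ht').congr' ?_
      filter_upwards [hl] with q hq
      rw [max_eq_left (XX_nonneg hq)]
    constructor
    · simpa using (key h.const hc1 oneb hx).sub (key h hc1 oneb hxn)
    · have hd := (key h.const hc2 sqb hx).sub (key h hc2 sqb hxn)
      rw [sub_self] at hd
      have hp := KK_sq_pos h.m h.pos h.i2 (show 0 ≤ y + 1 by linarith)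
      have hd' := (hd.abs).const_mul (KK P W (fun w => w ^ 2) (y + 1))⁻¹
      rw [abs_zero, mul_zero] at hd'
      rw [tendsto_zero_iff_abs_tendsto_zero]
      refine squeeze_zero' (Eventually.of_forall fun _ => abs_nonneg _) ?_ hd'
      filter_upwards [hl, hx.eventually (gt_mem_nhds (show y < y + 1 by linarith))] with q hq hq2
      have e1 := XX_lt h.m h.pos h.i2 hq (by linarith) hq2
      have e2 := Phi_ge h.m h.pos h.i2 (show 0 ≤ y + 1 by linarith)
      have e3 : q.2 ≤ (KK P W (fun w => w ^ 2) (y + 1))⁻¹ := by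
        rw [← one_div, le_div_iff₀ hp]
        have : (y + 1) * (q.2 * KK P W (fun w => w ^ 2) (y + 1)) ≤ (y + 1) * 1 := by
          nlinarith [mul_le_mul_of_nonneg_left e2 hq.le]
        exact le_of_mul_le_mul_left this (by linarith)
      simp only [Function.comp_apply]
      rw [← mul_sub, abs_mul, abs_of_pos hq]
      gcongr
end helpers

/-- Under Assumption 1, `sup_{λ > λ_crit} |ρ⁽ⁿ⁾(λ) - ρ(λ)| → 0` and
`sup_{λ > λ_crit} |β⁽ⁿ⁾(λ) - β(λ)| → 0` as `n → ∞`. -/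
theorem stmt_5
    {Ω : Type*} [MeasurableSpace Ω] (P : Measure Ω) [IsProbabilityMeasure P]
    (W : Ω → ℝ) (Wn : ℕ → Ω → ℝ)
    (hWmeas : Measurable W) (hWnmeas : ∀ n, Measurable (Wn n))
    (hWpos : ∀ᵐ ω ∂P, 0 < W ω) (hWnpos : ∀ n, ∀ᵐ ω ∂P, 0 < Wn n ω)
    (hdist : ∀ f : BoundedContinuousFunction ℝ ℝ,
      Tendsto (fun n => ∫ ω, f (Wn n ω) ∂P) atTop (𝓝 (∫ ω, f (W ω) ∂P)))
    (hW2 : Integrable (fun ω => (W ω) ^ 2) P)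
    (hWn2 : ∀ n, Integrable (fun ω => (Wn n ω) ^ 2) P)
    (hmom : Tendsto (fun n => ∫ ω, (Wn n ω) ^ 2 ∂P) atTop (𝓝 (∫ ω, (W ω) ^ 2 ∂P)))
    (lamCrit : ℝ) (hlamCrit : lamCrit = (∫ ω, (W ω) ^ 2 ∂P)⁻¹)
    (φ1n : ℕ → ℝ → ℝ)
    (hφ1n : ∀ n t, φ1n n t = ∫ ω, Wn n ω * (1 - Real.exp (-(Wn n ω) * t)) ∂P)
    (φ1 : ℝ → ℝ)
    (hφ1 : ∀ t, φ1 t = ∫ ω, W ω * (1 - Real.exp (-(W ω) * t)) ∂P)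
    (θn : ℕ → ℝ → ℝ)
    (hθn : ∀ n lam, θn n lam = sInf {t : ℝ | 0 < t ∧ φ1n n (lam * t) - t < 0})
    (θ : ℝ → ℝ)
    (hθ : ∀ lam, θ lam = sInf {t : ℝ | 0 < t ∧ φ1 (lam * t) - t < 0})
    (φ0n : ℕ → ℝ → ℝ)
    (hφ0n : ∀ n t, φ0n n t = ∫ ω, (1 - Real.exp (-(Wn n ω) * t)) ∂P)
    (φ0 : ℝ → ℝ)
    (hφ0 : ∀ t, φ0 t = ∫ ω, (1 - Real.exp (-(W ω) * t)) ∂P)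
    (ρn : ℕ → ℝ → ℝ) (hρn : ∀ n lam, ρn n lam = φ0n n (lam * θn n lam))
    (ρ : ℝ → ℝ) (hρ : ∀ lam, ρ lam = φ0 (lam * θ lam))
    (βn : ℕ → ℝ → ℝ)
    (hβn : ∀ n lam, βn n lam =
      1 - lam * ∫ ω, (Wn n ω) ^ 2 * Real.exp (-(Wn n ω) * (lam * θn n lam)) ∂P)
    (β : ℝ → ℝ)
    (hβ : ∀ lam, β lam =
      1 - lam * ∫ ω, (W ω) ^ 2 * Real.exp (-(W ω) * (lam * θ lam)) ∂P) :
    TendstoUniformlyOn (fun n lam => ρn n lam) ρ atTop (Ioi lamCrit) ∧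
      TendstoUniformlyOn (fun n lam => βn n lam) β atTop (Ioi lamCrit) := by
  have h : HypW P W Wn := ⟨hWmeas, hWnmeas, hWpos, hWnpos, hdist, hW2, hWn2, hmom⟩
  have hlc : 0 ≤ lamCrit := by
    rw [hlamCrit]
    exact inv_nonneg.2 (integral_nonneg fun ω => sq_nonneg _)
  have e1 : ∀ lam, lam * θ lam = XX P W lam := by
    intro lam
    rw [hθ]
    simp only [hφ1]
    rfl
  have e2 : ∀ n lam, lam * θn n lam = XX P (Wn n) lam := by
    intro n lam
    rw [hθn]
    simp only [hφ1n]
    rfl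
  have e3 : ∀ X : Ω → ℝ, Measurable X → (∀ᵐ ω ∂P, 0 < X ω) →
      Integrable (fun ω => (X ω) ^ 2) P → ∀ s : ℝ, 0 ≤ s →
      ∫ ω, (1 - Real.exp (-(X ω) * s)) ∂P = 1 - KK P X (fun _ => 1) s := by
    intro X hX h0 h2 s hs
    have hi := KK_int hX h0 h2 (continuous_const (y := (1:ℝ))) oneb hs
    unfold KK
    simp only [one_mul] at hi ⊢
    rw [integral_sub (integrable_const 1) hi]
    simp
  have hU : ∀ U : Ultrafilter (ℕ × ℝ), (U : Filter (ℕ × ℝ)) ≤ atTop ×ˢ 𝓟 (Ioi lamCrit) →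
      Tendsto Prod.fst (U : Filter (ℕ × ℝ)) atTop ∧ ∀ᶠ q in (U : Filter (ℕ × ℝ)), 0 < q.2 := by
    intro U hU
    refine ⟨tendsto_fst.mono_left hU, ?_⟩
    have : Tendsto Prod.snd (U : Filter (ℕ × ℝ)) (𝓟 (Ioi lamCrit)) := tendsto_snd.mono_left hU
    filter_upwards [tendsto_principal.1 this] with q hq
    exact hlc.trans_lt hq
  constructor
  · rw [tendstoUniformlyOn_iff_tendsto, tendsto_uniformity_iff_dist_tendsto_zero,
      tendsto_iff_ultrafilter]
    intro U hUle
    obtain ⟨hN, hl⟩ := hU U hUle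
    have := (main_ultra h U hN hl).1.abs
    rw [abs_zero] at this
    refine this.congr' ?_
    filter_upwards [hl] with q hq
    rw [Real.dist_eq, hρ, hρn, hφ0, hφ0n, e1, e2, e3 _ h.m h.pos h.i2 _ (XX_nonneg hq),
      e3 _ (h.mn _) (h.posn _) (h.i2n _) _ (XX_nonneg hq), ← abs_neg]
    congr 1; ring
  · rw [tendstoUniformlyOn_iff_tendsto, tendsto_uniformity_iff_dist_tendsto_zero,
      tendsto_iff_ultrafilter]
    intro U hUle
    obtain ⟨hN, hl⟩ := hU U hUle
    have := (main_ultra h U hN hl).2.abs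
    rw [abs_zero] at this
    refine this.congr' ?_
    filter_upwards [hl] with q hq
    rw [Real.dist_eq, hβ, hβn, e1, e2, ← abs_neg]
    unfold KK
    congr 1; ring
end

section
/- For every λ > λ_crit, θ(λ) is the unique t > 0 satisfying φ_1(λ t) = t; moreover φ_1(λ t) − t > 0 for all t ∈ (0, θ(λ)) and φ_1(λ t) − t < 0 for all t > θ(λ). -/
open MeasureTheory Filter Topology Set

lemma aux_pt {x y : ℝ} (hx : 0 < x) (hxy : x < y) :
    x * (1 - Real.exp (-y)) < y * (1 - Real.exp (-x)) := by
  have hy : 0 < y := hx.trans hxy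
  have ha : 0 < 1 - x / y := by rw [sub_pos, div_lt_one hy]; exact hxy
  have hb : 0 < x / y := by positivity
  have h := strictConvexOn_exp.2 (mem_univ (0:ℝ)) (mem_univ (-y)) (by linarith) ha hb (by ring)
  have e : (1 - x / y) • (0:ℝ) + (x / y) • (-y) = -x := by
    simp only [smul_eq_mul]; field_simp; ring
  rw [e] at h
  simp only [smul_eq_mul, Real.exp_zero] at h
  have h2 := mul_lt_mul_of_pos_left h hy
  have e2 : y * ((1 - x / y) * 1 + x / y * Real.exp (-y)) = y - x + x * Real.exp (-y) := by
    field_simp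
  rw [e2] at h2
  linarith

lemma aux_int_lt {Ω : Type*} [MeasurableSpace Ω] (P : Measure Ω) [IsProbabilityMeasure P]
    {f g : Ω → ℝ} (hf : Integrable f P) (hg : Integrable g P) (h : ∀ᵐ ω ∂P, f ω < g ω) :
    ∫ ω, f ω ∂P < ∫ ω, g ω ∂P := by
  refine lt_of_le_of_ne (integral_mono_ae hf hg (h.mono fun _ h => h.le)) fun heq => ?_
  have h0 : ∫ ω, (g ω - f ω) ∂P = 0 := by rw [integral_sub hg hf, heq, sub_self]
  have h0 := (integral_eq_zero_iff_of_nonneg_ae (f := fun ω => g ω - f ω)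
    (h.mono fun _ h => by simpa using h.le) (hg.sub hf)).1 h0
  have : ∀ᵐ ω ∂P, False := by
    filter_upwards [h, h0] with ω h1 h2
    simp only [Pi.zero_apply] at h2
    linarith
  exact this.exists.elim fun _ h => h

/-- For `λ > λ_crit`, `θ(λ)` is the unique strictly positive root of `φ₁(λ t) = t`;
moreover `φ₁(λ t) - t > 0` on `(0, θ(λ))` and `φ₁(λ t) - t < 0` on `(θ(λ), ∞)`. -/
theorem stmt_6
    {Ω : Type*} [MeasurableSpace Ω] (P : Measure Ω) [IsProbabilityMeasure P]
    (W : Ω → ℝ) (hWmeas : Measurable W)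
    (hWpos : ∀ᵐ ω ∂P, 0 < W ω)
    (hW2 : Integrable (fun ω => (W ω) ^ 2) P)
    (lamCrit : ℝ) (hlamCrit : lamCrit = (∫ ω, (W ω) ^ 2 ∂P)⁻¹)
    (φ1 : ℝ → ℝ)
    (hφ1 : ∀ t, φ1 t = ∫ ω, W ω * (1 - Real.exp (-(W ω) * t)) ∂P)
    (θ : ℝ → ℝ)
    (hθ : ∀ lam, θ lam = sInf {t : ℝ | 0 < t ∧ φ1 (lam * t) - t < 0}) :
    ∀ lam : ℝ, lamCrit < lam →
      (0 < θ lam ∧ φ1 (lam * θ lam) = θ lam) ∧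
      (∀ t : ℝ, 0 < t → φ1 (lam * t) = t → t = θ lam) ∧
      (∀ t : ℝ, 0 < t → t < θ lam → 0 < φ1 (lam * t) - t) ∧
      (∀ t : ℝ, θ lam < t → φ1 (lam * t) - t < 0) := by
  intro lam hlam
  have hE2 : 0 < ∫ ω, (W ω) ^ 2 ∂P := by
    have := aux_int_lt P (integrable_zero Ω ℝ P) hW2 (hWpos.mono fun ω h => by
      simp only [Pi.zero_apply]; positivity)
    simpa using this
  have hl0 : 0 < lam := by
    have : 0 < lamCrit := by rw [hlamCrit]; positivity
    linarith
  have hl1 : 1 < lam * ∫ ω, (W ω) ^ 2 ∂P := by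
    rw [hlamCrit, inv_lt_iff_one_lt_mul₀ hE2] at hlam
    linarith
  have hW1 : Integrable W P := by
    refine Integrable.mono' (hW2.add (integrable_const 1)) hWmeas.aestronglyMeasurable ?_
    refine Eventually.of_forall fun ω => ?_
    simp only [Pi.add_apply, Real.norm_eq_abs]
    rw [abs_le]
    constructor <;> nlinarith [sq_nonneg (W ω - 1), sq_nonneg (W ω + 1)]
  -- pointwise bounds
  have hbd : ∀ t, 0 ≤ t → ∀ᵐ ω ∂P, ‖W ω * (1 - Real.exp (-(W ω) * t))‖ ≤ W ω := by
    intro t ht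
    filter_upwards [hWpos] with ω hω
    have h1 : Real.exp (-(W ω) * t) ≤ 1 := by
      rw [Real.exp_le_one_iff]; nlinarith [mul_nonneg hω.le ht]
    have h2 := Real.exp_pos (-(W ω) * t)
    rw [Real.norm_of_nonneg (mul_nonneg hω.le (by linarith))]
    nlinarith
  have hmeas : ∀ t, AEStronglyMeasurable (fun ω => W ω * (1 - Real.exp (-(W ω) * t))) P := by
    intro t
    exact Measurable.aestronglyMeasurable (by fun_prop)
  have hint : ∀ t, 0 ≤ t → Integrable (fun ω => W ω * (1 - Real.exp (-(W ω) * t))) P :=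
    fun t ht => Integrable.mono' hW1 (hmeas t) (hbd t ht)
  have hcont : ContinuousOn φ1 (Ici 0) := by
    have : φ1 = fun t => ∫ ω, W ω * (1 - Real.exp (-(W ω) * t)) ∂P := funext hφ1
    rw [this]
    refine continuousOn_of_dominated (bound := W) (fun t _ => hmeas t) (fun t ht => hbd t ht) hW1 ?_
    refine Eventually.of_forall fun ω => ?_
    fun_prop
  have hA : ∀ s t, 0 < s → s < t → s * φ1 (lam * t) < t * φ1 (lam * s) := by
    intro s t hs hst
    have ht := hs.trans hst
    rw [hφ1, hφ1, ← integral_const_mul, ← integral_const_mul]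
    refine aux_int_lt P ((hint _ (by positivity)).const_mul _)
      ((hint _ (by positivity)).const_mul _) ?_
    filter_upwards [hWpos] with ω hω
    have h := aux_pt (x := W ω * (lam * s)) (y := W ω * (lam * t)) (by positivity) (by gcongr)
    rw [← neg_mul, ← neg_mul] at h
    refine lt_of_mul_lt_mul_left (a := lam) ?_ hl0.le
    linarith
  have hC : ∀ t, 0 ≤ t → φ1 t ≤ ∫ ω, W ω ∂P := by
    intro t ht
    rw [hφ1]
    exact integral_mono_ae (hint t ht) hW1 ((hbd t ht).mono fun ω h => (le_abs_self _).trans h)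
  have hB : ∃ t, 0 < t ∧ t < φ1 (lam * t) := by
    have hlim : Tendsto (fun t : ℝ => ∫ ω, t⁻¹ * (W ω * (1 - Real.exp (-(W ω) * (lam * t)))) ∂P)
        (𝓝[>] 0) (𝓝 (∫ ω, lam * (W ω) ^ 2 ∂P)) := by
      refine tendsto_integral_filter_of_dominated_convergence (fun ω => lam * (W ω) ^ 2)
        (Eventually.of_forall fun t => (hmeas _).const_mul _) ?_ (hW2.const_mul _) ?_
      · filter_upwards [self_mem_nhdsWithin] with t ht
        have ht : 0 < t := ht
        filter_upwards [hWpos] with ω hω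
        have h1 : Real.exp (-(W ω) * (lam * t)) ≤ 1 := by
          rw [Real.exp_le_one_iff]
          have : 0 < W ω * (lam * t) := by positivity
          linarith
        have h2 := Real.add_one_le_exp (-(W ω) * (lam * t))
        have h3 : 0 ≤ 1 - Real.exp (-(W ω) * (lam * t)) := by linarith
        rw [Real.norm_of_nonneg (by positivity), inv_mul_le_iff₀ ht]
        have h4 : 1 - Real.exp (-(W ω) * (lam * t)) ≤ W ω * (lam * t) := by linarith
        have := mul_le_mul_of_nonneg_left h4 hω.le
        linarith
      · refine Eventually.of_forall fun ω => ?_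
        have hd : HasDerivAt (fun t : ℝ => W ω * (1 - Real.exp (-(W ω) * (lam * t))))
            (lam * (W ω) ^ 2) 0 := by
          have h1 : HasDerivAt (fun t : ℝ => -(W ω) * (lam * t)) (-(W ω) * (lam * 1)) 0 :=
            ((hasDerivAt_id 0).const_mul lam).const_mul _
          have := ((h1.exp).const_sub 1).const_mul (W ω)
          refine HasDerivAt.congr_deriv this ?_
          simp only [mul_zero, Real.exp_zero]; ring
        have := hd.tendsto_slope_zero_right
        simpa using this
    rw [integral_const_mul] at hlim
    obtain ⟨t, h1, h2⟩ := ((hlim.eventually (lt_mem_nhds hl1)).and self_mem_nhdsWithin).exists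
    have h2 : 0 < t := h2
    refine ⟨t, h2, ?_⟩
    rw [integral_const_mul, ← hφ1, lt_inv_mul_iff₀ h2] at h1
    linarith
  obtain ⟨a, ha, hga⟩ := hB
  -- root
  have hroot : ∃ r, 0 < r ∧ φ1 (lam * r) = r := by
    set M := ∫ ω, W ω ∂P with hM
    have haM : a ≤ M := hga.le.trans (hC _ (by positivity))
    have hc : ContinuousOn (fun t => φ1 (lam * t) - t) (Icc a M) := by
      refine ContinuousOn.sub (hcont.comp (by fun_prop) ?_) continuousOn_id
      intro t ht
      exact mul_nonneg hl0.le (ha.le.trans ht.1)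
    have := intermediate_value_Icc' haM hc
    obtain ⟨r, hr, hr0⟩ := this (show (0:ℝ) ∈ _ from
      ⟨by linarith [hC (lam * M) (mul_nonneg hl0.le (ha.le.trans haM))], by linarith⟩)
    exact ⟨r, ha.trans_le hr.1, by simpa [sub_eq_zero] using hr0⟩
  obtain ⟨r, hr, hrr⟩ := hroot
  have hlo : ∀ t, 0 < t → t < r → 0 < φ1 (lam * t) - t := by
    intro t ht htr
    have := hA t r ht htr
    rw [hrr] at this
    nlinarith
  have hhi : ∀ t, r < t → φ1 (lam * t) - t < 0 := by
    intro t htr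
    have := hA r t hr htr
    rw [hrr] at this
    nlinarith
  have hθr : θ lam = r := by
    rw [hθ]
    have : {t : ℝ | 0 < t ∧ φ1 (lam * t) - t < 0} = Ioi r := by
      ext t
      constructor
      · rintro ⟨h1, h2⟩
        by_contra h
        rcases (not_lt.1 (show ¬ r < t from h)).lt_or_eq with h | h
        · linarith [hlo t h1 h]
        · rw [h, hrr] at h2; linarith
      · intro h
        exact ⟨hr.trans h, hhi t h⟩
    rw [this, csInf_Ioi]
  rw [hθr]
  refine ⟨⟨hr, hrr⟩, ?_, hlo, hhi⟩
  intro t ht h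
  rcases lt_trichotomy t r with h1 | h1 | h1
  · linarith [hlo t ht h1]
  · exact h1
  · linarith [hhi t h1]
end

section
/- For every λ > 0 the following are equivalent: (i) λ > λ_crit; (ii) θ(λ) > 0; (iii) ρ(λ) > 0. -/
open MeasureTheory Filter Topology Set

theorem aux_integral_pos {Ω : Type*} [MeasurableSpace Ω] (P : Measure Ω) [IsProbabilityMeasure P]
    (f : Ω → ℝ) (hf : Integrable f P) (hpos : ∀ᵐ ω ∂P, 0 < f ω) : 0 < ∫ ω, f ω ∂P := by
  have h0 : 0 ≤ᵐ[P] f := by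
    filter_upwards [hpos] with ω h using h.le
  refine lt_of_le_of_ne (integral_nonneg_of_ae h0) ?_
  intro h
  have h1 := (integral_eq_zero_iff_of_nonneg_ae h0 hf).1 h.symm
  have h2 : ∀ᵐ ω ∂P, False := by
    filter_upwards [h1, hpos] with ω a b
    simp at a
    linarith
  have h3 := h2.exists
  obtain ⟨_, h4⟩ := h3
  exact h4

theorem aux_tendsto (w lam : ℝ) :
    Tendsto (fun t : ℝ => t⁻¹ * (w * (1 - Real.exp (-w * (lam * t))))) (𝓝[>] 0)
      (𝓝 (lam * w ^ 2)) := by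
  have h : HasDerivAt (fun t : ℝ => w * (1 - Real.exp (-w * (lam * t)))) (lam * w ^ 2) 0 := by
    have h1 : HasDerivAt (fun t : ℝ => -w * (lam * t)) (-w * (lam * 1)) 0 :=
      ((hasDerivAt_id (0 : ℝ)).const_mul lam).const_mul (-w)
    have h2 := ((h1.exp).const_sub 1).const_mul w
    refine h2.congr_deriv ?_
    simp only [mul_zero, Real.exp_zero]
    ring
  have hs : Ioi (0 : ℝ) ⊆ {0}ᶜ := fun x hx => ne_of_gt (mem_Ioi.1 hx)
  have h3 := (hasDerivAt_iff_tendsto_slope_zero.1 h).mono_left (nhdsWithin_mono (0 : ℝ) hs)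
  simpa using h3

/-- For every `λ > 0` the following are equivalent: `λ > λ_crit`, `θ(λ) > 0`, and
`ρ(λ) > 0`. -/
theorem stmt_7
    {Ω : Type*} [MeasurableSpace Ω] (P : Measure Ω) [IsProbabilityMeasure P]
    (W : Ω → ℝ) (hWmeas : Measurable W)
    (hWpos : ∀ᵐ ω ∂P, 0 < W ω)
    (hW2 : Integrable (fun ω => (W ω) ^ 2) P)
    (lamCrit : ℝ) (hlamCrit : lamCrit = (∫ ω, (W ω) ^ 2 ∂P)⁻¹)
    (φ1 : ℝ → ℝ)
    (hφ1 : ∀ t, φ1 t = ∫ ω, W ω * (1 - Real.exp (-(W ω) * t)) ∂P)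
    (θ : ℝ → ℝ)
    (hθ : ∀ lam, θ lam = sInf {t : ℝ | 0 < t ∧ φ1 (lam * t) - t < 0})
    (φ0 : ℝ → ℝ)
    (hφ0 : ∀ t, φ0 t = ∫ ω, (1 - Real.exp (-(W ω) * t)) ∂P)
    (ρ : ℝ → ℝ) (hρ : ∀ lam, ρ lam = φ0 (lam * θ lam)) :
    ∀ lam : ℝ, 0 < lam →
      ((lamCrit < lam ↔ 0 < θ lam) ∧ (lamCrit < lam ↔ 0 < ρ lam)) := by
  intro lam hlam
  have hW1 : Integrable W P := by
    have : MemLp W 2 P := (memLp_two_iff_integrable_sq hWmeas.aestronglyMeasurable).2 hW2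
    exact this.integrable (by norm_num)
  have hm2 : 0 < ∫ ω, (W ω) ^ 2 ∂P :=
    aux_integral_pos P _ hW2 (by filter_upwards [hWpos] with ω h; positivity)
  have hm1 : 0 < ∫ ω, W ω ∂P := aux_integral_pos P _ hW1 hWpos
  have hI1 : ∀ t, 0 < t → Integrable (fun ω => W ω * (1 - Real.exp (-(W ω) * t))) P := by
    intro t ht
    refine hW1.mono (by fun_prop) ?_
    filter_upwards [hWpos] with ω h
    have h1 : Real.exp (-(W ω) * t) ≤ 1 := Real.exp_le_one_iff.2 (by nlinarith)
    have h2 := Real.exp_pos (-(W ω) * t)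
    rw [Real.norm_eq_abs, Real.norm_eq_abs, abs_mul, abs_of_pos h, abs_of_nonneg (by linarith)]
    nlinarith
  have hI0 : ∀ t, 0 < t → Integrable (fun ω => (1 - Real.exp (-(W ω) * t))) P := by
    intro t ht
    refine (integrable_const (1 : ℝ)).mono (by fun_prop) ?_
    filter_upwards [hWpos] with ω h
    have h1 : Real.exp (-(W ω) * t) ≤ 1 := Real.exp_le_one_iff.2 (by nlinarith)
    have h2 := Real.exp_pos (-(W ω) * t)
    rw [Real.norm_eq_abs, Real.norm_eq_abs, abs_one, abs_of_nonneg (by linarith)]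
    linarith
  by_cases hc : lamCrit < lam
  · have hθpos : 0 < θ lam := by
      have hgt : 1 < lam * ∫ ω, (W ω) ^ 2 ∂P := by
        rw [hlamCrit] at hc
        calc (1 : ℝ) = (∫ ω, (W ω) ^ 2 ∂P)⁻¹ * ∫ ω, (W ω) ^ 2 ∂P := by field_simp
          _ < _ := by gcongr
      have hlim : Tendsto (fun t : ℝ => ∫ ω, t⁻¹ * (W ω * (1 - Real.exp (-(W ω) * (lam * t)))) ∂P)
          (𝓝[>] 0) (𝓝 (∫ ω, lam * (W ω) ^ 2 ∂P)) := by
        refine tendsto_integral_filter_of_dominated_convergence (fun ω => lam * (W ω) ^ 2)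
          (Eventually.of_forall fun t => by fun_prop) ?_ (hW2.const_mul lam)
          (Eventually.of_forall fun ω => aux_tendsto (W ω) lam)
        filter_upwards [self_mem_nhdsWithin] with t ht
        have ht : 0 < t := ht
        filter_upwards [hWpos] with ω h
        have h1 : Real.exp (-(W ω) * (lam * t)) ≤ 1 :=
          Real.exp_le_one_iff.2 (by have := mul_pos h (mul_pos hlam ht); linarith)
        have h2 := Real.add_one_le_exp (-(W ω) * (lam * t))
        rw [Real.norm_eq_abs, abs_of_nonneg
          (mul_nonneg (inv_pos.2 ht).le (mul_nonneg h.le (by linarith)))]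
        calc t⁻¹ * (W ω * (1 - Real.exp (-(W ω) * (lam * t))))
            ≤ t⁻¹ * (W ω * (W ω * (lam * t))) := by gcongr; linarith
          _ = lam * (W ω) ^ 2 := by field_simp
      rw [integral_const_mul] at hlim
      have hev := hlim.eventually (lt_mem_nhds hgt)
      obtain ⟨ε, hε, hsub⟩ := mem_nhdsGT_iff_exists_Ioo_subset.1 hev
      have hε : 0 < ε := hε
      rw [hθ]
      refine lt_of_lt_of_le hε (le_csInf ⟨(∫ ω, W ω ∂P) + 1, by linarith, ?_⟩ ?_)
      · have : φ1 (lam * ((∫ ω, W ω ∂P) + 1)) ≤ ∫ ω, W ω ∂P := by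
          rw [hφ1]
          refine integral_mono_ae (hI1 _ (by positivity)) hW1 ?_
          filter_upwards [hWpos] with ω h
          have h2 := Real.exp_pos (-(W ω) * (lam * ((∫ ω, W ω ∂P) + 1)))
          nlinarith
        linarith
      · rintro t ⟨ht, hlt⟩
        by_contra! hcon
        have h1 : 1 < ∫ ω, t⁻¹ * (W ω * (1 - Real.exp (-(W ω) * (lam * t)))) ∂P :=
          hsub ⟨ht, hcon⟩
        rw [integral_const_mul, ← hφ1, inv_mul_eq_div, one_lt_div ht] at h1
        linarith
    have hρpos : 0 < ρ lam := by
      rw [hρ, hφ0]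
      have hp := mul_pos hlam hθpos
      refine aux_integral_pos P _ (hI0 _ hp) ?_
      filter_upwards [hWpos] with ω h
      have h1 : Real.exp (-(W ω) * (lam * θ lam)) < 1 :=
        Real.exp_lt_one_iff.2 (by have := mul_pos h hp; linarith)
      linarith
    exact ⟨⟨fun _ => hθpos, fun _ => hc⟩, ⟨fun _ => hρpos, fun _ => hc⟩⟩
  · have hθ0 : θ lam = 0 := by
      have hle : lam * ∫ ω, (W ω) ^ 2 ∂P ≤ 1 := by
        rw [hlamCrit] at hc
        push Not at hc
        calc lam * ∫ ω, (W ω) ^ 2 ∂P ≤ (∫ ω, (W ω) ^ 2 ∂P)⁻¹ * ∫ ω, (W ω) ^ 2 ∂P := by gcongr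
          _ = 1 := by field_simp
      have hset : {t : ℝ | 0 < t ∧ φ1 (lam * t) - t < 0} = Ioi 0 := by
        ext t
        simp only [mem_ofPred_eq, mem_Ioi, and_iff_left_iff_imp]
        intro ht
        have hp := mul_pos hlam ht
        have hint : Integrable (fun ω => (lam * t) * (W ω) ^ 2) P := hW2.const_mul _
        have h := aux_integral_pos P _ (hint.sub (hI1 _ hp)) (by
          filter_upwards [hWpos] with ω h
          have hx := mul_pos h hp
          have h2 := Real.add_one_lt_exp (x := -(W ω) * (lam * t)) (by linarith)
          simp only [Pi.sub_apply]
          nlinarith)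
        simp only [Pi.sub_apply] at h
        rw [integral_sub hint (hI1 _ hp), integral_const_mul, ← hφ1] at h
        nlinarith
      rw [hθ, hset, csInf_Ioi]
    have hρ0 : ρ lam = 0 := by
      rw [hρ, hθ0, hφ0]
      simp
    rw [hθ0, hρ0]
    simp [hc]
end

section
/- For every λ > 0 one has θ(λ) < 𝔼[W] and ρ(λ) < 1. -/
open MeasureTheory Filter Topology Set

/-- For every `λ > 0`, `θ(λ) < E[W]` and `ρ(λ) < 1`. -/
theorem stmt_8
    {Ω : Type*} [MeasurableSpace Ω] (P : Measure Ω) [IsProbabilityMeasure P]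
    (W : Ω → ℝ) (hWmeas : Measurable W)
    (hWpos : ∀ᵐ ω ∂P, 0 < W ω)
    (hW2 : Integrable (fun ω => (W ω) ^ 2) P)
    (φ1 : ℝ → ℝ)
    (hφ1 : ∀ t, φ1 t = ∫ ω, W ω * (1 - Real.exp (-(W ω) * t)) ∂P)
    (θ : ℝ → ℝ)
    (hθ : ∀ lam, θ lam = sInf {t : ℝ | 0 < t ∧ φ1 (lam * t) - t < 0})
    (φ0 : ℝ → ℝ)
    (hφ0 : ∀ t, φ0 t = ∫ ω, (1 - Real.exp (-(W ω) * t)) ∂P)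
    (ρ : ℝ → ℝ) (hρ : ∀ lam, ρ lam = φ0 (lam * θ lam)) :
    ∀ lam : ℝ, 0 < lam → θ lam < (∫ ω, W ω ∂P) ∧ ρ lam < 1 := by
  intro lam hlam
  have hWint : Integrable W P := by
    have h : MemLp W 2 P := (memLp_two_iff_integrable_sq hWmeas.aestronglyMeasurable).2 hW2
    exact h.integrable (by norm_num)
  have hexp : ∀ s, 0 ≤ s → Integrable (fun ω => Real.exp (-(W ω) * s)) P := by
    intro s hs
    refine Integrable.mono' (integrable_const (1 : ℝ))
      (by fun_prop : Measurable _).aestronglyMeasurable ?_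
    filter_upwards [hWpos] with ω hω
    rw [Real.norm_eq_abs, abs_of_pos (Real.exp_pos _), Real.exp_le_one_iff]
    nlinarith [mul_nonneg hω.le hs]
  have hWexp : ∀ s, 0 ≤ s → Integrable (fun ω => W ω * Real.exp (-(W ω) * s)) P := by
    intro s hs
    refine Integrable.mono' hWint
      (by fun_prop : Measurable _).aestronglyMeasurable ?_
    filter_upwards [hWpos] with ω hω
    rw [Real.norm_eq_abs, abs_of_pos (mul_pos hω (Real.exp_pos _))]
    have : Real.exp (-(W ω) * s) ≤ 1 := by
      rw [Real.exp_le_one_iff]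
      nlinarith [mul_nonneg hω.le hs]
    nlinarith
  have hpos : ∀ f : Ω → ℝ, Integrable f P → (∀ᵐ ω ∂P, 0 < f ω) → 0 < ∫ ω, f ω ∂P := by
    intro f hf hfp
    have h0 : 0 ≤ᵐ[P] f := hfp.mono fun ω h => h.le
    rw [integral_pos_iff_support_of_nonneg_ae h0 hf]
    have : Function.support f =ᵐ[P] Set.univ := by
      rw [eventuallyEq_univ]
      exact hfp.mono fun ω h => h.ne'
    rw [measure_congr this]
    simp
  have hm : 0 < ∫ ω, W ω ∂P := hpos W hWint hWpos
  set m := ∫ ω, W ω ∂P with hmdef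
  have hφ1' : ∀ s, 0 ≤ s → φ1 s = m - ∫ ω, W ω * Real.exp (-(W ω) * s) ∂P := by
    intro s hs
    rw [hφ1, hmdef, ← integral_sub hWint (hWexp s hs)]
    congr 1
    ext ω
    ring
  have hlt : φ1 (lam * m) < m := by
    rw [hφ1' _ (by positivity)]
    have := hpos _ (hWexp (lam * m) (by positivity))
      (hWpos.mono fun ω h => mul_pos h (Real.exp_pos _))
    linarith
  have hbdd : BddBelow {t : ℝ | 0 < t ∧ φ1 (lam * t) - t < 0} := ⟨0, fun t ht => ht.1.le⟩
  have hθ0 : 0 ≤ θ lam := by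
    rw [hθ]
    exact Real.sInf_nonneg fun t ht => ht.1.le
  constructor
  · obtain ⟨t, ht1, ht2⟩ := exists_between (max_lt hlt hm)
    have ht0 : 0 < t := (le_max_right _ _).trans_lt ht1
    have hmono : φ1 (lam * t) ≤ φ1 (lam * m) := by
      rw [hφ1' _ (by positivity), hφ1' _ (by positivity)]
      have : ∫ ω, W ω * Real.exp (-(W ω) * (lam * m)) ∂P
          ≤ ∫ ω, W ω * Real.exp (-(W ω) * (lam * t)) ∂P := by
        refine integral_mono_ae (hWexp _ (by positivity)) (hWexp _ (by positivity)) ?_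
        filter_upwards [hWpos] with ω hω
        refine mul_le_mul_of_nonneg_left (Real.exp_le_exp.2 ?_) hω.le
        have : lam * t ≤ lam * m := mul_le_mul_of_nonneg_left ht2.le hlam.le
        nlinarith
      linarith
    have hle : φ1 (lam * m) < t := (le_max_left _ _).trans_lt ht1
    rw [hθ]
    exact (csInf_le hbdd ⟨ht0, by linarith⟩).trans_lt ht2
  · have hs : 0 ≤ lam * θ lam := mul_nonneg hlam.le hθ0
    rw [hρ, hφ0, integral_sub (integrable_const 1) (hexp _ hs)]
    have := hpos _ (hexp _ hs) (Eventually.of_forall fun ω => Real.exp_pos _)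
    simp only [integral_const, probReal_univ, smul_eq_mul, mul_one]
    linarith
end

section
/- For every λ > λ_crit one has β(λ) > 0, i.e. 1 − λ 𝔼[W² e^{−W λ θ(λ)}] > 0. -/
open MeasureTheory Filter Topology Set

/-- For every `λ > λ_crit`, `β(λ) = 1 - λ E[W² e^{-W λ θ(λ)}] > 0`. -/
theorem stmt_9
    {Ω : Type*} [MeasurableSpace Ω] (P : Measure Ω) [IsProbabilityMeasure P]
    (W : Ω → ℝ) (hWmeas : Measurable W)
    (hWpos : ∀ᵐ ω ∂P, 0 < W ω)
    (hW2 : Integrable (fun ω => (W ω) ^ 2) P)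
    (lamCrit : ℝ) (hlamCrit : lamCrit = (∫ ω, (W ω) ^ 2 ∂P)⁻¹)
    (φ1 : ℝ → ℝ)
    (hφ1 : ∀ t, φ1 t = ∫ ω, W ω * (1 - Real.exp (-(W ω) * t)) ∂P)
    (θ : ℝ → ℝ)
    (hθ : ∀ lam, θ lam = sInf {t : ℝ | 0 < t ∧ φ1 (lam * t) - t < 0})
    (β : ℝ → ℝ)
    (hβ : ∀ lam, β lam =
      1 - lam * ∫ ω, (W ω) ^ 2 * Real.exp (-(W ω) * (lam * θ lam)) ∂P) :
    ∀ lam : ℝ, lamCrit < lam → 0 < β lam := by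
  intro lam hlam
  have hWi : Integrable W P := by
    have h : MemLp W 2 P := (memLp_two_iff_integrable_sq hWmeas.aestronglyMeasurable).2 hW2
    exact h.integrable (by norm_num)
  have hpos2 : 0 < ∫ ω, (W ω) ^ 2 ∂P := by
    rw [integral_pos_iff_support_of_nonneg (fun ω => sq_nonneg _) hW2]
    have hae : ∀ᵐ ω ∂P, ω ∈ Function.support (fun ω => (W ω) ^ 2) := by
      filter_upwards [hWpos] with ω h
      simp [h.ne']
    rw [measure_congr (s := Function.support _) (eventuallyEq_univ.2 hae), measure_univ]
    exact one_pos
  have hl0 : 0 < lam := by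
    have : 0 < lamCrit := by rw [hlamCrit]; exact inv_pos.2 hpos2
    linarith
  have hl1 : 1 < lam * ∫ ω, (W ω) ^ 2 ∂P := by
    rw [hlamCrit] at hlam
    have := mul_lt_mul_of_pos_right hlam hpos2
    rwa [inv_mul_cancel₀ hpos2.ne'] at this
  have hexp1 : ∀ w t : ℝ, 0 < w → 0 ≤ t → Real.exp (-w * t) ≤ 1 := by
    intro w t hw ht
    rw [Real.exp_le_one_iff]
    nlinarith [mul_nonneg hw.le ht]
  have hb1 : ∀ t : ℝ, 0 ≤ t → ∀ᵐ ω ∂P, ‖W ω * (1 - Real.exp (-(W ω) * t))‖ ≤ W ω := by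
    intro t ht
    filter_upwards [hWpos] with ω h
    have h1 := hexp1 _ t h ht
    have h2 := Real.exp_pos (-(W ω) * t)
    rw [Real.norm_eq_abs, abs_of_nonneg (mul_nonneg h.le (by linarith))]
    nlinarith
  have hb2 : ∀ t : ℝ, 0 ≤ t →
      ∀ᵐ ω ∂P, ‖(W ω) ^ 2 * Real.exp (-(W ω) * t)‖ ≤ (W ω) ^ 2 := by
    intro t ht
    filter_upwards [hWpos] with ω h
    have h1 := hexp1 _ t h ht
    have h2 := Real.exp_pos (-(W ω) * t)
    rw [Real.norm_eq_abs, abs_of_nonneg (by positivity)]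
    nlinarith [sq_nonneg (W ω)]
  have hm1 : ∀ t : ℝ, AEStronglyMeasurable (fun ω => W ω * (1 - Real.exp (-(W ω) * t))) P := by
    intro t
    exact Measurable.aestronglyMeasurable (by fun_prop)
  have hm2 : ∀ t : ℝ, AEStronglyMeasurable (fun ω => (W ω) ^ 2 * Real.exp (-(W ω) * t)) P := by
    intro t
    exact Measurable.aestronglyMeasurable (by fun_prop)
  have hi1 : ∀ t : ℝ, 0 ≤ t → Integrable (fun ω => W ω * (1 - Real.exp (-(W ω) * t))) P :=
    fun t ht => hWi.mono' (hm1 t) (hb1 t ht)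
  have hi2 : ∀ t : ℝ, 0 ≤ t → Integrable (fun ω => (W ω) ^ 2 * Real.exp (-(W ω) * t)) P :=
    fun t ht => hW2.mono' (hm2 t) (hb2 t ht)
  have hmax : ∀ t : ℝ, 0 ≤ lam * max t 0 := fun t => mul_nonneg hl0.le (le_max_right _ _)
  have hc1 : Continuous (fun t : ℝ => ∫ ω, W ω * (1 - Real.exp (-(W ω) * (lam * max t 0))) ∂P) :=
    continuous_of_dominated (fun t => hm1 _) (fun t => hb1 _ (hmax t)) hWi
      (Eventually.of_forall fun ω => by fun_prop)
  have hc2 : Continuous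
      (fun t : ℝ => ∫ ω, (W ω) ^ 2 * Real.exp (-(W ω) * (lam * max t 0)) ∂P) :=
    continuous_of_dominated (fun t => hm2 _) (fun t => hb2 _ (hmax t)) hW2
      (Eventually.of_forall fun ω => by fun_prop)
  have hkey : ∀ t : ℝ, 0 < t →
      t * (lam * ∫ ω, (W ω) ^ 2 * Real.exp (-(W ω) * (lam * t)) ∂P) < φ1 (lam * t) := by
    intro t ht
    have hs : 0 < lam * t := mul_pos hl0 ht
    rw [hφ1]
    have hpt : ∀ᵐ ω ∂P, 0 < W ω * (1 - Real.exp (-(W ω) * (lam * t)))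
        - (lam * t) * ((W ω) ^ 2 * Real.exp (-(W ω) * (lam * t))) := by
      filter_upwards [hWpos] with ω h
      have hx : 0 < W ω * (lam * t) := mul_pos h hs
      have h3 := Real.add_one_lt_exp hx.ne'
      have h4 := Real.exp_pos (-(W ω) * (lam * t))
      have h5 : Real.exp (W ω * (lam * t)) * Real.exp (-(W ω) * (lam * t)) = 1 := by
        rw [← Real.exp_add]; simp
      have h6 := mul_lt_mul_of_pos_right h3 h4
      rw [h5] at h6
      have h7 := mul_pos h (sub_pos.2 h6)
      linarith
    have hInt := (hi1 _ hs.le).sub ((hi2 _ hs.le).const_mul (lam * t))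
    have hp : 0 < ∫ ω, (W ω * (1 - Real.exp (-(W ω) * (lam * t)))
        - (lam * t) * ((W ω) ^ 2 * Real.exp (-(W ω) * (lam * t)))) ∂P := by
      rw [integral_pos_iff_support_of_nonneg_ae (hpt.mono fun ω h => h.le) hInt]
      have hae : ∀ᵐ ω ∂P, ω ∈ Function.support (fun ω => W ω * (1 - Real.exp (-(W ω) * (lam * t)))
        - (lam * t) * ((W ω) ^ 2 * Real.exp (-(W ω) * (lam * t)))) := by
        filter_upwards [hpt] with ω h
        exact h.ne'
      rw [measure_congr (s := Function.support _) (eventuallyEq_univ.2 hae), measure_univ]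
      exact one_pos
    rw [integral_sub (hi1 _ hs.le) ((hi2 _ hs.le).const_mul (lam * t)),
      integral_const_mul] at hp
    linarith
  set S : Set ℝ := {t : ℝ | 0 < t ∧ φ1 (lam * t) - t < 0} with hS
  have hne : S.Nonempty := by
    have hW0 : 0 ≤ ∫ ω, W ω ∂P := integral_nonneg_of_ae (hWpos.mono fun ω h => h.le)
    refine ⟨(∫ ω, W ω ∂P) + 1, by linarith, ?_⟩
    have hs : 0 ≤ lam * ((∫ ω, W ω ∂P) + 1) := mul_nonneg hl0.le (by linarith)
    have : φ1 (lam * ((∫ ω, W ω ∂P) + 1)) ≤ ∫ ω, W ω ∂P := by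
      rw [hφ1]
      exact integral_mono_ae (hi1 _ hs) hWi
        ((hb1 _ hs).mono fun ω h => (le_abs_self _).trans h)
    linarith
  have hbdd : BddBelow S := ⟨0, fun t ht => ht.1.le⟩
  have hθS : θ lam = sInf S := hθ lam
  have hle : φ1 (lam * max (θ lam) 0) ≤ θ lam := by
    have hcl : IsClosed {t : ℝ | φ1 (lam * max t 0) ≤ t} := by
      simp only [hφ1]
      exact isClosed_le hc1 continuous_id
    have hsub : S ⊆ {t : ℝ | φ1 (lam * max t 0) ≤ t} := by
      intro t ht
      have h2 := ht.2
      simp only [mem_ofPred_eq, max_eq_left ht.1.le]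
      linarith
    have := closure_minimal hsub hcl (csInf_mem_closure hne hbdd)
    rw [← hθS] at this
    exact this
  have hθpos : 0 < θ lam := by
    have hev : ∀ᶠ t in 𝓝 (0 : ℝ),
        1 < lam * ∫ ω, (W ω) ^ 2 * Real.exp (-(W ω) * (lam * max t 0)) ∂P := by
      apply (continuous_const.mul hc2).continuousAt.eventually_const_lt
      simpa using hl1
    obtain ⟨ε, hε, h⟩ := Metric.eventually_nhds_iff.1 hev
    have : ε ≤ θ lam := by
      rw [hθS]
      refine le_csInf hne fun t ht => ?_
      by_contra hlt
      push Not at hlt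
      have h0 := ht.1
      have h1 := @h t (by rw [Real.dist_eq, sub_zero, abs_of_pos h0]; exact hlt)
      rw [max_eq_left h0.le] at h1
      have h2 := hkey t h0
      have h3 := ht.2
      nlinarith [mul_lt_mul_of_pos_left h1 h0]
    linarith
  rw [max_eq_left hθpos.le] at hle
  have hk := (hkey _ hθpos).trans_le hle
  rw [hβ]
  have : lam * ∫ ω, (W ω) ^ 2 * Real.exp (-(W ω) * (lam * θ lam)) ∂P < 1 := by
    by_contra hge
    push Not at hge
    nlinarith [mul_le_mul_of_nonneg_left hge hθpos.le]
  linarith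
end

section
/- sup_{t ≥ 0} |𝔼[W_n² e^{−W_n t}] − 𝔼[W² e^{−W t}]| → 0 as n → ∞. -/
open MeasureTheory Filter Topology Set

/-- A Polya-type lemma. -/
lemma polya_aux_s11 (G : ℕ → ℝ → ℝ) (g : ℝ → ℝ) (hG : ∀ n, Antitone (G n)) (hg : Antitone g)
    (hc : Continuous g) (hpos : ∀ n t, 0 ≤ G n t) (hgpos : ∀ t, 0 ≤ g t)
    (hlim : Tendsto g atTop (𝓝 0))
    (hp : ∀ t, Tendsto (fun n => G n t) atTop (𝓝 (g t))) :
    TendstoUniformlyOn G g atTop (Ici 0) := by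
  have hloc : TendstoLocallyUniformly G g atTop := by
    rw [Metric.tendstoLocallyUniformly_iff]
    intro ε hε t0
    obtain ⟨δ, hδ, h⟩ := Metric.continuous_iff.1 hc t0 (ε / 4) (by positivity)
    have h1 := h (t0 - δ / 2) (by rw [Real.dist_eq, abs_lt]; constructor <;> linarith)
    have h2 := h (t0 + δ / 2) (by rw [Real.dist_eq, abs_lt]; constructor <;> linarith)
    refine ⟨Icc (t0 - δ / 2) (t0 + δ / 2), Icc_mem_nhds (by linarith) (by linarith), ?_⟩
    filter_upwards [Metric.tendsto_nhds.1 (hp (t0 - δ / 2)) (ε / 4) (by positivity),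
      Metric.tendsto_nhds.1 (hp (t0 + δ / 2)) (ε / 4) (by positivity)] with n h3 h4 y hy
    rw [Real.dist_eq, abs_lt] at *
    have := hG n hy.1
    have := hG n hy.2
    have := hg hy.1
    have := hg hy.2
    constructor <;> linarith
  rw [Metric.tendstoUniformlyOn_iff]
  intro ε hε
  obtain ⟨T, hT⟩ := (Metric.tendsto_nhds.1 hlim (ε / 4) (by positivity)).exists
  have hK := (tendstoLocallyUniformlyOn_iff_tendstoUniformlyOn_of_compact
    (isCompact_Icc (a := (0 : ℝ)) (b := T))).1 hloc.tendstoLocallyUniformlyOn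
  filter_upwards [Metric.tendstoUniformlyOn_iff.1 hK ε hε,
    Metric.tendsto_nhds.1 (hp T) (ε / 4) (by positivity)] with n h1 h2 t ht
  rcases le_total t T with h | h
  · exact h1 t ⟨ht, h⟩
  · rw [Real.dist_eq, abs_lt] at *
    have := hG n h
    have := hg h
    have := hpos n t
    have := hgpos t
    constructor <;> linarith

lemma int_aux_s11 {Ω : Type*} [MeasurableSpace Ω] (P : Measure Ω)
    (W : Ω → ℝ) (hm : Measurable W) (hpos : ∀ᵐ ω ∂P, 0 < W ω)
    (h2 : Integrable (fun ω => (W ω) ^ 2) P) (t : ℝ) :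
    Integrable (fun ω => (W ω) ^ 2 * Real.exp (-(W ω) * max t 0)) P := by
  refine h2.mono' (by fun_prop) ?_
  filter_upwards [hpos] with ω h
  rw [Real.norm_of_nonneg (by positivity)]
  refine mul_le_of_le_one_right (by positivity) (Real.exp_le_one_iff.2 ?_)
  have := mul_nonneg h.le (le_max_right t 0)
  linarith

lemma anti_aux {Ω : Type*} [MeasurableSpace Ω] (P : Measure Ω)
    (W : Ω → ℝ) (hm : Measurable W) (hpos : ∀ᵐ ω ∂P, 0 < W ω)
    (h2 : Integrable (fun ω => (W ω) ^ 2) P) :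
    Antitone (fun t => ∫ ω, (W ω) ^ 2 * Real.exp (-(W ω) * max t 0) ∂P) := by
  intro s t hst
  refine integral_mono_ae (int_aux_s11 P W hm hpos h2 t) (int_aux_s11 P W hm hpos h2 s) ?_
  filter_upwards [hpos] with ω h
  refine mul_le_mul_of_nonneg_left (Real.exp_le_exp.2 ?_) (by positivity)
  have := mul_le_mul_of_nonneg_left (max_le_max_right 0 hst) h.le
  linarith

/-- Under Assumption 1, `sup_{t ≥ 0} |E[Wₙ² e^{-Wₙ t}] - E[W² e^{-W t}]| → 0`. -/
theorem stmt_11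
    {Ω : Type*} [MeasurableSpace Ω] (P : Measure Ω) [IsProbabilityMeasure P]
    (W : Ω → ℝ) (Wn : ℕ → Ω → ℝ)
    (hWmeas : Measurable W) (hWnmeas : ∀ n, Measurable (Wn n))
    (hWpos : ∀ᵐ ω ∂P, 0 < W ω) (hWnpos : ∀ n, ∀ᵐ ω ∂P, 0 < Wn n ω)
    (hdist : ∀ f : BoundedContinuousFunction ℝ ℝ,
      Tendsto (fun n => ∫ ω, f (Wn n ω) ∂P) atTop (𝓝 (∫ ω, f (W ω) ∂P)))
    (hW2 : Integrable (fun ω => (W ω) ^ 2) P)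
    (hWn2 : ∀ n, Integrable (fun ω => (Wn n ω) ^ 2) P)
    (hmom : Tendsto (fun n => ∫ ω, (Wn n ω) ^ 2 ∂P) atTop (𝓝 (∫ ω, (W ω) ^ 2 ∂P))) :
    TendstoUniformlyOn
      (fun n t => ∫ ω, (Wn n ω) ^ 2 * Real.exp (-(Wn n ω) * t) ∂P)
      (fun t => ∫ ω, (W ω) ^ 2 * Real.exp (-(W ω) * t) ∂P)
      atTop (Ici 0) := by
  have hb : ∀ t : ℝ, ∀ᵐ ω ∂P, ‖(W ω) ^ 2 * Real.exp (-(W ω) * max t 0)‖ ≤ (W ω) ^ 2 := by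
    intro t
    filter_upwards [hWpos] with ω h
    rw [Real.norm_of_nonneg (by positivity)]
    refine mul_le_of_le_one_right (by positivity) (Real.exp_le_one_iff.2 ?_)
    have := mul_nonneg h.le (le_max_right t 0)
    linarith
  have key := polya_aux_s11
    (fun n t => ∫ ω, (Wn n ω) ^ 2 * Real.exp (-(Wn n ω) * max t 0) ∂P)
    (fun t => ∫ ω, (W ω) ^ 2 * Real.exp (-(W ω) * max t 0) ∂P)
    (fun n => anti_aux P _ (hWnmeas n) (hWnpos n) (hWn2 n))
    (anti_aux P _ hWmeas hWpos hW2)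
    (continuous_of_dominated (bound := fun ω => (W ω) ^ 2) (fun t => by fun_prop) hb hW2
      (ae_of_all _ fun ω => by fun_prop))
    (fun n t => integral_nonneg fun ω => by positivity)
    (fun t => integral_nonneg fun ω => by positivity) ?_ ?_
  · have k2 := key.congr (Eventually.of_forall (fun n t (ht : 0 ≤ t) => by
      simp only [max_eq_left ht]) : ∀ᶠ n in atTop, EqOn _
        ((fun n t => ∫ ω, (Wn n ω) ^ 2 * Real.exp (-(Wn n ω) * t) ∂P) n) (Ici 0))
    exact k2.congr_right (fun t (ht : 0 ≤ t) => by simp only [max_eq_left ht])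
  · have := tendsto_integral_filter_of_dominated_convergence (μ := P) (l := (atTop : Filter ℝ))
      (F := fun t ω => (W ω) ^ 2 * Real.exp (-(W ω) * max t 0)) (f := fun _ => 0)
      (fun ω => (W ω) ^ 2) (Eventually.of_forall fun t => by fun_prop)
      (Eventually.of_forall hb) hW2 ?_
    · simpa using this
    · filter_upwards [hWpos] with ω h
      have h1 : Tendsto (fun t : ℝ => -(W ω) * max t 0) atTop atBot :=
        (tendsto_atTop_mono (fun t => le_max_left t 0) tendsto_id).const_mul_atTop_of_neg
          (by linarith)
      simpa using (Real.tendsto_exp_atBot.comp h1).const_mul ((W ω) ^ 2)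
  · intro t
    rcases le_or_gt t 0 with ht | ht
    · simpa [max_eq_right ht] using hmom
    · simp only [max_eq_left ht.le]
      let f : BoundedContinuousFunction ℝ ℝ := BoundedContinuousFunction.ofNormedAddCommGroup
        (fun x => (max x 0) ^ 2 * Real.exp (-(max x 0) * t)) (by fun_prop) (2 / t ^ 2) (by
          intro x
          have hy : 0 ≤ max x 0 := le_max_right _ _
          generalize max x 0 = y at hy
          rw [Real.norm_of_nonneg (by positivity), neg_mul, Real.exp_neg, ← div_eq_mul_inv,
            div_le_div_iff₀ (Real.exp_pos _) (by positivity)]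
          have := Real.quadratic_le_exp_of_nonneg (mul_nonneg hy ht.le)
          nlinarith [mul_nonneg hy ht.le])
      have e : ∀ V : Ω → ℝ, (∀ᵐ ω ∂P, 0 < V ω) →
          ∫ ω, f (V ω) ∂P = ∫ ω, (V ω) ^ 2 * Real.exp (-(V ω) * t) ∂P := by
        intro V hV
        refine integral_congr_ae ?_
        filter_upwards [hV] with ω h
        simp [f, max_eq_left h.le]
      have := hdist f
      rw [e W hWpos] at this
      exact this.congr fun n => e _ (hWnpos n)
end

section
/- For every s ≥ 0, t ≥ 0 and every k ∈ {0,1,2}: 𝔼[W_n^k e^{−W_n s}(1 − e^{−W_n t})] → 𝔼[W^k e^{−W s}(1 − e^{−W t})] as n → ∞. -/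
open MeasureTheory Filter Topology Set

/-- Fatou-type lower semicontinuity for nonnegative continuous functions. -/
lemma aux_lower {Ω : Type*} [MeasurableSpace Ω] (P : Measure Ω) [IsProbabilityMeasure P]
    (W : Ω → ℝ) (Wn : ℕ → Ω → ℝ)
    (hWmeas : Measurable W) (hWnmeas : ∀ n, Measurable (Wn n))
    (hdist : ∀ f : BoundedContinuousFunction ℝ ℝ,
      Tendsto (fun n => ∫ ω, f (Wn n ω) ∂P) atTop (𝓝 (∫ ω, f (W ω) ∂P)))
    (f : ℝ → ℝ) (hf : Continuous f) (hf0 : ∀ x, 0 ≤ f x)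
    (hfW : Integrable (fun ω => f (W ω)) P) (hfWn : ∀ n, Integrable (fun ω => f (Wn n ω)) P)
    (c : ℝ) (hc : c < ∫ ω, f (W ω) ∂P) : ∀ᶠ n in atTop, c < ∫ ω, f (Wn n ω) ∂P := by
  have h1 : Tendsto (fun M : ℕ => ∫ ω, min (f (W ω)) (M : ℝ) ∂P) atTop
      (𝓝 (∫ ω, f (W ω) ∂P)) := by
    apply tendsto_integral_of_dominated_convergence (fun ω => f (W ω))
    · intro M
      exact ((hf.min continuous_const).measurable.comp hWmeas).aestronglyMeasurable
    · exact hfW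
    · intro M
      refine Eventually.of_forall fun ω => ?_
      rw [Real.norm_eq_abs, abs_of_nonneg (le_min (hf0 _) (Nat.cast_nonneg M))]
      exact min_le_left _ _
    · refine Eventually.of_forall fun ω => ?_
      apply tendsto_const_nhds.congr'
      obtain ⟨N, hN⟩ := exists_nat_ge (f (W ω))
      filter_upwards [eventually_ge_atTop N] with M hM
      have : (N : ℝ) ≤ M := by exact_mod_cast hM
      exact (min_eq_left (hN.trans this)).symm
  obtain ⟨M, hM⟩ := (h1.eventually (lt_mem_nhds hc)).exists
  have hb : ∀ x, ‖min (f x) (M : ℝ)‖ ≤ M := by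
    intro x
    rw [Real.norm_eq_abs, abs_of_nonneg (le_min (hf0 _) (Nat.cast_nonneg M))]
    exact min_le_right _ _
  have h2 := hdist (BoundedContinuousFunction.ofNormedAddCommGroup
    (fun x => min (f x) (M : ℝ)) (hf.min continuous_const) M hb)
  simp only [BoundedContinuousFunction.coe_ofNormedAddCommGroup] at h2
  filter_upwards [h2.eventually (lt_mem_nhds hM)] with n hn
  refine hn.trans_le (integral_mono ?_ (hfWn n) fun ω => min_le_left _ _)
  exact (hfWn n).inf (integrable_const _)

/-- One-sided bound for continuous functions of quadratic growth. -/
lemma aux_one {Ω : Type*} [MeasurableSpace Ω] (P : Measure Ω) [IsProbabilityMeasure P]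
    (W : Ω → ℝ) (Wn : ℕ → Ω → ℝ)
    (hWmeas : Measurable W) (hWnmeas : ∀ n, Measurable (Wn n))
    (hdist : ∀ f : BoundedContinuousFunction ℝ ℝ,
      Tendsto (fun n => ∫ ω, f (Wn n ω) ∂P) atTop (𝓝 (∫ ω, f (W ω) ∂P)))
    (hW2 : Integrable (fun ω => (W ω) ^ 2) P)
    (hWn2 : ∀ n, Integrable (fun ω => (Wn n ω) ^ 2) P)
    (hmom : Tendsto (fun n => ∫ ω, (Wn n ω) ^ 2 ∂P) atTop (𝓝 (∫ ω, (W ω) ^ 2 ∂P)))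
    (g : ℝ → ℝ) (hg : Continuous g) (hgb : ∀ x, |g x| ≤ 1 + x ^ 2)
    (a : ℝ) (ha : a < ∫ ω, g (W ω) ∂P) : ∀ᶠ n in atTop, a < ∫ ω, g (Wn n ω) ∂P := by
  have key : ∀ X : Ω → ℝ, Measurable X → Integrable (fun ω => (X ω) ^ 2) P →
      Integrable (fun ω => 1 + X ω ^ 2 + g (X ω)) P ∧
      ∫ ω, (1 + X ω ^ 2 + g (X ω)) ∂P = 1 + ∫ ω, X ω ^ 2 ∂P + ∫ ω, g (X ω) ∂P := by
    intro X hX hX2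
    have i1 : Integrable (fun ω => 1 + X ω ^ 2) P := (integrable_const _).add hX2
    have i2 : Integrable (fun ω => g (X ω)) P :=
      i1.mono' (hg.measurable.comp hX).aestronglyMeasurable
        (Eventually.of_forall fun ω => hgb _)
    refine ⟨i1.add i2, ?_⟩
    rw [integral_add i1 i2, integral_add (integrable_const _) hX2]
    simp
  have hl := aux_lower P W Wn hWmeas hWnmeas hdist (fun x => 1 + x ^ 2 + g x) (by fun_prop)
    (fun x => by have := (abs_le.1 (hgb x)).1; linarith)
    (key W hWmeas hW2).1 (fun n => (key _ (hWnmeas n) (hWn2 n)).1)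
    (1 + ∫ ω, W ω ^ 2 ∂P + (a + ∫ ω, g (W ω) ∂P) / 2)
    (by rw [(key W hWmeas hW2).2]; linarith)
  have hu := hmom.eventually (gt_mem_nhds
    (show ∫ ω, W ω ^ 2 ∂P < ∫ ω, W ω ^ 2 ∂P + ((∫ ω, g (W ω) ∂P) - a) / 2 by linarith))
  filter_upwards [hl, hu] with n h1 h2
  rw [(key _ (hWnmeas n) (hWn2 n)).2] at h1
  linarith



/-- Under Assumption 1, for all `s, t ≥ 0` and `k ∈ {0,1,2}`,
`E[Wₙᵏ e^{-Wₙ s}(1 - e^{-Wₙ t})] → E[Wᵏ e^{-W s}(1 - e^{-W t})]`. -/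
theorem stmt_12
    {Ω : Type*} [MeasurableSpace Ω] (P : Measure Ω) [IsProbabilityMeasure P]
    (W : Ω → ℝ) (Wn : ℕ → Ω → ℝ)
    (hWmeas : Measurable W) (hWnmeas : ∀ n, Measurable (Wn n))
    (hWpos : ∀ᵐ ω ∂P, 0 < W ω) (hWnpos : ∀ n, ∀ᵐ ω ∂P, 0 < Wn n ω)
    (hdist : ∀ f : BoundedContinuousFunction ℝ ℝ,
      Tendsto (fun n => ∫ ω, f (Wn n ω) ∂P) atTop (𝓝 (∫ ω, f (W ω) ∂P)))
    (hW2 : Integrable (fun ω => (W ω) ^ 2) P)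
    (hWn2 : ∀ n, Integrable (fun ω => (Wn n ω) ^ 2) P)
    (hmom : Tendsto (fun n => ∫ ω, (Wn n ω) ^ 2 ∂P) atTop (𝓝 (∫ ω, (W ω) ^ 2 ∂P))) :
    ∀ s : ℝ, 0 ≤ s → ∀ t : ℝ, 0 ≤ t → ∀ k ∈ ({0, 1, 2} : Set ℕ),
      Tendsto
        (fun n => ∫ ω,
          (Wn n ω) ^ k * Real.exp (-(Wn n ω) * s) * (1 - Real.exp (-(Wn n ω) * t)) ∂P)
        atTop
        (𝓝 (∫ ω, (W ω) ^ k * Real.exp (-(W ω) * s) * (1 - Real.exp (-(W ω) * t)) ∂P)) := by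
  intro s hs t ht k hk
  have hk2 : k ≤ 2 := by
    rcases hk with h | h | h <;> simp_all
  set g : ℝ → ℝ := fun x => |x| ^ k * Real.exp (-|x| * s) * (1 - Real.exp (-|x| * t)) with hgdef
  have hg : Continuous g := by fun_prop
  have hgb : ∀ x, |g x| ≤ 1 + x ^ 2 := by
    intro x
    have e1 : Real.exp (-|x| * s) ≤ 1 := by
      rw [Real.exp_le_one_iff]; nlinarith [mul_nonneg (abs_nonneg x) hs]
    have e2 : Real.exp (-|x| * t) ≤ 1 := by
      rw [Real.exp_le_one_iff]; nlinarith [mul_nonneg (abs_nonneg x) ht]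
    have p1 := Real.exp_pos (-|x| * s)
    have p2 := Real.exp_pos (-|x| * t)
    have q : |x| ^ k ≤ 1 + x ^ 2 := by
      rw [← sq_abs x]
      have := abs_nonneg x
      interval_cases k
      · nlinarith
      · nlinarith [sq_nonneg (|x| - 1)]
      · linarith
    have q0 : 0 ≤ |x| ^ k := by positivity
    have r1 : |x| ^ k * Real.exp (-|x| * s) ≤ |x| ^ k := mul_le_of_le_one_right q0 e1
    have r0 : 0 ≤ |x| ^ k * Real.exp (-|x| * s) := by positivity
    rw [abs_of_nonneg (mul_nonneg r0 (by linarith))]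
    exact ((mul_le_of_le_one_right r0 (by linarith)).trans r1).trans q
  have hcongr : ∀ X : Ω → ℝ, (∀ᵐ ω ∂P, 0 < X ω) →
      ∫ ω, (X ω) ^ k * Real.exp (-(X ω) * s) * (1 - Real.exp (-(X ω) * t)) ∂P
        = ∫ ω, g (X ω) ∂P := by
    intro X hX
    apply integral_congr_ae
    filter_upwards [hX] with ω h
    simp only [hgdef, abs_of_pos h]
  rw [hcongr W hWpos]
  simp only [fun n => hcongr (Wn n) (hWnpos n)]
  rw [tendsto_order]
  constructor
  · intro a ha
    exact aux_one P W Wn hWmeas hWnmeas hdist hW2 hWn2 hmom g hg hgb a ha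
  · intro a ha
    have := aux_one P W Wn hWmeas hWnmeas hdist hW2 hWn2 hmom (fun x => - g x) hg.neg
      (fun x => by rw [abs_neg]; exact hgb x) (-a) (by rw [integral_neg]; linarith)
    filter_upwards [this] with n hn
    rw [integral_neg] at hn
    linarith
end
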